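/- arXiv:2102.00285 — 3 statements merged into one kernel-verified Lean document; each statement's English description precedes it below -/
import Mathlib

section
/- Let A and B be locally indicable groups and let G = A ∗_{⟨p⟩≅⟨q⟩} B be an amalgamated product identifying elements p ∈ A and q ∈ B of infinite order, neither of which is a proper power in its factor. Then G is locally indicable. -/
/-- A group is locally indicable if every non-trivial finitely generated subgroup
surjects onto `ℤ`. -/
def LocallyIndicable (G : Type) [Group G] : Prop :=
  ∀ H : Subgroup G, H ≠ ⊥ → H.FG →
    ∃ f : H →* Multiplicative ℤ, Function.Surjective f

/-- `G` together with `iA`, `iB` is the amalgamated product `A ∗_{⟨p⟩=⟨q⟩} B`. -/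
def IsAmalgam {A B G : Type} [Group A] [Group B] [Group G]
    (iA : A →* G) (iB : B →* G) (p : A) (q : B) : Prop :=
  Function.Injective iA ∧ Function.Injective iB ∧ iA p = iB q ∧
  ∀ (K : Type) [Group K] (fA : A →* K) (fB : B →* K), fA p = fB q →
    ∃! f : G →* K, f.comp iA = fA ∧ f.comp iB = fB

structure Amal {G : Type} [Group G] (A B : Subgroup G) (c : G) : Prop where
  cA : c ∈ A
  cB : c ∈ B
  up : ∀ (K : Type) [Group K] (fA : A →* K) (fB : B →* K), fA ⟨c, cA⟩ = fB ⟨c, cB⟩ →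
    ∃ f : G →* K, (∀ a : A, f a = fA a) ∧ (∀ b : B, f b = fB b)
  gen : A ⊔ B = ⊤

section Amalgam

variable {G Q : Type} [Group G] [Group Q] {A B : Subgroup G} {c : G}

theorem Amal.symm (h : Amal A B c) : Amal B A c where
  cA := h.cB
  cB := h.cA
  up := fun K _ fA fB e => by
    obtain ⟨f, h1, h2⟩ := h.up K fB fA e.symm
    exact ⟨f, h2, h1⟩
  gen := by rw [sup_comm]; exact h.gen

theorem Amal.ind (h : Amal A B c) {P : G → Prop} (one : P 1)
    (ha : ∀ a ∈ A, ∀ g, P g → P (a * g)) (hb : ∀ b ∈ B, ∀ g, P g → P (b * g)) (g : G) : P g := by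
  have hg : g ∈ Subgroup.closure ((A : Set G) ∪ B) := by
    rw [Subgroup.closure_union, Subgroup.closure_eq, Subgroup.closure_eq, h.gen]; trivial
  induction hg using Subgroup.closure_induction_left with
  | one => exact one
  | mul_left x hx y _ ih =>
    rcases hx with hx | hx
    · exact ha x hx y ih
    · exact hb x hx y ih
  | inv_mul_cancel x hx y _ ih =>
    rcases hx with hx | hx
    · exact ha _ (A.inv_mem hx) y ih
    · exact hb _ (B.inv_mem hx) y ih

def permOf (A : Subgroup G) (α : G → G → Q)
    (hα : ∀ a ∈ A, ∀ a' ∈ A, ∀ g, α (a * a') g = α a (a' * g) * α a' g) :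
    A →* Equiv.Perm (G × Q) :=
  MonoidHom.toHomPerm
    { toFun := fun a => (fun z : G × Q => (a * z.1, α a z.1 * z.2) : Function.End (G × Q))
      map_one' := by
        funext z
        have := hα 1 A.one_mem 1 A.one_mem z.1
        simp at this
        show (_, _) = z
        ext <;> simp [this]
      map_mul' := fun a b => by
        funext z
        show (_, _) = (_, _)
        ext
        · simp [mul_assoc]
        · simp [hα a a.2 b b.2 z.1, mul_assoc] }

theorem Amal.lift (h : Amal A B c) (H : Subgroup G) (α β : G → G → Q)
    (hα : ∀ a ∈ A, ∀ a' ∈ A, ∀ g, α (a * a') g = α a (a' * g) * α a' g)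
    (hβ : ∀ a ∈ B, ∀ a' ∈ B, ∀ g, β (a * a') g = β a (a' * g) * β a' g)
    (hc : ∀ g, α c g = β c g)
    (hαH : ∀ a ∈ A, ∀ g, ∀ k ∈ H, α a (g * k) = α a g)
    (hβH : ∀ a ∈ B, ∀ g, ∀ k ∈ H, β a (g * k) = β a g) :
    ∃ F : G → Q, F 1 = 1 ∧ (∀ a ∈ A, ∀ g, F (a * g) = α a g * F g) ∧
      (∀ a ∈ B, ∀ g, F (a * g) = β a g * F g) ∧ ∀ g, ∀ k ∈ H, F (g * k) = F g * F k := by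
  obtain ⟨f, fa, fb⟩ := h.up _ (permOf A α hα) (permOf B β hβ) (by
    ext z : 1
    show (_, _) = (_, _)
    simp [hc])
  have fa' : ∀ a ∈ A, ∀ z, f a z = (a * z.1, α a z.1 * z.2) := fun a ha z => by
    rw [fa ⟨a, ha⟩]; rfl
  have fb' : ∀ a ∈ B, ∀ z, f a z = (a * z.1, β a z.1 * z.2) := fun a ha z => by
    rw [fb ⟨a, ha⟩]; rfl
  have key : ∀ g, (f g (1, 1)).1 = g := fun g => by
    refine h.ind (P := fun g => (f g (1, 1)).1 = g) (by simp) ?_ ?_ g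
    · intro a ha g ih
      rw [map_mul, Equiv.Perm.mul_apply, fa' a ha, ih]
    · intro a ha g ih
      rw [map_mul, Equiv.Perm.mul_apply, fb' a ha, ih]
  have Fa : ∀ a ∈ A, ∀ g, (f (a * g) (1, 1)).2 = α a g * (f g (1, 1)).2 := fun a ha g => by
    rw [map_mul, Equiv.Perm.mul_apply, fa' a ha, key]
  have Fb : ∀ a ∈ B, ∀ g, (f (a * g) (1, 1)).2 = β a g * (f g (1, 1)).2 := fun a ha g => by
    rw [map_mul, Equiv.Perm.mul_apply, fb' a ha, key]
  refine ⟨fun g => (f g (1, 1)).2, by simp, Fa, Fb, fun g k hk => ?_⟩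
  refine h.ind (P := fun g => (f (g * k) (1, 1)).2 = (f g (1, 1)).2 * (f k (1, 1)).2)
    (by simp) ?_ ?_ g
  · intro a ha g ih
    rw [mul_assoc, Fa a ha, Fa a ha, ih, hαH a ha g k hk, mul_assoc]
  · intro a ha g ih
    rw [mul_assoc, Fb a ha, Fb a ha, ih, hβH a ha g k hk, mul_assoc]

/-- Elements reachable from `1` by `A`-moves at points of `P` and `B`-moves at points of `R`. -/
inductive Reach (A B : Subgroup G) (P R : Set G) : G → Prop
  | one : Reach A B P R 1
  | a (a g : G) : a ∈ A → Reach A B P R g → g ∈ P → Reach A B P R (a * g)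
  | b (b g : G) : b ∈ B → Reach A B P R g → g ∈ R → Reach A B P R (b * g)

/-- `P` is left `A`-invariant and right `H`-invariant. -/
structure BiInv (A H : Subgroup G) (P : Set G) : Prop where
  l : ∀ a ∈ A, ∀ g ∈ P, a * g ∈ P
  r : ∀ h ∈ H, ∀ g ∈ P, g * h ∈ P

theorem BiInv.compl {A H : Subgroup G} {P : Set G} (h : BiInv A H P) : BiInv A H Pᶜ where
  l := fun a ha g hg hn => hg (by simpa using h.l _ (A.inv_mem ha) _ hn)
  r := fun a ha g hg hn => hg (by simpa using h.r _ (H.inv_mem ha) _ hn)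

theorem BiInv.inter {A H : Subgroup G} {P P' : Set G} (h : BiInv A H P) (h' : BiInv A H P') :
    BiInv A H (P ∩ P') where
  l := fun a ha g hg => ⟨h.l a ha g hg.1, h'.l a ha g hg.2⟩
  r := fun a ha g hg => ⟨h.r a ha g hg.1, h'.r a ha g hg.2⟩

theorem Reach.symm {P R : Set G} {g : G} (h : Reach A B P R g) : Reach B A R P g := by
  induction h with
  | one => exact .one
  | a a g ha _ hg ih => exact .b a g ha ih hg
  | b a g ha _ hg ih => exact .a a g ha ih hg

theorem Reach.mono {P R P' R' : Set G} (hP : P ⊆ P') (hR : R ⊆ R') {g : G}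
    (h : Reach A B P R g) : Reach A B P' R' g := by
  induction h with
  | one => exact .one
  | a a g ha _ hg ih => exact .a a g ha ih (hP hg)
  | b a g ha _ hg ih => exact .b a g ha ih (hR hg)

theorem Reach.inv_mul {H : Subgroup G} {P R : Set G} (hP : BiInv A H P) (hR : BiInv B H R)
    {g : G} (h : Reach A B P R g) :
    ∀ k, Reach A B P R k → g⁻¹ * k ∈ H → Reach A B P R (g⁻¹ * k) := by
  induction h with
  | one => intro k hk _; simpa using hk
  | a a g ha _ hg ih =>
    intro k hk hh
    have e : (a * g)⁻¹ * k = g⁻¹ * (a⁻¹ * k) := by group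
    have hkP : k ∈ P := by
      have := hP.r _ hh _ (hP.l a ha g hg)
      rwa [mul_inv_cancel_left] at this
    rw [e] at hh ⊢
    exact ih _ (.a _ _ (A.inv_mem ha) hk hkP) hh
  | b a g ha _ hg ih =>
    intro k hk hh
    have e : (a * g)⁻¹ * k = g⁻¹ * (a⁻¹ * k) := by group
    have hkP : k ∈ R := by
      have := hR.r _ hh _ (hR.l a ha g hg)
      rwa [mul_inv_cancel_left] at this
    rw [e] at hh ⊢
    exact ih _ (.b _ _ (B.inv_mem ha) hk hkP) hh

theorem Reach.mul {H : Subgroup G} {P R : Set G} (hP : BiInv A H P) (hR : BiInv B H R)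
    {g : G} (h : Reach A B P R g) {k : G} (hk : Reach A B P R k) (hkH : k ∈ H) :
    Reach A B P R (g * k) := by
  induction h with
  | one => simpa using hk
  | a a g ha _ hg ih => rw [mul_assoc]; exact .a _ _ ha ih (hP.r _ hkH _ hg)
  | b a g ha _ hg ih => rw [mul_assoc]; exact .b _ _ ha ih (hR.r _ hkH _ hg)

/-- Loops. -/
def loops (H : Subgroup G) {P R : Set G} (hP : BiInv A H P) (hR : BiInv B H R) : Subgroup G where
  carrier := {g | Reach A B P R g ∧ g ∈ H}
  one_mem' := ⟨.one, H.one_mem⟩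
  mul_mem' := fun hx hy => ⟨hx.1.mul hP hR hy.1 hy.2, H.mul_mem hx.2 hy.2⟩
  inv_mem' := fun {x} hx => ⟨by
    have := hx.1.inv_mul hP hR 1 .one (by simpa using H.inv_mem hx.2)
    simpa using this, H.inv_mem hx.2⟩

theorem mem_loops {H : Subgroup G} {P R : Set G} {hP : BiInv A H P} {hR : BiInv B H R} {g : G} :
    g ∈ loops H hP hR ↔ Reach A B P R g ∧ g ∈ H := Iff.rfl

def MulOn (H : Subgroup G) (Φ : G → Q) : Prop := ∀ x ∈ H, ∀ y ∈ H, Φ (x * y) = Φ x * Φ y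

theorem MulOn.one {H : Subgroup G} {Φ : G → Q} (h : MulOn H Φ) : Φ 1 = 1 := by
  have := h 1 H.one_mem 1 H.one_mem
  simpa using this

structure Bridge (A B H : Subgroup G) (c : G) (U U' : Set G) : Prop where
  hU : BiInv A H U
  hU' : BiInv B H U'
  sub : U' ⊆ U
  diff : ∀ g, (g ∈ U ∧ g ∉ U') ↔ ∃ k ∈ Subgroup.zpowers c, k⁻¹ * g ∈ H

theorem Bridge.symm {H : Subgroup G} {U U' : Set G} (br : Bridge A B H c U U') :
    Bridge B A H c U'ᶜ Uᶜ where
  hU := br.hU'.compl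
  hU' := br.hU.compl
  sub := Set.compl_subset_compl.2 br.sub
  diff := fun g => by rw [← br.diff g]; simp [and_comm]

open Classical in
noncomputable def theta (H : Subgroup G) (S : Set G) (σ : G ⧸ H → G) (Ψ : G → Q) (k g : G) : Q :=
  if ∃ w ∈ S, (w : G ⧸ H) = g then Ψ ((σ ((k * g : G) : G ⧸ H))⁻¹ * (k * σ (g : G ⧸ H))) else 1

theorem coset_mul {H : Subgroup G} (k : G) {w g : G} (h : (w : G ⧸ H) = g) :
    ((k * w : G) : G ⧸ H) = (k * g : G) := by
  rw [QuotientGroup.eq] at h ⊢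
  have : (k * w)⁻¹ * (k * g) = w⁻¹ * g := by group
  rwa [this]

theorem theta_right {H : Subgroup G} {S : Set G} {σ : G ⧸ H → G} {Ψ : G → Q} (k g h : G)
    (hh : h ∈ H) : theta H S σ Ψ k (g * h) = theta H S σ Ψ k g := by
  have e1 : ((g * h : G) : G ⧸ H) = g := by simpa [QuotientGroup.eq] using hh
  have e2 : ((k * (g * h) : G) : G ⧸ H) = (k * g : G) := by
    exact coset_mul k e1
  unfold theta
  rw [e1, e2]

theorem mem_of_coset {H : Subgroup G} {P : Set G} (hP : BiInv A H P) {w g : G}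
    (h : (w : G ⧸ H) = g) (hw : w ∈ P) : g ∈ P := by
  rw [QuotientGroup.eq] at h
  have := hP.r _ h _ hw
  simpa using this

theorem theta_mul {H K : Subgroup G} {P S : Set G} {σ : G ⧸ H → G} {Ψ : G → Q}
    (hP : BiInv A H P) (hS : ∀ a ∈ A, ∀ g ∈ S, g ∈ P → a * g ∈ S)
    (hK : ∀ g ∈ S, ∀ k ∈ S, g⁻¹ * k ∈ H → g⁻¹ * k ∈ K) (hΨ : MulOn K Ψ)
    (hσ : ∀ w ∈ S, σ (w : G ⧸ H) ∈ S ∧ ((σ (w : G ⧸ H) : G) : G ⧸ H) = w)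
    {a a' g : G} (ha : a ∈ A) (ha' : a' ∈ A) (hg : g ∈ P) :
    theta H S σ Ψ (a * a') g = theta H S σ Ψ a (a' * g) * theta H S σ Ψ a' g := by
  have mv : ∀ x ∈ A, ∀ y ∈ P, (∃ w ∈ S, (w : G ⧸ H) = y) →
      ∃ w ∈ S, (w : G ⧸ H) = (x * y : G) := by
    rintro x hx y hy ⟨w, hw, e⟩
    exact ⟨x * w, hS x hx w hw (mem_of_coset hP e.symm hy), coset_mul x e⟩
  have sg : ∀ y, (∃ w ∈ S, (w : G ⧸ H) = y) → σ (y : G ⧸ H) ∈ S ∧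
      ((σ (y : G ⧸ H) : G) : G ⧸ H) = y := by
    rintro y ⟨w, hw, e⟩
    rw [← e]; exact hσ w hw
  have mem : ∀ x ∈ A, ∀ y ∈ P, (∃ w ∈ S, (w : G ⧸ H) = y) →
      (σ ((x * y : G) : G ⧸ H))⁻¹ * (x * σ (y : G ⧸ H)) ∈ K := by
    intro x hx y hy hw
    obtain ⟨h1, h2⟩ := sg y hw
    obtain ⟨h3, h4⟩ := sg _ (mv x hx y hy hw)
    apply hK _ h3 _ (hS x hx _ h1 (mem_of_coset hP h2.symm hy))
    rw [← QuotientGroup.eq, h4, coset_mul x h2]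
  by_cases hw : ∃ w ∈ S, (w : G ⧸ H) = g
  · have hw' := mv a' ha' g hg hw
    unfold theta
    rw [if_pos hw, if_pos hw', if_pos hw, ← hΨ _ (mem a ha _ (hP.l a' ha' g hg) hw') _
      (mem a' ha' g hg hw)]
    congr 1
    simp [mul_assoc]
  · have hw' : ¬ ∃ w ∈ S, (w : G ⧸ H) = (a' * g : G) := by
      intro h
      apply hw
      have := mv a'⁻¹ (A.inv_mem ha') _ (hP.l a' ha' g hg) h
      simpa using this
    unfold theta
    rw [if_neg hw, if_neg hw', if_neg hw, one_mul]

theorem Bridge.mem1 {H : Subgroup G} {U U' : Set G} (br : Bridge A B H c U U') :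
    (1 : G) ∈ U ∧ (1 : G) ∉ U' :=
  (br.diff 1).2 ⟨1, Subgroup.one_mem _, by simp⟩

theorem exists_sigma {H : Subgroup G} (C : Subgroup G) : ∃ σ : G ⧸ H → G, σ ((1 : G) : G ⧸ H) = 1 ∧
    ∀ k ∈ C, σ (k : G ⧸ H) ∈ C ∧ ((σ (k : G ⧸ H) : G) : G ⧸ H) = k := by
  classical
  refine ⟨fun x => if x = ((1 : G) : G ⧸ H) then 1 else
    if h : ∃ k ∈ C, (k : G ⧸ H) = x then h.choose else 1, by simp, fun k hk => ?_⟩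
  have hx : ∃ k' ∈ C, (k' : G ⧸ H) = k := ⟨k, hk, rfl⟩
  by_cases h1 : (k : G ⧸ H) = ((1 : G) : G ⧸ H)
  · simp only [h1, if_true]; exact ⟨C.one_mem, trivial⟩
  · simp only [h1, if_false, dif_pos hx]
    exact hx.choose_spec

theorem exists_sigma' {H : Subgroup G} (C : Subgroup G) (S : Set G) (hC : ∀ k ∈ C, k ∈ S)
    (σ : G ⧸ H → G) (hσ : ∀ k ∈ C, σ (k : G ⧸ H) ∈ C ∧ ((σ (k : G ⧸ H) : G) : G ⧸ H) = k) :
    ∃ τ : G ⧸ H → G, (∀ k ∈ C, τ (k : G ⧸ H) = σ k) ∧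
      ∀ w ∈ S, τ (w : G ⧸ H) ∈ S ∧ ((τ (w : G ⧸ H) : G) : G ⧸ H) = w := by
  classical
  refine ⟨fun x => if ∃ k ∈ C, (k : G ⧸ H) = x then σ x else
    if h : ∃ k ∈ S, (k : G ⧸ H) = x then h.choose else 1, fun k hk => ?_, fun w hw => ?_⟩
  · have : ∃ k' ∈ C, (k' : G ⧸ H) = k := ⟨k, hk, rfl⟩
    simp only [this, if_true]
  · by_cases h1 : ∃ k ∈ C, (k : G ⧸ H) = w
    · simp only [h1, if_true]
      obtain ⟨k, hk, e⟩ := h1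
      rw [← e]
      exact ⟨hC _ (hσ k hk).1, (hσ k hk).2⟩
    · have hx : ∃ k ∈ S, (k : G ⧸ H) = w := ⟨w, hw, rfl⟩
      simp only [h1, if_false, dif_pos hx]
      exact hx.choose_spec

/-- reading off the value of the glued map on reachable points -/
theorem read_off {H K : Subgroup G} {P R : Set G} {σ : G ⧸ H → G} {Ψ F : G → Q}
    (hP : BiInv A H P) (hR : BiInv B H R)
    (hKe : K = loops H hP hR) (hΨ : MulOn K Ψ)
    (hσ1 : σ ((1 : G) : G ⧸ H) = 1)
    (hσ : ∀ w ∈ {g | Reach A B P R g}, σ (w : G ⧸ H) ∈ {g | Reach A B P R g} ∧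
      ((σ (w : G ⧸ H) : G) : G ⧸ H) = w)
    (F1 : F 1 = 1)
    (FA : ∀ a ∈ A, ∀ g ∈ P, F (a * g) = theta H {g | Reach A B P R g} σ Ψ a g * F g)
    (FB : ∀ a ∈ B, ∀ g ∈ R, F (a * g) = theta H {g | Reach A B P R g} σ Ψ a g * F g) :
    ∀ g ∈ K, F g = Ψ g := by
  have mem : ∀ g, Reach A B P R g → (σ (g : G ⧸ H))⁻¹ * g ∈ K := by
    intro g hg
    obtain ⟨h1, h2⟩ := hσ g hg
    have : (σ (g : G ⧸ H))⁻¹ * g ∈ H := by rw [← QuotientGroup.eq, h2]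
    rw [hKe]
    exact ⟨h1.inv_mul hP hR g hg this, this⟩
  have mem2 : ∀ x g, Reach A B P R g → Reach A B P R (x * g) →
      Reach A B P R (x * σ (g : G ⧸ H)) →
      (σ ((x * g : G) : G ⧸ H))⁻¹ * (x * σ (g : G ⧸ H)) ∈ K := by
    intro x g hg hxg hx
    obtain ⟨h1, h2⟩ := hσ g hg
    obtain ⟨h3, h4⟩ := hσ _ hxg
    have : (σ ((x * g : G) : G ⧸ H))⁻¹ * (x * σ (g : G ⧸ H)) ∈ H := by
      rw [← QuotientGroup.eq, h4, coset_mul x h2]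
    rw [hKe]
    exact ⟨Reach.inv_mul hP hR h3 _ hx this, this⟩
  have main : ∀ g, Reach A B P R g → F g = Ψ ((σ (g : G ⧸ H))⁻¹ * g) := by
    intro g hg
    induction hg with
    | one => rw [hσ1, F1]; simp [hΨ.one]
    | a a g ha hr hg ih =>
      obtain ⟨h1, h2⟩ := hσ g hr
      rw [FA a ha g hg, ih, theta, if_pos ⟨g, hr, rfl⟩, ← hΨ _ (mem2 a g hr (.a a g ha hr hg)
        (.a a _ ha h1 (mem_of_coset hP h2.symm hg))) _ (mem g hr)]
      congr 1; simp [mul_assoc]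
    | b a g ha hr hg ih =>
      obtain ⟨h1, h2⟩ := hσ g hr
      rw [FB a ha g hg, ih, theta, if_pos ⟨g, hr, rfl⟩, ← hΨ _ (mem2 a g hr (.b a g ha hr hg)
        (.b a _ ha h1 (mem_of_coset hR h2.symm hg))) _ (mem g hr)]
      congr 1; simp [mul_assoc]
  intro g hg
  rw [hKe] at hg
  have e : (g : G ⧸ H) = ((1 : G) : G ⧸ H) := by
    rw [QuotientGroup.eq]; simpa using hg.2
  rw [main g hg.1, e, hσ1]; simp

theorem Amal.glue (h : Amal A B c) {H : Subgroup G} {U U' : Set G} (br : Bridge A B H c U U')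
    {Ψ₁ Ψ₂ : G → Q} (h1 : MulOn (loops H br.hU br.hU') Ψ₁)
    (h2 : MulOn (loops H br.hU.compl br.hU'.compl) Ψ₂)
    (hE : ∀ k ∈ Subgroup.zpowers c, k ∈ H → Ψ₁ k = Ψ₂ k) :
    ∃ F : G → Q, MulOn H F ∧ (∀ g ∈ loops H br.hU br.hU', F g = Ψ₁ g) ∧
      (∀ g ∈ loops H br.hU.compl br.hU'.compl, F g = Ψ₂ g) := by
  classical
  set C := Subgroup.zpowers c with hCdef
  have CA : C ≤ A := by simpa [C, Subgroup.zpowers_le] using h.cA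
  have CB : C ≤ B := by simpa [C, Subgroup.zpowers_le] using h.cB
  obtain ⟨σ, s1, sC⟩ := exists_sigma (H := H) C
  set S₁ : Set G := {g | Reach A B U U' g} with hS₁
  set S₂ : Set G := {g | Reach A B Uᶜ U'ᶜ g} with hS₂
  have C1 : ∀ k ∈ C, k ∈ S₁ := fun k hk => by
    have := Reach.a (B := B) (R := U') k 1 (CA hk) .one br.mem1.1
    rwa [mul_one] at this
  have C2 : ∀ k ∈ C, k ∈ S₂ := fun k hk => by
    have := Reach.b (A := A) (P := Uᶜ) (R := U'ᶜ) k 1 (CB hk) .one br.mem1.2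
    rwa [mul_one] at this
  obtain ⟨σ₁, e1, t1⟩ := exists_sigma' C S₁ C1 σ sC
  obtain ⟨σ₂, e2, t2⟩ := exists_sigma' C S₂ C2 σ sC
  have hcC : c ∈ C := Subgroup.mem_zpowers c
  have K1 : ∀ g ∈ S₁, ∀ k ∈ S₁, g⁻¹ * k ∈ H → g⁻¹ * k ∈ loops H br.hU br.hU' :=
    fun g hg k hk hh => ⟨Reach.inv_mul br.hU br.hU' hg k hk hh, hh⟩
  have K2 : ∀ g ∈ S₂, ∀ k ∈ S₂, g⁻¹ * k ∈ H → g⁻¹ * k ∈ loops H br.hU.compl br.hU'.compl :=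
    fun g hg k hk hh => ⟨Reach.inv_mul br.hU.compl br.hU'.compl hg k hk hh, hh⟩
  let α : G → G → Q := fun a g => if g ∈ U then theta H S₁ σ₁ Ψ₁ a g else theta H S₂ σ₂ Ψ₂ a g
  let β : G → G → Q := fun a g => if g ∈ U' then theta H S₁ σ₁ Ψ₁ a g else theta H S₂ σ₂ Ψ₂ a g
  have rinv : ∀ {D : Subgroup G} {V : Set G}, BiInv D H V → ∀ g, ∀ k ∈ H, (g * k ∈ V ↔ g ∈ V) :=
    fun hV g k hk => ⟨fun h' => by simpa using hV.r _ (H.inv_mem hk) _ h', hV.r k hk g⟩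
  have linv : ∀ {D : Subgroup G} {V : Set G}, BiInv D H V → ∀ g, ∀ k ∈ D, (k * g ∈ V ↔ g ∈ V) :=
    fun {D} {V} hV g k hk => ⟨fun h' => by simpa using hV.l _ (D.inv_mem hk) _ h', hV.l k hk g⟩
  have L := h.lift H α β ?_ ?_ ?_ ?_ ?_
  · obtain ⟨F, F1, FA, FB, FH⟩ := L
    refine ⟨F, fun x _ y hy => FH x y hy, ?_, ?_⟩
    · refine read_off br.hU br.hU' rfl h1 ?_ t1 F1 ?_ ?_
      · rw [e1 1 C.one_mem, s1]
      · intro a ha g hg; rw [FA a ha g]; simp only [α, if_pos hg]; rfl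
      · intro a ha g hg; rw [FB a ha g]; simp only [β, if_pos hg]; rfl
    · refine read_off br.hU.compl br.hU'.compl rfl h2 ?_ t2 F1 ?_ ?_
      · rw [e2 1 C.one_mem, s1]
      · intro a ha g hg; rw [FA a ha g]; simp only [α, if_neg hg]; rfl
      · intro a ha g hg; rw [FB a ha g]; simp only [β, if_neg hg]; rfl
  · intro a ha a' ha' g
    by_cases hg : g ∈ U
    · simp only [α, linv br.hU g a' ha', if_pos hg]
      exact theta_mul br.hU (fun a ha g hg hgU => .a a g ha hg hgU) K1 h1 t1 ha ha' hg
    · simp only [α, linv br.hU g a' ha', if_neg hg]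
      exact theta_mul br.hU.compl (fun a ha g hg hgU => .a a g ha hg hgU) K2 h2 t2 ha ha' hg
  · intro a ha a' ha' g
    by_cases hg : g ∈ U'
    · simp only [β, linv br.hU' g a' ha', if_pos hg]
      exact theta_mul br.hU' (fun a ha g hg hgU => .b a g ha hg hgU) K1 h1 t1 ha ha' hg
    · simp only [β, linv br.hU' g a' ha', if_neg hg]
      exact theta_mul br.hU'.compl (fun a ha g hg hgU => .b a g ha hg hgU) K2 h2 t2 ha ha' hg
  · intro g
    by_cases hg : g ∈ U
    · by_cases hg' : g ∈ U'
      · simp only [α, β, if_pos hg, if_pos hg']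
      · simp only [α, β, if_pos hg, if_neg hg']
        obtain ⟨k, hk, hkg⟩ := (br.diff g).1 ⟨hg, hg'⟩
        rw [← QuotientGroup.eq] at hkg
        unfold theta
        rw [if_pos ⟨k, C1 k hk, hkg⟩, if_pos ⟨k, C2 k hk, hkg⟩, ← hkg, ← coset_mul c hkg]
        have hck := C.mul_mem hcC hk
        rw [e1 k hk, e2 k hk, e1 _ hck, e2 _ hck]
        apply hE
        · exact C.mul_mem (C.inv_mem (sC _ hck).1) (C.mul_mem hcC (sC _ hk).1)
        · rw [← QuotientGroup.eq, (sC _ hck).2, coset_mul c (sC _ hk).2]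
    · have hg' : g ∉ U' := fun h' => hg (br.sub h')
      simp only [α, β, if_neg hg, if_neg hg']
  · intro a _ g k hk
    simp only [α, rinv br.hU g k hk, theta_right a g k hk]
  · intro a _ g k hk
    simp only [β, rinv br.hU' g k hk, theta_right a g k hk]

def MulOn.hom {H : Subgroup G} {Φ : G → Q} (h : MulOn H Φ) : H →* Q where
  toFun := fun x => Φ x
  map_one' := h.one
  map_mul' := fun x y => h x x.2 y y.2

theorem MulOn.zpow {H : Subgroup G} {Φ : G → Q} (h : MulOn H Φ) {x : G} (hx : x ∈ H) (n : ℤ) :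
    Φ (x ^ n) = Φ x ^ n := map_zpow h.hom ⟨x, hx⟩ n

theorem MulOn.mono {H K : Subgroup G} {Φ : G → Q} (h : MulOn H Φ) (hK : K ≤ H) : MulOn K Φ :=
  fun x hx y hy => h x (hK hx) y (hK hy)

def Ind (H : Subgroup G) : Prop :=
  ∃ Φ : G → Multiplicative ℤ, MulOn H Φ ∧ ∃ h ∈ H, Φ h ≠ 1

theorem Amal.bridge (h : Amal A B c) {H : Subgroup G} (hi : ¬ Ind H) :
    ∃ U U', Bridge A B H c U U' := by
  classical
  set C := Subgroup.zpowers c with hCdef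
  have CA : C ≤ A := by simpa [C, Subgroup.zpowers_le] using h.cA
  let D : Set G := {g | ∃ k ∈ C, k⁻¹ * g ∈ H}
  have DH : ∀ g, ∀ k ∈ H, (g * k ∈ D ↔ g ∈ D) := by
    intro g k hk
    simp only [D, Set.mem_ofPred_eq, ← mul_assoc, Subgroup.mul_mem_cancel_right H hk]
  let e : G → Multiplicative ℤ := fun g => if g ∈ D then Multiplicative.ofAdd 1 else 1
  have eH : ∀ g, ∀ k ∈ H, e (g * k) = e g := fun g k hk => by simp only [e, DH g k hk]
  have eC : ∀ g, e (c * g) = e g := fun g => by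
    have : c * g ∈ D ↔ g ∈ D := by
      constructor
      · rintro ⟨k, hk, hh⟩
        refine ⟨c⁻¹ * k, C.mul_mem (C.inv_mem (Subgroup.mem_zpowers c)) hk, ?_⟩
        have e : (c⁻¹ * k)⁻¹ * g = k⁻¹ * (c * g) := by group
        rwa [e]
      · rintro ⟨k, hk, hh⟩
        refine ⟨c * k, C.mul_mem (Subgroup.mem_zpowers c) hk, ?_⟩
        have e : (c * k)⁻¹ * (c * g) = k⁻¹ * g := by group
        rwa [e]
    simp only [e, this]
  obtain ⟨F, F1, FA, FB, FH⟩ := h.lift H (fun _ _ => (1 : Multiplicative ℤ))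
    (fun b g => e (b * g) * (e g)⁻¹) (by simp) (by intros; simp [mul_assoc])
    (by intro g; simp [eC]) (by simp)
    (by intro a _ g k hk; simp only [← mul_assoc, eH _ k hk])
  have FHt : ∀ k ∈ H, F k = 1 := by
    intro k hk
    by_contra hne
    exact hi ⟨F, fun x _ y hy => FH x y hy, k, hk, hne⟩
  have FA' : ∀ a ∈ A, ∀ g, F (a * g) = F g := fun a ha g => by rw [FA a ha g, one_mul]
  have FB' : ∀ b ∈ B, ∀ g, F (b * g) * (e (b * g))⁻¹ = F g * (e g)⁻¹ := fun b hb g => by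
    rw [FB b hb g]
    rw [mul_comm (e (b * g) * (e g)⁻¹) (F g)]
    rw [mul_comm (e (b * g)), ← mul_assoc, mul_assoc _ (e (b * g)), mul_inv_cancel, mul_one]
  have FHt' : ∀ g, ∀ k ∈ H, F (g * k) = F g := fun g k hk => by rw [FH g k hk, FHt k hk, mul_one]
  have FD : ∀ g ∈ D, F g = 1 := by
    rintro g ⟨k, hk, hh⟩
    have : F (k * (k⁻¹ * g)) = 1 := by rw [FA' k (CA hk), FHt _ hh]
    simpa using this
  have eD : ∀ g ∈ D, e g ≠ 1 := fun g hg => by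
    simp only [e, if_pos hg]; decide
  have eD' : ∀ g, g ∉ D → e g = 1 := fun g hg => by simp only [e, if_neg hg]
  refine ⟨{g | F g = 1}, {g | F g * (e g)⁻¹ = 1}, ⟨?_, ?_⟩, ⟨?_, ?_⟩, ?_, ?_⟩
  · intro a ha g hg; simpa [FA' a ha g] using hg
  · intro a ha g hg; simpa [FHt' g a ha] using hg
  · intro a ha g hg; simpa only [Set.mem_ofPred_eq, FB' a ha g] using hg
  · intro a ha g hg; simpa only [Set.mem_ofPred_eq, FHt' g a ha, eH g a ha] using hg
  · intro g hg
    by_cases hD : g ∈ D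
    · exact FD g hD
    · simpa [eD' g hD] using hg
  · intro g
    constructor
    · rintro ⟨h1, h2⟩
      by_contra hD
      apply h2
      have h1 : F g = 1 := h1
      have := eD' g hD
      simp [h1, this]
    · intro hD
      refine ⟨FD g hD, fun h2 => eD g hD ?_⟩
      have h2 : F g * (e g)⁻¹ = 1 := h2
      simpa [FD g hD] using h2

theorem exists_equalizer (F : Subgroup G) : ∃ (K : Type) (_ : Group K) (u u' : G →* K),
    ∀ g, u g = u' g ↔ g ∈ F := by
  classical
  let u : G →* Equiv.Perm (Option (G ⧸ F)) :=
    { toFun := fun g => Equiv.optionCongr (MulAction.toPerm g)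
      map_one' := by ext x : 1; cases x <;> simp
      map_mul' := fun a b => by ext x : 1; cases x <;> simp [mul_smul] }
  let τ : Equiv.Perm (Option (G ⧸ F)) := Equiv.swap none (some ((1 : G) : G ⧸ F))
  have un : ∀ g, u g none = none := fun g => rfl
  have us : ∀ g (x : G), u g (some (x : G ⧸ F)) = some ((g * x : G) : G ⧸ F) := fun g x => rfl
  have mem : ∀ g : G, ((g * 1 : G) : G ⧸ F) = ((1 : G) : G ⧸ F) ↔ g ∈ F := fun g => by
    rw [QuotientGroup.eq]; simp
  refine ⟨_, inferInstance, u, (MulAut.conj τ).toMonoidHom.comp u, fun g => ?_⟩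
  have e : ((MulAut.conj τ).toMonoidHom.comp u) g = τ * u g * τ⁻¹ := rfl
  rw [e]
  constructor
  · intro hh
    have h1 : u g * τ = τ * u g := by rwa [eq_mul_inv_iff_mul_eq] at hh
    have h2 := congrArg (fun z : Equiv.Perm _ => z none) h1
    simp only [Equiv.Perm.mul_apply, un] at h2
    simp only [τ, Equiv.swap_apply_left] at h2
    rw [us] at h2
    exact (mem g).1 (Option.some_injective _ h2)
  · intro hg
    rw [eq_mul_inv_iff_mul_eq]
    have key : u g * τ * (u g)⁻¹ = τ := by
      have := Equiv.mul_swap_eq_swap_mul (u g) none (some ((1 : G) : G ⧸ F))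
      show u g * Equiv.swap _ _ * (u g)⁻¹ = _
      rw [this, un, us, (mem g).2 hg]
      simp [τ]
    rwa [mul_inv_eq_iff_eq_mul] at key

theorem Amal.rigid (h : Amal A B c) {H F₁ F₂ : Subgroup G} {U U' : Set G}
    (br : Bridge A B H c U U')
    (l1 : F₁ ≤ loops H br.hU br.hU') (l2 : F₂ ≤ loops H br.hU.compl br.hU'.compl)
    (E1 : ∀ k ∈ Subgroup.zpowers c, k ∈ H → k ∈ F₁)
    (E2 : ∀ k ∈ Subgroup.zpowers c, k ∈ H → k ∈ F₂) (hgen : H ≤ F₁ ⊔ F₂) :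
    loops H br.hU br.hU' ≤ F₁ ∧ loops H br.hU.compl br.hU'.compl ≤ F₂ := by
  have uniq : ∀ {K : Type} [Group K] (F : G → K) (u : G →* K), MulOn H F →
      (∀ g ∈ F₁, F g = u g) → (∀ g ∈ F₂, F g = u g) → ∀ g ∈ H, F g = u g := by
    intro K _ F u hF e1 e2
    have := MonoidHom.eqLocus hF.hom (u.comp H.subtype)
    let L : Subgroup G := ((hF.hom).eqLocus (u.comp H.subtype)).map H.subtype
    have k1 : F₁ ≤ L := fun g hg => ⟨⟨g, (l1 hg).2⟩, e1 g hg, rfl⟩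
    have k2 : F₂ ≤ L := fun g hg => ⟨⟨g, (l2 hg).2⟩, e2 g hg, rfl⟩
    intro g hg
    obtain ⟨x, hx, rfl⟩ := (hgen.trans (sup_le k1 k2)) hg
    exact hx
  constructor
  · obtain ⟨K, _, u, u', hu⟩ := exists_equalizer F₁
    obtain ⟨F, hF, a1, a2⟩ := h.glue br (Ψ₁ := u') (Ψ₂ := u) (fun x _ y _ => map_mul _ _ _)
      (fun x _ y _ => map_mul _ _ _) (fun k hk hkH => ((hu k).2 (E1 k hk hkH)).symm)
    have := uniq F u hF (fun g hg => by rw [a1 g (l1 hg)]; exact ((hu g).2 hg).symm)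
      (fun g hg => a2 g (l2 hg))
    intro g hg
    rw [← hu, ← this g hg.2, a1 g hg]
  · obtain ⟨K, _, u, u', hu⟩ := exists_equalizer F₂
    obtain ⟨F, hF, a1, a2⟩ := h.glue br (Ψ₁ := u) (Ψ₂ := u') (fun x _ y _ => map_mul _ _ _)
      (fun x _ y _ => map_mul _ _ _) (fun k hk hkH => ((hu k).2 (E2 k hk hkH)))
    have := uniq F u hF (fun g hg => a1 g (l1 hg))
      (fun g hg => by rw [a2 g (l2 hg)]; exact ((hu g).2 hg).symm)
    intro g hg
    rw [← hu, ← this g hg.2, a2 g hg]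

theorem mem_of_le' {K L : Subgroup G} (h : K ≤ L) {g : G} (hg : g ∈ K) : g ∈ L := h hg

theorem fg_mem_sup {K L : Subgroup G} {g : G} (hg : g ∈ K ⊔ L) :
    ∃ F F' : Subgroup G, F.FG ∧ F'.FG ∧ F ≤ K ∧ F' ≤ L ∧ g ∈ F ⊔ F' := by
  rw [← Subgroup.closure_eq K, ← Subgroup.closure_eq L, ← Subgroup.closure_union] at hg
  induction hg using Subgroup.closure_induction with
  | mem x hx =>
    rcases hx with hx | hx
    · exact ⟨Subgroup.zpowers x, ⊥, ⟨{x}, by simp [Subgroup.zpowers_eq_closure]⟩, ⟨∅, by simp⟩,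
        by simpa [Subgroup.zpowers_le] using hx, bot_le,
        mem_of_le' le_sup_left (Subgroup.mem_zpowers x)⟩
    · exact ⟨⊥, Subgroup.zpowers x, ⟨∅, by simp⟩, ⟨{x}, by simp [Subgroup.zpowers_eq_closure]⟩,
        bot_le, by simpa [Subgroup.zpowers_le] using hx,
        mem_of_le' le_sup_right (Subgroup.mem_zpowers x)⟩
  | one => exact ⟨⊥, ⊥, ⟨∅, by simp⟩, ⟨∅, by simp⟩, bot_le, bot_le, Subgroup.one_mem _⟩
  | mul x y _ _ hx hy =>
    obtain ⟨F, F', a1, a2, a3, a4, a5⟩ := hx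
    obtain ⟨D, D', b1, b2, b3, b4, b5⟩ := hy
    exact ⟨F ⊔ D, F' ⊔ D', a1.sup b1, a2.sup b2, sup_le a3 b3, sup_le a4 b4,
      Subgroup.mul_mem _ (mem_of_le' (sup_le_sup le_sup_left le_sup_left) a5)
        (mem_of_le' (sup_le_sup le_sup_right le_sup_right) b5)⟩
  | inv x _ hx =>
    obtain ⟨F, F', a1, a2, a3, a4, a5⟩ := hx
    exact ⟨F, F', a1, a2, a3, a4, Subgroup.inv_mem _ a5⟩

theorem fg_le_sup {H K L : Subgroup G} (hH : H.FG) (hle : H ≤ K ⊔ L) :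
    ∃ F F' : Subgroup G, F.FG ∧ F'.FG ∧ F ≤ K ∧ F' ≤ L ∧ H ≤ F ⊔ F' := by
  classical
  obtain ⟨S, rfl⟩ := hH
  rw [Subgroup.closure_le] at hle
  induction S using Finset.induction_on with
  | empty => exact ⟨⊥, ⊥, ⟨∅, by simp⟩, ⟨∅, by simp⟩, bot_le, bot_le, by simp⟩
  | insert x S _ ih =>
    rw [Finset.coe_insert, Set.insert_subset_iff] at hle
    obtain ⟨F, F', a1, a2, a3, a4, a5⟩ := ih hle.2
    obtain ⟨D, D', b1, b2, b3, b4, b5⟩ := fg_mem_sup hle.1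
    refine ⟨F ⊔ D, F' ⊔ D', a1.sup b1, a2.sup b2, sup_le a3 b3, sup_le a4 b4, ?_⟩
    rw [Finset.coe_insert, Subgroup.closure_le, Set.insert_subset_iff]
    rw [Subgroup.closure_le] at a5
    exact ⟨mem_of_le' (sup_le_sup le_sup_right le_sup_right) b5,
      fun y hy => mem_of_le' (sup_le_sup le_sup_left le_sup_left) (a5 hy)⟩

def dom (A H : Subgroup G) (S : Finset G) : Set G :=
  {g | ∃ a ∈ A, ∃ r ∈ S, ∃ k ∈ H, g = a * r * k}

theorem dom_inv (A H : Subgroup G) (S : Finset G) : BiInv A H (dom A H S) where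
  l := by
    rintro a ha _ ⟨a', ha', r, hr, k, hk, rfl⟩
    exact ⟨a * a', A.mul_mem ha ha', r, hr, k, hk, by group⟩
  r := by
    rintro a ha _ ⟨a', ha', r, hr, k, hk, rfl⟩
    exact ⟨a', ha', r, hr, k * a, H.mul_mem hk ha, by group⟩

theorem reduce_side {H K : Subgroup G} {P X : Set G} {S : Finset G} 
    (hX : ∀ a ∈ A, ∀ g ∈ X, g ∈ P → a * g ∈ X)
    (hK : ∀ g ∈ X, ∀ k ∈ X, g⁻¹ * k ∈ H → g⁻¹ * k ∈ K) (hS : P ⊆ dom A H S) :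
    ∃ S' : Finset G, S'.card ≤ S.card ∧ X ∩ P ⊆ dom A K S' := by
  classical
  let f : G → G := fun r =>
    if h : ∃ w ∈ X ∩ P, ∃ a ∈ A, ∃ k ∈ H, w = a * r * k then h.choose else r
  refine ⟨S.image f, Finset.card_image_le, ?_⟩
  rintro g ⟨hgX, hgP⟩
  obtain ⟨a, ha, r, hr, k, hk, rfl⟩ := hS hgP
  have hh : ∃ w ∈ X ∩ P, ∃ a ∈ A, ∃ k ∈ H, w = a * r * k := ⟨_, ⟨hgX, hgP⟩, a, ha, k, hk, rfl⟩
  have fr : f r = hh.choose := dif_pos hh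
  obtain ⟨⟨wX, wP⟩, a1, ha1, k1, hk1, e⟩ := hh.choose_spec
  rw [← fr] at wX wP e
  have hm : a * a1⁻¹ ∈ A := A.mul_mem ha (A.inv_mem ha1)
  have e2 : (a * a1⁻¹ * f r)⁻¹ * (a * r * k) = k1⁻¹ * k := by rw [e]; group
  have := hK _ (hX _ hm _ wX wP) _ hgX (by rw [e2]; exact H.mul_mem (H.inv_mem hk1) hk)
  exact ⟨a * a1⁻¹, hm, f r, Finset.mem_image_of_mem f hr, _, this, by group⟩

theorem reduce {H : Subgroup G} {P R : Set G} {S T : Finset G} (hP : BiInv A H P)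
    (hR : BiInv B H R) (hS : P ⊆ dom A H S) (hT : R ⊆ dom B H T) :
    ∃ S' T' : Finset G, S'.card ≤ S.card ∧ T'.card ≤ T.card ∧
      ∀ g ∈ loops H hP hR, Reach A B (dom A (loops H hP hR) S') (dom B (loops H hP hR) T') g := by
  have hK : ∀ g ∈ {g | Reach A B P R g}, ∀ k ∈ {g | Reach A B P R g}, g⁻¹ * k ∈ H →
      g⁻¹ * k ∈ loops H hP hR := fun g hg k hk hh => ⟨Reach.inv_mul hP hR hg k hk hh, hh⟩
  obtain ⟨S', c1, s1⟩ := reduce_side (X := {g | Reach A B P R g})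
    (fun a ha g hg hgP => .a a g ha hg hgP) hK hS
  obtain ⟨T', c2, s2⟩ := reduce_side (X := {g | Reach A B P R g})
    (fun a ha g hg hgP => .b a g ha hg hgP) hK hT
  refine ⟨S', T', c1, c2, fun g hg => ?_⟩
  replace hg := hg.1
  induction hg with
  | one => exact .one
  | a a g ha hr hg ih => exact .a a g ha ih (s1 ⟨hr, hg⟩)
  | b a g ha hr hg ih => exact .b a g ha ih (s2 ⟨hr, hg⟩)

theorem Bridge.gen (h : Amal A B c) {H : Subgroup G} {U U' : Set G} (br : Bridge A B H c U U')
    {P R : Set G} (hP : BiInv A H P) (hR : BiInv B H R) (p1 : (1 : G) ∈ P) (r1 : (1 : G) ∈ R)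
    (hH : ∀ g ∈ H, Reach A B P R g) :
    H ≤ loops H (hP.inter br.hU) (hR.inter br.hU') ⊔
      loops H (hP.inter br.hU.compl) (hR.inter br.hU'.compl) := by
  set C := Subgroup.zpowers c with hCdef
  have CA : C ≤ A := by simpa [C, Subgroup.zpowers_le] using h.cA
  have CB : C ≤ B := by simpa [C, Subgroup.zpowers_le] using h.cB
  set L₁ := loops H (hP.inter br.hU) (hR.inter br.hU') with hL₁
  set L₂ := loops H (hP.inter br.hU.compl) (hR.inter br.hU'.compl) with hL₂
  have C1 : ∀ k ∈ C, Reach A B (P ∩ U) (R ∩ U') k := fun k hk => by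
    have := Reach.a (B := B) (P := P ∩ U) (R := R ∩ U') k 1 (CA hk) .one ⟨p1, br.mem1.1⟩
    rwa [mul_one] at this
  have C2 : ∀ k ∈ C, Reach A B (P ∩ Uᶜ) (R ∩ U'ᶜ) k := fun k hk => by
    have := Reach.b (A := A) (P := P ∩ Uᶜ) (R := R ∩ U'ᶜ) k 1 (CB hk) .one ⟨r1, br.mem1.2⟩
    rwa [mul_one] at this
  have inU : ∀ k, Reach A B (P ∩ U) (R ∩ U') k → k ∈ U := by
    intro k hk
    cases hk with
    | one => exact br.mem1.1
    | a a g ha hr hg => exact br.hU.l a ha g hg.2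
    | b a g ha hr hg => exact br.sub (br.hU'.l a ha g hg.2)
  have inU' : ∀ k, Reach A B (P ∩ Uᶜ) (R ∩ U'ᶜ) k → k ∉ U' := by
    intro k hk
    cases hk with
    | one => exact br.mem1.2
    | a a g ha hr hg => exact fun h' => br.hU.compl.l a ha g hg.2 (br.sub h')
    | b a g ha hr hg => exact br.hU'.compl.l a ha g hg.2
  have LH : L₁ ⊔ L₂ ≤ H := sup_le (fun g hg => hg.2) (fun g hg => hg.2)
  have trans : ∀ {D : Subgroup G} {V : Set G}, BiInv D H V → ∀ k j, j ∈ L₁ ⊔ L₂ → k * j ∈ V →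
      k ∈ V := fun hV k j hj hk => by simpa using hV.r _ (H.inv_mem (LH hj)) _ hk
  have main : ∀ g, Reach A B P R g → ∃ k j, j ∈ L₁ ⊔ L₂ ∧ g = k * j ∧
      (Reach A B (P ∩ U) (R ∩ U') k ∨ Reach A B (P ∩ Uᶜ) (R ∩ U'ᶜ) k) := by
    intro g hg
    induction hg with
    | one => exact ⟨1, 1, Subgroup.one_mem _, by simp, .inl .one⟩
    | a a g ha _ hg ih =>
      obtain ⟨k, j, hj, rfl, hk⟩ := ih
      have hkP := trans hP k j hj hg
      rcases hk with hk | hk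
      · exact ⟨a * k, j, hj, by group, .inl (.a a k ha hk ⟨hkP, inU k hk⟩)⟩
      · by_cases hkU : k ∈ U
        · obtain ⟨z, hz, hzk⟩ := (br.diff k).1 ⟨hkU, inU' k hk⟩
          have hm : z⁻¹ * k ∈ L₂ := ⟨Reach.inv_mul (hP.inter br.hU.compl) (hR.inter br.hU'.compl)
            (C2 z hz) k hk hzk, hzk⟩
          refine ⟨a * z, z⁻¹ * k * j, Subgroup.mul_mem _ (mem_of_le' le_sup_right hm) hj,
            by group, .inl (.a a z ha (C1 z hz) ⟨?_, inU z (C1 z hz)⟩)⟩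
          have := hP.l z (CA hz) 1 p1
          rwa [mul_one] at this
        · exact ⟨a * k, j, hj, by group, .inr (.a a k ha hk ⟨hkP, hkU⟩)⟩
    | b a g ha _ hg ih =>
      obtain ⟨k, j, hj, rfl, hk⟩ := ih
      have hkR := trans hR k j hj hg
      rcases hk with hk | hk
      · by_cases hkU : k ∈ U'
        · exact ⟨a * k, j, hj, by group, .inl (.b a k ha hk ⟨hkR, hkU⟩)⟩
        · obtain ⟨z, hz, hzk⟩ := (br.diff k).1 ⟨inU k hk, hkU⟩
          have hm : z⁻¹ * k ∈ L₁ := ⟨Reach.inv_mul (hP.inter br.hU) (hR.inter br.hU')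
            (C1 z hz) k hk hzk, hzk⟩
          refine ⟨a * z, z⁻¹ * k * j, Subgroup.mul_mem _ (mem_of_le' le_sup_left hm) hj,
            by group, .inr (.b a z ha (C2 z hz) ⟨?_, inU' z (C2 z hz)⟩)⟩
          have := hR.l z (CB hz) 1 r1
          rwa [mul_one] at this
      · exact ⟨a * k, j, hj, by group, .inr (.b a k ha hk ⟨hkR, inU' k hk⟩)⟩
  intro g hg
  obtain ⟨k, j, hj, rfl, hk⟩ := main g (hH g hg)
  have hkH : k ∈ H := (Subgroup.mul_mem_cancel_right H (LH hj)).1 hg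
  rcases hk with hk | hk
  · exact Subgroup.mul_mem _ (mem_of_le' le_sup_left ⟨hk, hkH⟩) hj
  · exact Subgroup.mul_mem _ (mem_of_le' le_sup_right ⟨hk, hkH⟩) hj

def Cfg (A B H : Subgroup G) (S T : Finset G) : Prop :=
  ∀ g ∈ H, Reach A B (dom A H S) (dom B H T) g

theorem Amal.combine (h : Amal A B c) {H : Subgroup G} {U U' : Set G} (br : Bridge A B H c U U')
    {c0 : G} (hc0 : Subgroup.zpowers c0 = Subgroup.zpowers c ⊓ H)
    (e1 : c0 ∈ loops H br.hU br.hU') (e2 : c0 ∈ loops H br.hU.compl br.hU'.compl)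
    (hgen : H ≤ loops H br.hU br.hU' ⊔ loops H br.hU.compl br.hU'.compl)
    (i1 : loops H br.hU br.hU' = ⊥ ∨ Ind (loops H br.hU br.hU'))
    (i2 : loops H br.hU.compl br.hU'.compl = ⊥ ∨ Ind (loops H br.hU.compl br.hU'.compl)) :
    H = ⊥ ∨ Ind H := by
  set L₁ := loops H br.hU br.hU' with hL₁
  set L₂ := loops H br.hU.compl br.hU'.compl with hL₂
  have key : ∀ Φ₁ Φ₂ : G → Multiplicative ℤ, MulOn L₁ Φ₁ → MulOn L₂ Φ₂ → Φ₁ c0 = Φ₂ c0 →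
      ((∃ g ∈ L₁, Φ₁ g ≠ 1) ∨ (∃ g ∈ L₂, Φ₂ g ≠ 1)) → Ind H := by
    intro Φ₁ Φ₂ m1 m2 hc hne
    obtain ⟨F, hF, a1, a2⟩ := h.glue br m1 m2 (by
      intro k hk hkH
      have : k ∈ Subgroup.zpowers c0 := by rw [hc0]; exact ⟨hk, hkH⟩
      obtain ⟨n, rfl⟩ := this
      show Φ₁ (c0 ^ n) = Φ₂ (c0 ^ n)
      rw [m1.zpow e1, m2.zpow e2, hc])
    rcases hne with ⟨g, hg, hne⟩ | ⟨g, hg, hne⟩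
    · exact ⟨F, hF, g, hg.2, by rwa [a1 g hg]⟩
    · exact ⟨F, hF, g, hg.2, by rwa [a2 g hg]⟩
  have triv : ∀ L : Subgroup G, MulOn L (fun _ => (1 : Multiplicative ℤ)) :=
    fun L x _ y _ => by simp
  rcases i1 with i1 | ⟨Φ₁, m1, n1⟩
  · rw [i1, Subgroup.mem_bot] at e1
    rcases i2 with i2 | ⟨Φ₂, m2, n2⟩
    · left; rw [i1, i2] at hgen; simpa using hgen
    · right
      exact key (fun _ => 1) Φ₂ (triv _) m2 (by rw [e1, m2.one]) (.inr n2)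
  · right
    rcases i2 with i2 | ⟨Φ₂, m2, n2⟩
    · rw [i2, Subgroup.mem_bot] at e2
      exact key Φ₁ (fun _ => 1) m1 (triv _) (by rw [e2, m1.one]) (.inl n1)
    · by_cases x1 : Φ₁ c0 = 1
      · exact key Φ₁ (fun _ => 1) m1 (triv _) x1 (.inl n1)
      by_cases x2 : Φ₂ c0 = 1
      · exact key (fun _ => 1) Φ₂ (triv _) m2 x2.symm (.inr n2)
      refine key (fun g => Φ₁ g ^ (Φ₂ c0).toAdd) (fun g => Φ₂ g ^ (Φ₁ c0).toAdd) ?_ ?_ ?_ ?_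
      · intro x hx y hy
        simp only [m1 x hx y hy, mul_zpow]
      · intro x hx y hy
        simp only [m2 x hx y hy, mul_zpow]
      · apply Multiplicative.toAdd.injective
        simp [mul_comm]
      · refine .inl ⟨c0, e1, fun hz => ?_⟩
        have := congrArg Multiplicative.toAdd hz
        simp at this
        tauto

theorem Amal.step (h : Amal A B c) (n : ℕ)
    (IH : ∀ (H : Subgroup G) (S T : Finset G), H.FG → S.card + T.card < n → Cfg A B H S T →
      H = ⊥ ∨ Ind H)
    (H : Subgroup G) (S T : Finset G) (hfg : H.FG) (hn : S.card + T.card = n)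
    (hcfg : Cfg A B H S T) (p1 : (1 : G) ∈ dom A H S) (r1 : (1 : G) ∈ dom B H T) :
    H = ⊥ ∨ Ind H := by
  classical
  by_cases hi : Ind H
  · exact .inr hi
  obtain ⟨U, U', br⟩ := h.bridge hi
  set P := dom A H S with hPdef
  set R := dom B H T with hRdef
  have hP : BiInv A H P := dom_inv A H S
  have hR : BiInv B H R := dom_inv B H T
  have CA : Subgroup.zpowers c ≤ A := by simpa [Subgroup.zpowers_le] using h.cA
  have CB : Subgroup.zpowers c ≤ B := by simpa [Subgroup.zpowers_le] using h.cB
  have gen := br.gen h hP hR p1 r1 hcfg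
  set M₁ := loops H (hP.inter br.hU) (hR.inter br.hU') with hM₁
  set M₂ := loops H (hP.inter br.hU.compl) (hR.inter br.hU'.compl) with hM₂
  have EM1 : ∀ k ∈ Subgroup.zpowers c, k ∈ H → k ∈ M₁ := fun k hk hkH => by
    have := Reach.a (B := B) (P := P ∩ U) (R := R ∩ U') k 1 (CA hk) .one ⟨p1, br.mem1.1⟩
    rw [mul_one] at this
    exact ⟨this, hkH⟩
  have EM2 : ∀ k ∈ Subgroup.zpowers c, k ∈ H → k ∈ M₂ := fun k hk hkH => by
    have := Reach.b (A := A) (P := P ∩ Uᶜ) (R := R ∩ U'ᶜ) k 1 (CB hk) .one ⟨r1, br.mem1.2⟩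
    rw [mul_one] at this
    exact ⟨this, hkH⟩
  have ML1 : M₁ ≤ loops H br.hU br.hU' := fun g hg =>
    ⟨hg.1.mono Set.inter_subset_right Set.inter_subset_right, hg.2⟩
  have ML2 : M₂ ≤ loops H br.hU.compl br.hU'.compl := fun g hg =>
    ⟨hg.1.mono Set.inter_subset_right Set.inter_subset_right, hg.2⟩
  obtain ⟨c0, hc0⟩ : ∃ c0, Subgroup.zpowers c0 = Subgroup.zpowers c ⊓ H := by
    rw [← Subgroup.isCyclic_iff_exists_zpowers_eq_top]
    exact Subgroup.isCyclic_of_le (inf_le_left : Subgroup.zpowers c ⊓ H ≤ Subgroup.zpowers c)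
  have c0E : c0 ∈ Subgroup.zpowers c ⊓ H := hc0 ▸ Subgroup.mem_zpowers c0
  have Efg : (Subgroup.zpowers c ⊓ H).FG := ⟨{c0}, by
    rw [← hc0]; simp [Subgroup.zpowers_eq_closure]⟩
  obtain ⟨F₁, F₂, f1, f2, l1, l2, hF⟩ := fg_le_sup hfg gen
  have EE1 : Subgroup.zpowers c ⊓ H ≤ M₁ := fun k hk => EM1 k hk.1 hk.2
  have EE2 : Subgroup.zpowers c ⊓ H ≤ M₂ := fun k hk => EM2 k hk.1 hk.2
  have s1 := sup_le l1 EE1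
  have s2 := sup_le l2 EE2
  obtain ⟨r1', r2'⟩ := h.rigid br (s1.trans ML1) (s2.trans ML2)
    (fun k hk hkH => mem_of_le' le_sup_right ⟨hk, hkH⟩)
    (fun k hk hkH => mem_of_le' le_sup_right ⟨hk, hkH⟩)
    (hF.trans (sup_le_sup le_sup_left le_sup_left))
  have q1 : M₁ = F₁ ⊔ (Subgroup.zpowers c ⊓ H) := le_antisymm (ML1.trans r1') s1
  have q2 : M₂ = F₂ ⊔ (Subgroup.zpowers c ⊓ H) := le_antisymm (ML2.trans r2') s2
  have q1' : M₁ = loops H br.hU br.hU' := le_antisymm ML1 (r1'.trans s1)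
  have q2' : M₂ = loops H br.hU.compl br.hU'.compl := le_antisymm ML2 (r2'.trans s2)
  have fg1 : M₁.FG := by rw [q1]; exact f1.sup Efg
  have fg2 : M₂.FG := by rw [q2]; exact f2.sup Efg
  have filt : ∀ {D : Subgroup G} {V : Set G} (Z : Finset G), BiInv D H V →
      dom D H Z ∩ V ⊆ dom D H (Z.filter (· ∈ V)) := by
    rintro D V Z hV _ ⟨⟨a, ha, r, hr, k, hk, rfl⟩, hg⟩
    refine ⟨a, ha, r, ?_, k, hk, rfl⟩
    rw [Finset.mem_filter]
    refine ⟨hr, ?_⟩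
    have := hV.l _ (D.inv_mem ha) _ (hV.r _ (H.inv_mem hk) _ hg)
    simpa [mul_assoc] using this
  have filtlt : ∀ {D : Subgroup G} {V : Set G} (Z : Finset G), BiInv D H V → (1 : G) ∈ dom D H Z →
      (1 : G) ∉ V → (Z.filter (· ∈ V)).card < Z.card := by
    rintro D V Z hV ⟨a, ha, r, hr, k, hk, e⟩ hg
    apply Finset.card_lt_card
    rw [Finset.filter_ssubset]
    refine ⟨r, hr, fun hrV => hg ?_⟩
    rw [e]
    exact hV.r _ hk _ (hV.l _ ha _ hrV)
  have filtle : ∀ {V : Set G} (Z : Finset G), (Z.filter (· ∈ V)).card ≤ Z.card :=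
    fun Z => Finset.card_filter_le _ _
  have i1 : M₁ = ⊥ ∨ Ind M₁ := by
    obtain ⟨S', T', cS, cT, hcf⟩ := reduce (hP.inter br.hU) (hR.inter br.hU')
      (filt S br.hU) (filt T br.hU')
    refine IH M₁ S' T' fg1 ?_ hcf
    have := filtlt T br.hU' r1 br.mem1.2
    have := filtle (V := U) S
    omega
  have i2 : M₂ = ⊥ ∨ Ind M₂ := by
    obtain ⟨S', T', cS, cT, hcf⟩ := reduce (hP.inter br.hU.compl) (hR.inter br.hU'.compl)
      (filt S br.hU.compl) (filt T br.hU'.compl)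
    refine IH M₂ S' T' fg2 ?_ hcf
    have := filtlt S br.hU.compl p1 (fun hh => hh br.mem1.1)
    have := filtle (V := U'ᶜ) T
    omega
  exact h.combine br hc0 (q1' ▸ EE1 c0E) (q2' ▸ EE2 c0E) (q1' ▸ q2' ▸ gen) (q1' ▸ i1) (q2' ▸ i2)

theorem Cfg.symm {H : Subgroup G} {S T : Finset G} (h : Cfg A B H S T) : Cfg B A H T S :=
  fun g hg => (h g hg).symm

theorem Amal.step2 (h : Amal A B c) (n : ℕ)
    (IH : ∀ (H : Subgroup G) (S T : Finset G), H.FG → S.card + T.card < n → Cfg A B H S T →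
      H = ⊥ ∨ Ind H) (hA : ∀ H ≤ A, H.FG → H = ⊥ ∨ Ind H)
    (H : Subgroup G) (S T : Finset G) (hfg : H.FG) (hn : S.card + T.card = n)
    (hcfg : Cfg A B H S T) (p1 : (1 : G) ∈ dom A H S) : H = ⊥ ∨ Ind H := by
  classical
  by_cases hex : ∃ a ∈ A, a ∈ dom B H T
  · obtain ⟨a, ha, haB⟩ := hex
    let φ : G →* G := (MulAut.conj a).toMonoidHom
    have hφ : ∀ g, φ g = a * g * a⁻¹ := fun g => rfl
    let H' := H.map φ
    have domc : ∀ {D : Subgroup G} {Z : Finset G} {g : G}, g ∈ dom D H Z →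
        g * a⁻¹ ∈ dom D H' (Z.image (· * a⁻¹)) := by
      rintro D Z _ ⟨b, hb, r, hr, k, hk, rfl⟩
      exact ⟨b, hb, r * a⁻¹, Finset.mem_image_of_mem _ hr, φ k, ⟨k, hk, rfl⟩, by
        rw [hφ]; group⟩
    have haA : a ∈ dom A H S := by
      have := (dom_inv A H S).l a ha 1 p1
      rwa [mul_one] at this
    have p1' := domc haA
    have r1' := domc haB
    rw [mul_inv_cancel] at p1' r1'
    have hr : ∀ g, Reach A B (dom A H S) (dom B H T) g →
        Reach A B (dom A H' (S.image (· * a⁻¹))) (dom B H' (T.image (· * a⁻¹))) (g * a⁻¹) := by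
      intro g hg
      induction hg with
      | one =>
        have := Reach.a (B := B) (R := dom B H' (T.image (· * a⁻¹))) a⁻¹ 1 (A.inv_mem ha) .one p1'
        simpa using this
      | a x g hx _ hg ih => rw [mul_assoc]; exact .a _ _ hx ih (domc hg)
      | b x g hx _ hg ih => rw [mul_assoc]; exact .b _ _ hx ih (domc hg)
    have hcfg' : Cfg A B H' (S.image (· * a⁻¹)) (T.image (· * a⁻¹)) := by
      rintro _ ⟨k, hk, rfl⟩
      have h1 := hr _ (hcfg k hk)
      have := Reach.a a _ ha h1 (domc ?_)
      · simpa [hφ, mul_assoc] using this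
      · simpa using (dom_inv A H S).r k hk 1 p1
    have cS : (S.image (· * a⁻¹)).card = S.card :=
      Finset.card_image_of_injective _ (mul_left_injective _)
    have cT : (T.image (· * a⁻¹)).card = T.card :=
      Finset.card_image_of_injective _ (mul_left_injective _)
    have hfg' : H'.FG := by
      obtain ⟨Z, hZ⟩ := hfg
      exact ⟨Z.image φ, by rw [Finset.coe_image, ← MonoidHom.map_closure, hZ]⟩
    rcases h.step n IH H' _ _ hfg' (by rw [cS, cT, hn]) hcfg' p1' r1' with hb | ⟨Φ, m, k, hk, hne⟩
    · left
      exact (Subgroup.map_eq_bot_iff_of_injective H (MulAut.conj a).injective).1 hb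
    · right
      obtain ⟨k, hk, rfl⟩ := hk
      refine ⟨fun g => Φ (φ g), fun x hx y hy => ?_, k, hk, hne⟩
      simp only [map_mul]
      exact m _ ⟨x, hx, rfl⟩ _ ⟨y, hy, rfl⟩
  · apply hA H _ hfg
    intro g hg
    have this : ∀ g, Reach A B (dom A H S) (dom B H T) g → g ∈ A := by
      intro g hg
      induction hg with
      | one => exact A.one_mem
      | a a g ha _ _ ih => exact A.mul_mem ha ih
      | b a g ha _ hg ih => exact absurd ⟨g, ih, hg⟩ hex
    exact this g (hcfg g hg)

theorem Amal.main (h : Amal A B c) (hA : ∀ H ≤ A, H.FG → H = ⊥ ∨ Ind H)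
    (hB : ∀ H ≤ B, H.FG → H = ⊥ ∨ Ind H) (n : ℕ) :
    ∀ (H : Subgroup G) (S T : Finset G), H.FG → S.card + T.card = n → Cfg A B H S T →
      H = ⊥ ∨ Ind H := by
  induction n using Nat.strong_induction_on with
  | _ n ih =>
  intro H S T hfg hn hcfg
  have IH : ∀ (H : Subgroup G) (S T : Finset G), H.FG → S.card + T.card < n → Cfg A B H S T →
      H = ⊥ ∨ Ind H := fun H S T hfg hlt => ih _ hlt H S T hfg rfl
  by_cases p1 : (1 : G) ∈ dom A H S
  · exact h.step2 n IH hA H S T hfg hn hcfg p1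
  by_cases r1 : (1 : G) ∈ dom B H T
  · exact h.symm.step2 n (fun H S T hfg hlt hc => IH H T S hfg (by omega) hc.symm) hB H T S hfg
      (by omega) hcfg.symm r1
  left
  rw [eq_bot_iff]
  have : ∀ g, Reach A B (dom A H S) (dom B H T) g → g = 1 := by
    intro g hg
    induction hg with
    | one => rfl
    | a a g ha _ hg ih => rw [ih] at hg; exact absurd hg p1
    | b a g ha _ hg ih => rw [ih] at hg; exact absurd hg r1
  intro g hg
  rw [Subgroup.mem_bot]
  exact this g (hcfg g hg)

theorem dom_mono {D H : Subgroup G} {Z Z' : Finset G} (h : Z ⊆ Z') : dom D H Z ⊆ dom D H Z' := by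
  rintro _ ⟨b, hb, r, hr, k, hk, rfl⟩
  exact ⟨b, hb, r, h hr, k, hk, rfl⟩

theorem mem_dom {D H : Subgroup G} {Z : Finset G} {g : G} (h : g ∈ Z) : g ∈ dom D H Z :=
  ⟨1, D.one_mem, g, h, 1, H.one_mem, by simp⟩

theorem Amal.exists_cfg (h : Amal A B c) {H : Subgroup G} (hfg : H.FG) :
    ∃ S T, Cfg A B H S T := by
  classical
  have one : ∀ g : G, ∃ S T : Finset G, Reach A B (dom A H S) (dom B H T) g := by
    refine h.ind ⟨∅, ∅, .one⟩ ?_ ?_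
    · rintro a ha g ⟨S, T, hr⟩
      exact ⟨insert g S, T, .a a g ha (hr.mono (dom_mono (Finset.subset_insert _ _)) subset_rfl)
        (mem_dom (Finset.mem_insert_self _ _))⟩
    · rintro a ha g ⟨S, T, hr⟩
      exact ⟨S, insert g T, .b a g ha (hr.mono subset_rfl (dom_mono (Finset.subset_insert _ _)))
        (mem_dom (Finset.mem_insert_self _ _))⟩
  choose fS fT hf using one
  obtain ⟨Z, hZ⟩ := hfg
  refine ⟨Z.biUnion fS, Z.biUnion fT, ?_⟩
  have hle : H ≤ loops H (dom_inv A H (Z.biUnion fS)) (dom_inv B H (Z.biUnion fT)) := by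
    conv_lhs => rw [← hZ]
    rw [Subgroup.closure_le]
    intro g hg
    have hgZ : g ∈ Z := hg
    refine ⟨(hf g).mono (dom_mono (Finset.subset_biUnion_of_mem fS hgZ))
      (dom_mono (Finset.subset_biUnion_of_mem fT hgZ)), ?_⟩
    rw [← hZ]
    exact Subgroup.subset_closure hg
  exact fun g hg => (hle hg).1

theorem Amal.final (h : Amal A B c) (hA : ∀ H ≤ A, H.FG → H = ⊥ ∨ Ind H)
    (hB : ∀ H ≤ B, H.FG → H = ⊥ ∨ Ind H) (H : Subgroup G) (hfg : H.FG) : H = ⊥ ∨ Ind H := by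
  obtain ⟨S, T, hc⟩ := h.exists_cfg hfg
  exact h.main hA hB _ H S T hfg rfl hc

theorem ind_of_range {A : Type} [Group A] (i : A →* G) (hi : Function.Injective i)
    (hA : LocallyIndicable A) (H : Subgroup G) (hH : H ≤ i.range) (hfg : H.FG) :
    H = ⊥ ∨ Ind H := by
  classical
  by_cases hb : H = ⊥
  · exact .inl hb
  right
  have hm : (H.comap i).map i = H := Subgroup.map_comap_eq_self hH
  have fg' : (H.comap i).FG := by
    rw [← hm] at hfg
    rw [Subgroup.fg_iff_submonoid_fg] at hfg ⊢
    exact Submonoid.FG.map_injective i hi hfg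
  obtain ⟨f, hf⟩ := hA (H.comap i) (fun h0 => hb (by rw [← hm, h0, Subgroup.map_bot])) fg'
  have pre : ∀ x : H, ∃ y : H.comap i, i y = x := fun x => by
    obtain ⟨y, hy⟩ := hH x.2
    exact ⟨⟨y, by rw [Subgroup.mem_comap, hy]; exact x.2⟩, hy⟩
  choose s hs using pre
  have su : ∀ (x : H) (y : H.comap i), i y = x → s x = y := fun x y e =>
    Subtype.ext (hi (by rw [hs, e]))
  refine ⟨fun g => if hg : g ∈ H then f (s ⟨g, hg⟩) else 1, ?_, ?_⟩
  · intro x hx y hy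
    simp only [dif_pos hx, dif_pos hy, dif_pos (H.mul_mem hx hy), ← map_mul]
    congr 1
    apply su
    simp [hs]
  · obtain ⟨y, hy⟩ := hf (Multiplicative.ofAdd 1)
    refine ⟨i y, y.2, ?_⟩
    have : i y ∈ H := y.2
    simp only [dif_pos this, su ⟨i y, this⟩ y rfl, hy]
    decide

theorem surj_of_ind {H : Subgroup G} (h : Ind H) :
    ∃ f : H →* Multiplicative ℤ, Function.Surjective f := by
  obtain ⟨Φ, m, k, hk, hne⟩ := h
  let f := m.hom
  have hcyc : IsCyclic f.range := inferInstance
  obtain ⟨d, hd⟩ := (Subgroup.isCyclic_iff_exists_zpowers_eq_top f.range).1 hcyc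
  have hd1 : d ≠ 1 := by
    rintro rfl
    have : f ⟨k, hk⟩ ∈ f.range := ⟨_, rfl⟩
    rw [← hd] at this
    simp at this
    exact hne this
  have hdd : d.toAdd ≠ 0 := fun h0 => hd1 (Multiplicative.toAdd.injective h0)
  have ex : ∀ x : H, ∃ n : ℤ, d ^ n = f x := fun x => by
    have : f x ∈ f.range := ⟨_, rfl⟩
    rw [← hd] at this
    exact this
  choose e he using ex
  have inj : ∀ a b : ℤ, d ^ a = d ^ b → a = b := fun a b hab => by
    have := congrArg Multiplicative.toAdd hab
    simpa [hdd] using this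
  refine ⟨⟨⟨fun x => Multiplicative.ofAdd (e x), ?_⟩, ?_⟩, ?_⟩
  · show Multiplicative.ofAdd (e 1) = Multiplicative.ofAdd 0
    congr 1
    apply inj
    rw [he]; simp
  · intro x y
    show Multiplicative.ofAdd (e (x * y)) = Multiplicative.ofAdd (e x + e y)
    congr 1
    apply inj
    rw [he, zpow_add, he, he, map_mul]
  · intro n
    have : d ^ n.toAdd ∈ f.range := by rw [← hd]; exact ⟨_, rfl⟩
    obtain ⟨x, hx⟩ := this
    refine ⟨x, ?_⟩
    show Multiplicative.ofAdd (e x) = n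
    rw [inj (e x) n.toAdd (by rw [he, hx])]
    rfl

theorem amal_of_isAmalgam {A B : Type} [Group A] [Group B] (iA : A →* G) (iB : B →* G)
    (p : A) (q : B) (hG : IsAmalgam iA iB p q) : Amal iA.range iB.range (iA p) := by
  obtain ⟨jA, jB, hpq, up⟩ := hG
  refine ⟨⟨p, rfl⟩, ⟨q, hpq.symm⟩, ?_, ?_⟩
  · intro K _ fA fB hf
    obtain ⟨f, ⟨h1, h2⟩, -⟩ := up K (fA.comp iA.rangeRestrict) (fB.comp iB.rangeRestrict) (by
      have e : (⟨iA p, ⟨q, hpq.symm⟩⟩ : iB.range) = iB.rangeRestrict q := Subtype.ext hpq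
      rw [e] at hf
      exact hf)
    refine ⟨f, ?_, ?_⟩
    · rintro ⟨_, a, rfl⟩
      exact DFunLike.congr_fun h1 a
    · rintro ⟨_, b, rfl⟩
      exact DFunLike.congr_fun h2 b
  · set L := iA.range ⊔ iB.range with hL
    have mA : ∀ a, iA a ∈ L := fun a => mem_of_le' le_sup_left ⟨a, rfl⟩
    have mB : ∀ a, iB a ∈ L := fun a => mem_of_le' le_sup_right ⟨a, rfl⟩
    obtain ⟨f, ⟨h1, h2⟩, -⟩ := up L (iA.codRestrict L mA) (iB.codRestrict L mB)
      (Subtype.ext hpq)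
    obtain ⟨g, -, hu⟩ := up G iA iB hpq
    have e1 := hu (L.subtype.comp f) ⟨by rw [MonoidHom.comp_assoc, h1]; rfl,
      by rw [MonoidHom.comp_assoc, h2]; rfl⟩
    have e2 := hu (MonoidHom.id G) ⟨rfl, rfl⟩
    rw [eq_top_iff]
    intro x _
    have := DFunLike.congr_fun (e1.trans e2.symm) x
    rw [MonoidHom.id_apply] at this
    rw [← this]
    exact (f x).2

end Amalgam

/-- The amalgamated product of locally indicable groups over infinite cyclic
subgroups generated by non-proper-powers is locally indicable. -/
theorem locallyIndicable_amalgam {A B G : Type} [Group A] [Group B] [Group G]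
    (iA : A →* G) (iB : B →* G) (p : A) (q : B)
    (hG : IsAmalgam iA iB p q)
    (hA : LocallyIndicable A) (hB : LocallyIndicable B)
    (hpo : ¬ IsOfFinOrder p) (hqo : ¬ IsOfFinOrder q)
    (hp : ∀ (s : A) (n : ℕ), 2 ≤ n → p ≠ s ^ n)
    (hq : ∀ (s : B) (n : ℕ), 2 ≤ n → q ≠ s ^ n) :
    LocallyIndicable G := by
  intro H hne hfg
  rcases (amal_of_isAmalgam iA iB p q hG).final (ind_of_range iA hG.1 hA)
    (ind_of_range iB hG.2.1 hB) H hfg with h | h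
  · exact absurd h hne
  · exact surj_of_ind h
end

section
/- Let G be a locally indicable group and let w₁,…,w_m be words in G ∗ F(x₁,…,x_n) such that the m × n integer matrix M, whose (i,j)-entry is the exponent sum of x_j in w_i, has rank m. Then the system of equations w₁ = ⋯ = w_m = 1 has a solution over G; equivalently, G embeds canonically into (G ∗ F(x₁,…,x_n))/⟨⟨w₁,…,w_m⟩⟩. -/
open Monoid

/-- The exponent sum of the variable `x_j` in a word `w ∈ G ∗ F(x₁,…,xₙ)`. -/
noncomputable def exponentSum {G : Type} [Group G] {n : ℕ} (j : Fin n)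
    (w : Coprod G (FreeGroup (Fin n))) : ℤ :=
  Multiplicative.toAdd
    ((Coprod.lift (1 : G →* Multiplicative ℤ)
      (FreeGroup.lift fun k => Multiplicative.ofAdd (if k = j then (1 : ℤ) else 0))) w)

namespace Howie

/-- Letters: group elements or signed variables. -/
abbrev Ltr (G : Type) (n : ℕ) := G ⊕ (Fin n × Bool)

/-- Sum of a one-cochain `c` along the path reading `u` (right to left) from the vertex `q`. -/
def psum {L A : Type} [AddCommGroup A] (c : List L → L → A) : List L → List L → A
  | [], _ => 0
  | a :: u, q => psum c u q + c (u ++ q) a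

/-- The cochain supported on the variable edges. -/
def xst {G K A : Type} {n : ℕ} [AddCommGroup A] (κ : List (Ltr G n) → K)
    (y : K → Fin n → A) (l : List (Ltr G n)) : Ltr G n → A
  | .inl _ => 0
  | .inr (j, true) => y (κ l) j
  | .inr (j, false) => - y (κ (.inr (j, false) :: l)) j

/-- The cochain supported on the group edges. -/
def gst {G K : Type} [Group G] {n : ℕ} (κ : List (Ltr G n) → K) (p : K → G) (ψ : G → ℚ)
    (l : List (Ltr G n)) : Ltr G n → ℚ
  | .inl g => ψ (p (κ (.inl g :: l)) * g * (p (κ l))⁻¹)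
  | .inr _ => 0

def SufClosed {L : Type} (V : Set (List L)) : Prop := ∀ a l, a :: l ∈ V → l ∈ V

structure Adm {G K : Type} [Group G] {n m : ℕ} (V : Set (List (Ltr G n)))
    (W : Fin m → List (Ltr G n)) (κ : List (Ltr G n) → K) : Prop where
  det : ∀ a l l', a :: l ∈ V → a :: l' ∈ V → κ l = κ l' → κ (a :: l) = κ (a :: l')
  inv : ∀ j b l l', .inr (j, b) :: l ∈ V → .inr (j, !b) :: l' ∈ V →
    κ l' = κ (.inr (j, b) :: l) → κ (.inr (j, !b) :: l') = κ l
  one : ∀ l, .inl 1 :: l ∈ V → κ (.inl 1 :: l) = κ l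
  mul : ∀ h g l, .inl h :: .inl g :: l ∈ V → .inl (h * g) :: l ∈ V →
    κ (.inl h :: .inl g :: l) = κ (.inl (h * g) :: l)
  cell : ∀ i q, W i ++ q ∈ V → κ (W i ++ q) = κ q

def Solv {G K : Type} {n m : ℕ} (V : Set (List (Ltr G n)))
    (W : Fin m → List (Ltr G n)) (κ : List (Ltr G n) → K) : Prop :=
  ∀ b : K → Fin m → ℚ, ∃ y : K → Fin n → ℚ, ∀ i q, W i ++ q ∈ V →
    psum (xst κ y) (W i) q = b (κ q) i

lemma SufClosed.append {L : Type} {V : Set (List L)} (hV : SufClosed V) :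
    ∀ u q, u ++ q ∈ V → q ∈ V
  | [], _, h => h
  | a :: u, q, h => hV.append u q (hV a _ h)

lemma psum_add {L A : Type} [AddCommGroup A] (c d : List L → L → A) (u q : List L) :
    psum (fun l a => c l a + d l a) u q = psum c u q + psum d u q := by
  induction u with
  | nil => simp [psum]
  | cons a u ih => simp only [psum, ih]; abel

lemma psum_append {L A : Type} [AddCommGroup A] (c : List L → L → A) (u q r : List L) :
    psum c (u ++ q) r = psum c u (q ++ r) + psum c q r := by
  induction u with
  | nil => simp [psum]
  | cons a u ih => simp only [psum, ih, List.cons_append, List.append_assoc]; abel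

lemma map_psum {L A B : Type} [AddCommGroup A] [AddCommGroup B] (T : A →+ B)
    (c : List L → L → A) (u q : List L) :
    T (psum c u q) = psum (fun l a => T (c l a)) u q := by
  induction u with
  | nil => simp [psum]
  | cons a u ih => simp [psum, ih]

lemma map_xst {G K A B : Type} {n : ℕ} [AddCommGroup A] [AddCommGroup B] (T : A →+ B)
    (κ : List (Ltr G n) → K) (y : K → Fin n → A) (l a) :
    T (xst κ y l a) = xst κ (fun k j => T (y k j)) l a := by
  rcases a with g | ⟨j, _ | _⟩ <;> simp [xst]

lemma map_psum_xst {G K A B : Type} {n : ℕ} [AddCommGroup A] [AddCommGroup B] (T : A →+ B)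
    (κ : List (Ltr G n) → K) (y : K → Fin n → A) (u q) :
    T (psum (xst κ y) u q) = psum (xst κ (fun k j => T (y k j))) u q := by
  rw [map_psum]; congr 1; funext l a; exact map_xst T κ y l a

/-- Vertices are transported deterministically. -/
lemma transport {L K : Type} {V : Set (List L)} (hV : SufClosed V) {κ : List L → K}
    (det : ∀ a l l', a :: l ∈ V → a :: l' ∈ V → κ l = κ l' → κ (a :: l) = κ (a :: l'))
    {q q' : List L} (h : κ q = κ q') :
    ∀ u, u ++ q ∈ V → u ++ q' ∈ V → κ (u ++ q) = κ (u ++ q')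
  | [], _, _ => h
  | a :: u, h1, h2 => det a _ _ h1 h2 (transport hV det h u (hV _ _ h1) (hV _ _ h2))

/-- Choice of a potential trivializing a spanning forest. -/
lemma exists_potential {G K : Type} [Group G] (E : Finset (K × G × K)) :
    ∃ p : K → G, ∀ F : K → ℚ,
      (∀ e ∈ E, p e.2.2 * e.2.1 * (p e.1)⁻¹ = 1 → F e.1 = F e.2.2) →
      ∀ e ∈ E, F e.1 = F e.2.2 := by
  classical
  induction E using Finset.induction_on with
  | empty => exact ⟨fun _ => 1, by simp⟩
  | insert e E he ih =>
    obtain ⟨p, hp⟩ := ih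
    by_cases hc : ∀ F : K → ℚ,
      (∀ e ∈ E, p e.2.2 * e.2.1 * (p e.1)⁻¹ = 1 → F e.1 = F e.2.2) → F e.1 = F e.2.2
    · refine ⟨p, fun F hF e' he' => ?_⟩
      have hF' := fun e he => hF e (Finset.mem_insert_of_mem he)
      rcases Finset.mem_insert.1 he' with rfl | h
      · exact hc F hF'
      · exact hp F hF' e' h
    · push Not at hc
      obtain ⟨F0, h0, hne⟩ := hc
      let a : G := p e.1 * e.2.1⁻¹ * (p e.2.2)⁻¹
      let p' : K → G := fun k => if F0 k = F0 e.2.2 then a * p k else p k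
      refine ⟨p', fun F hF => ?_⟩
      have key : ∀ e' ∈ E, F e'.1 = F e'.2.2 := by
        apply hp
        intro e' he' h1
        refine hF e' (Finset.mem_insert_of_mem he') ?_
        have := h0 e' he' h1
        simp only [p', this]
        split_ifs
        · calc a * p e'.2.2 * e'.2.1 * (a * p e'.1)⁻¹
              = a * (p e'.2.2 * e'.2.1 * (p e'.1)⁻¹) * a⁻¹ := by group
            _ = 1 := by rw [h1]; group
        · exact h1
      intro e' he'
      rcases Finset.mem_insert.1 he' with rfl | h
      · refine hF _ he' ?_
        simp only [p', if_neg hne, if_true, a]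
        group
      · exact key e' h

open AddMonoidAlgebra in
lemma refine_solv {G K : Type} {n m : ℕ} {V : Set (List (Ltr G n))} (hfin : V.Finite)
    (hV : SufClosed V) {W : Fin m → List (Ltr G n)} {κ : List (Ltr G n) → K}
    (det : ∀ a l l', a :: l ∈ V → a :: l' ∈ V → κ l = κ l' → κ (a :: l) = κ (a :: l'))
    {f : List (Ltr G n) → ℚ}
    (fdet : ∀ a l l', a :: l ∈ V → a :: l' ∈ V → κ l = κ l' →
      f (a :: l) - f l = f (a :: l') - f l')
    (hs : Solv V W κ) : Solv V W (fun l => (κ l, f l)) := by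
  classical
  intro b'
  by_contra hcon
  let κ' : List (Ltr G n) → K × ℚ := fun l => (κ l, f l)
  let C := {σ : List (Ltr G n) × Fin m // W σ.2 ++ σ.1 ∈ V}
  have hC : Finite C := by
    have := hfin.to_subtype
    refine Finite.of_injective (β := V × Fin m) (fun σ => (⟨_, σ.2⟩, σ.1.2)) ?_
    rintro ⟨⟨q, i⟩, h⟩ ⟨⟨q', i'⟩, h'⟩ heq
    simp only [Prod.mk.injEq, Subtype.mk.injEq] at heq
    obtain ⟨h1, rfl⟩ := heq
    have := List.append_cancel_left h1
    subst this; rfl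
  have := Fintype.ofFinite C
  let cl : C → K × Fin m := fun σ => (κ σ.1.1, σ.1.2)
  let S := Set.range cl
  have : Finite S := Set.finite_range cl
  have := Fintype.ofFinite S
  have hrep : ∀ s : S, ∃ σ, cl σ = s := fun s => s.2
  choose rep hrep using hrep
  let cls : C → S := fun σ => ⟨cl σ, σ, rfl⟩
  have hy : ∀ t : S, ∃ y : K → Fin n → ℚ, ∀ i q, W i ++ q ∈ V →
      psum (xst κ y) (W i) q = if ((κ q, i) : K × Fin m) = t then 1 else 0 :=
    fun t => hs fun k i => if ((k, i) : K × Fin m) = t then 1 else 0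
  choose y hy using hy
  let Y : S → (K × ℚ) → Fin n → AddMonoidAlgebra ℚ ℚ := fun t k j => single k.2 (y t k.1 j)
  let E : (K × ℚ → Fin n → AddMonoidAlgebra ℚ ℚ) → C → AddMonoidAlgebra ℚ ℚ := fun Y σ =>
    psum (xst κ' Y) (W σ.1.2) σ.1.1
  let M : Matrix S S (AddMonoidAlgebra ℚ ℚ) := fun s t => E (Y t) (rep s)
  let ε : AddMonoidAlgebra ℚ ℚ →ₐ[ℚ] ℚ := AddMonoidAlgebra.lift ℚ ℚ ℚ 1
  have hε : ∀ r x, ε (single r x) = x := by intro r x; simp [ε]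
  have hM : M.det ≠ 0 := by
    intro h0
    have h1 : ε M.det = 1 := by
      rw [AlgHom.map_det]
      have : ε.mapMatrix M = 1 := by
        ext s t
        have h2 : ε (M s t) = psum (xst κ (y t)) (W (rep s).1.2) (rep s).1.1 := by
          have := map_psum_xst (ε : AddMonoidAlgebra ℚ ℚ →+* ℚ).toAddMonoidHom κ' (Y t)
            (W (rep s).1.2) (rep s).1.1
          refine Eq.trans this ?_
          congr 1
          funext l a
          rcases a with g | ⟨j, _ | _⟩ <;> simp [xst, κ', Y, hε]
        rw [AlgHom.mapMatrix_apply, Matrix.map_apply, h2, hy t _ _ (rep s).2]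
        have : ((κ (rep s).1.1, (rep s).1.2) : K × Fin m) = s := hrep s
        rw [this, Matrix.one_apply]
        simp [Subtype.ext_iff]
      rw [this, Matrix.det_one]
    rw [h0, map_zero] at h1
    exact zero_ne_one h1
  have fdet' : ∀ (q q' : List (Ltr G n)), κ q = κ q' → ∀ u, u ++ q ∈ V → u ++ q' ∈ V →
      f (u ++ q) - f q = f (u ++ q') - f q' := by
    intro q q' h u
    induction u with
    | nil => simp
    | cons a u ih =>
      intro h1 h2
      have e1 := ih (hV _ _ h1) (hV _ _ h2)
      have e2 := fdet a (u ++ q) (u ++ q') h1 h2 (transport hV det h u (hV _ _ h1) (hV _ _ h2))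
      simp only [List.cons_append]
      linarith
  have htr : ∀ t (q q' : List (Ltr G n)), κ q = κ q' → ∀ u, u ++ q ∈ V → u ++ q' ∈ V →
      psum (xst κ' (Y t)) u q = single (f q - f q') 1 * psum (xst κ' (Y t)) u q' := by
    intro t q q' h u
    induction u with
    | nil => simp [psum]
    | cons a u ih =>
      intro h1 h2
      have i1 := ih (hV _ _ h1) (hV _ _ h2)
      have e0 := transport hV det h u (hV _ _ h1) (hV _ _ h2)
      have e1 := fdet' q q' h u (hV _ _ h1) (hV _ _ h2)
      have e3 := transport hV det h _ h1 h2
      have e4 := fdet' q q' h _ h1 h2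
      simp only [psum, i1, mul_add]
      congr 1
      rcases a with g | ⟨j, _ | _⟩
      · simp [xst]
      · simp only [xst, κ', Y, mul_neg, single_mul_single, one_mul]
        simp only [List.cons_append] at e3 e4
        rw [e3, show f (Sum.inr (j, false) :: (u ++ q)) =
          f q - f q' + f (Sum.inr (j, false) :: (u ++ q')) by linarith]
      · simp only [xst, κ', Y, single_mul_single, one_mul]
        rw [e0, show f (u ++ q) = f q - f q' + f (u ++ q') by linarith]
  let Λ : (K × ℚ → Fin n → ℚ) →ₗ[ℚ] (C → ℚ) :=
    { toFun := fun y σ => psum (xst κ' y) (W σ.1.2) σ.1.1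
      map_add' := by
        intro y1 y2
        funext σ
        rw [Pi.add_apply, ← psum_add]
        congr 1
        funext l a
        rcases a with g | ⟨j, _ | _⟩ <;> simp [xst]
        ring
      map_smul' := by
        intro c y1
        funext σ
        have := map_psum_xst (AddMonoidHom.mulLeft c) κ' y1 (W σ.1.2) σ.1.1
        exact this.symm }
  let bb : C → ℚ := fun σ => b' (κ' σ.1.1) σ.1.2
  have hnot : bb ∉ LinearMap.range Λ := by
    rintro ⟨z, hz⟩
    exact hcon ⟨z, fun i q h => congrFun hz ⟨(q, i), h⟩⟩
  obtain ⟨φ, hφ, hle⟩ := Submodule.exists_le_ker_of_notMem hnot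
  let v : C → ℚ := fun σ => φ (Pi.single σ 1)
  have hv : ∀ x : C → ℚ, φ x = ∑ σ, x σ * v σ := by
    intro x
    rw [LinearMap.pi_apply_eq_sum_univ φ x]
    refine Finset.sum_congr rfl fun σ _ => ?_
    rw [smul_eq_mul]; congr 2; funext τ; simp [Pi.single_apply, eq_comm]
  have hv0 : ∀ z : K × ℚ → Fin n → ℚ, ∑ σ : C, psum (xst κ' z) (W σ.1.2) σ.1.1 * v σ = 0 := by
    intro z
    rw [← hv (fun σ : C => psum (xst κ' z) (W σ.1.2) σ.1.1)]
    exact hle ⟨z, rfl⟩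
  have hvR : ∀ Z, ∑ σ : C, E Z σ * single 0 (v σ) = 0 := by
    intro Z
    ext r
    let T : AddMonoidAlgebra ℚ ℚ →+ ℚ :=
      { toFun := fun x => x.coeff r, map_zero' := by simp, map_add' := by intros; simp }
    have h1 := hv0 (fun k j => T (Z k j))
    simp only [← map_psum_xst T] at h1
    simp only [coeff_sum, Finsupp.finsetSum_apply, coeff_zero, Finsupp.zero_apply]
    refine Eq.trans (Finset.sum_congr rfl fun σ _ => ?_) h1
    simp [T, E]
    exact Or.inl rfl
  let U : S → AddMonoidAlgebra ℚ ℚ := fun s =>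
    ∑ σ : C, if cls σ = s then single (f σ.1.1 - f (rep s).1.1) (v σ) else 0
  have hU : U = 0 := by
    apply Matrix.eq_zero_of_vecMul_eq_zero hM
    funext t
    rw [Pi.zero_apply, ← hvR (Y t)]
    simp only [Matrix.vecMul, dotProduct, U, Finset.sum_mul]
    rw [Finset.sum_comm]
    refine Finset.sum_congr rfl fun σ _ => ?_
    simp only [ite_mul, zero_mul, Finset.sum_ite_eq, Finset.mem_univ, if_true]
    have hr : cl (rep (cls σ)) = cl σ := hrep (cls σ)
    have hr1 : κ (rep (cls σ)).1.1 = κ σ.1.1 := congrArg (fun z : K × Fin m => z.1) hr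
    have hr2 : (rep (cls σ)).1.2 = σ.1.2 := congrArg (fun z : K × Fin m => z.2) hr
    have hmem := (rep (cls σ)).2
    have e : E (Y t) σ = single (f σ.1.1 - f (rep (cls σ)).1.1) 1 * M (cls σ) t := by
      simp only [E, M]
      rw [hr2] at hmem ⊢
      exact htr t _ _ hr1.symm _ σ.2 hmem
    rw [e, mul_right_comm, single_mul_single]
    simp
  apply hφ
  rw [hv]
  have hfib : ∀ s : S, ∑ σ : C, (if cls σ = s then bb σ * v σ else 0) = 0 := by
    intro s
    let B : ℚ → ℚ := fun r => b' (s.1.1, r + f (rep s).1.1) s.1.2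
    let T : AddMonoidAlgebra ℚ ℚ →+ ℚ :=
      (Finsupp.liftAddHom (fun r => AddMonoidHom.mulLeft (B r))).comp
        (coeffAddEquiv : AddMonoidAlgebra ℚ ℚ ≃+ _).toAddMonoidHom
    have hT : ∀ r x, T (single r x) = B r * x := by
      intro r x
      simp [T, coeffAddEquiv]
    have h0 : T (U s) = 0 := by rw [hU]; simp
    refine Eq.trans ?_ h0
    simp only [U, map_sum]
    refine Finset.sum_congr rfl fun σ _ => ?_
    split_ifs with h
    · rw [hT]
      subst h
      simp [B, bb, κ', cls, cl]
    · simp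
  have : ∑ s : S, ∑ σ : C, (if cls σ = s then bb σ * v σ else 0) = 0 := by simp [hfib]
  rw [Finset.sum_comm] at this
  simpa using this

/-- The cochain `gst + xst`. -/
def coch {G K : Type} [Group G] {n : ℕ} (κ : List (Ltr G n) → K) (p : K → G) (ψ : G → ℚ)
    (y : K → Fin n → ℚ) (l : List (Ltr G n)) (a : Ltr G n) : ℚ :=
  gst κ p ψ l a + xst κ y l a

lemma coch_det {G K : Type} [Group G] {n m : ℕ} {V : Set (List (Ltr G n))}
    {W : Fin m → List (Ltr G n)} {κ : List (Ltr G n) → K} (hA : Adm V W κ)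
    (p : K → G) (ψ : G → ℚ) (y : K → Fin n → ℚ) (a l l') (h1 : a :: l ∈ V) (h2 : a :: l' ∈ V)
    (h : κ l = κ l') : coch κ p ψ y l a = coch κ p ψ y l' a := by
  have h3 := hA.det a l l' h1 h2 h
  rcases a with g | ⟨j, _ | _⟩ <;> simp [coch, gst, xst, h, h3]

lemma gst_psum_det {G K : Type} [Group G] {n m : ℕ} {V : Set (List (Ltr G n))}
    (hV : SufClosed V)
    {W : Fin m → List (Ltr G n)} {κ : List (Ltr G n) → K} (hA : Adm V W κ)
    (p : K → G) (ψ : G → ℚ) {q q' : List (Ltr G n)} (h : κ q = κ q') :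
    ∀ u, u ++ q ∈ V → u ++ q' ∈ V → psum (gst κ p ψ) u q = psum (gst κ p ψ) u q'
  | [], _, _ => rfl
  | a :: u, h1, h2 => by
    have e1 := gst_psum_det hV hA p ψ h u (hV _ _ h1) (hV _ _ h2)
    have e2 := transport hV hA.det h u (hV _ _ h1) (hV _ _ h2)
    have e3 := transport hV hA.det h (a :: u) h1 h2
    simp only [List.cons_append] at e3
    rcases a with g | j <;> simp [psum, gst, e1, e2, e3]

lemma refine_adm {G K : Type} [Group G] {n m : ℕ} {V : Set (List (Ltr G n))}
    (hV : SufClosed V)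
    {W : Fin m → List (Ltr G n)} {κ : List (Ltr G n) → K} (hA : Adm V W κ)
    (p : K → G) (ψ : G → ℚ) (y : K → Fin n → ℚ)
    (H : Subgroup G) (hψ1 : ψ 1 = 0) (hψ : ∀ a ∈ H, ∀ b ∈ H, ψ (a * b) = ψ a + ψ b)
    (hH : ∀ g l, .inl g :: l ∈ V → p (κ (.inl g :: l)) * g * (p (κ l))⁻¹ ∈ H)
    (hy : ∀ i q, W i ++ q ∈ V → psum (coch κ p ψ y) (W i) q = 0) :
    Adm V W (fun l => (κ l, psum (coch κ p ψ y) l [])) where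
  det a l l' h1 h2 h := by
    simp only [Prod.mk.injEq] at h
    have e1 := hA.det a l l' h1 h2 h.1
    have e2 := coch_det hA p ψ y a l l' h1 h2 h.1
    simp [psum, h, e1, e2]
  inv j b l l' h1 h2 h := by
    simp only [Prod.mk.injEq] at h
    have e1 := hA.inv j b l l' h1 h2 h.1
    have e2 := h.2
    cases b
    · simp only [Bool.not_false] at e1 ⊢
      simp [psum, coch, gst, xst, h.1, e1] at e2 ⊢
      linarith
    · simp only [Bool.not_true] at e1 ⊢
      simp [psum, coch, gst, xst, h.1, e1] at e2 ⊢
      linarith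
  one l h := by
    have e1 := hA.one l h
    simp [psum, coch, gst, xst, e1, hψ1]
  mul h g l h1 h2 := by
    have e1 := hA.mul h g l h1 h2
    simp only [Prod.mk.injEq, e1, true_and]
    simp only [psum, coch, gst, xst, List.append_nil, add_zero, List.cons_append]
    rw [add_assoc, add_comm (ψ _) (ψ _), ← hψ _ (hH _ _ h1) _ (hH _ _ (hV _ _ h1)), e1]
    congr 2
    group
  cell i q h := by
    have e1 := hA.cell i q h
    have e2 := hy i q h
    simp only [Prod.mk.injEq, e1, true_and]
    rw [psum_append, List.append_nil, e2, zero_add]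

lemma step {G : Type} [Group G] (hG : LocallyIndicable G) {K : Type} {n m : ℕ}
    {V : Set (List (Ltr G n))} (hfin : V.Finite) (hV : SufClosed V)
    {W : Fin m → List (Ltr G n)} {κ : List (Ltr G n) → K} (hA : Adm V W κ)
    (hS : Solv V W κ) :
    (∀ g l, .inl g :: l ∈ V → κ (.inl g :: l) = κ l → g = 1) ∨
    ∃ f : List (Ltr G n) → ℚ, Adm V W (fun l => (κ l, f l)) ∧ Solv V W (fun l => (κ l, f l)) ∧
      (κ '' V).ncard < ((fun l => (κ l, f l)) '' V).ncard := by
  classical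
  have hX : {x : List (Ltr G n) × G | .inl x.2 :: x.1 ∈ V}.Finite := by
    refine Set.Finite.preimage (f := fun x : List (Ltr G n) × G => (Sum.inl x.2 :: x.1))
      ?_ hfin
    rintro ⟨l, g⟩ _ ⟨l', g'⟩ _ h
    simp at h
    simp [h]
  obtain ⟨p, hp⟩ := exists_potential
    (hX.toFinset.image fun x => (κ x.1, x.2, κ (.inl x.2 :: x.1)))
  let gen : List (Ltr G n) × G → G := fun x => p (κ (.inl x.2 :: x.1)) * x.2 * (p (κ x.1))⁻¹
  let H : Subgroup G := Subgroup.closure (gen '' {x | .inl x.2 :: x.1 ∈ V})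
  have hH : ∀ g l, .inl g :: l ∈ V → p (κ (.inl g :: l)) * g * (p (κ l))⁻¹ ∈ H :=
    fun g l h => Subgroup.subset_closure ⟨(l, g), h, rfl⟩
  have hFG : H.FG := (Subgroup.fg_iff _).2 ⟨_, rfl, hX.image _⟩
  by_cases hbot : H = ⊥
  · left
    intro g l h hk
    have h1 := hH g l h
    rw [hbot, Subgroup.mem_bot, hk] at h1
    exact conj_eq_one_iff.1 h1
  right
  obtain ⟨φ, hφ⟩ := hG H hbot hFG
  let ψ : G → ℚ := fun x => if h : x ∈ H then ((Multiplicative.toAdd (φ ⟨x, h⟩) : ℤ) : ℚ) else 0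
  have hψm : ∀ x : H, ψ x = ((Multiplicative.toAdd (φ x) : ℤ) : ℚ) := by
    intro x; simp [ψ]
  have hψ1 : ψ 1 = 0 := by
    have := hψm 1
    simpa using this
  have hψ : ∀ a ∈ H, ∀ b ∈ H, ψ (a * b) = ψ a + ψ b := by
    intro a ha b hb
    have := hψm (⟨a, ha⟩ * ⟨b, hb⟩)
    rw [map_mul, toAdd_mul, Int.cast_add, ← hψm, ← hψm] at this
    exact this
  let b : K → Fin m → ℚ := fun k i =>
    if h : ∃ q, W i ++ q ∈ V ∧ κ q = k then - psum (gst κ p ψ) (W i) h.choose else 0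
  obtain ⟨y, hy⟩ := hS b
  have hy' : ∀ i q, W i ++ q ∈ V → psum (coch κ p ψ y) (W i) q = 0 := by
    intro i q h
    have h1 : ∃ q', W i ++ q' ∈ V ∧ κ q' = κ q := ⟨q, h, rfl⟩
    have h2 := psum_add (gst κ p ψ) (xst κ y) (W i) q
    have h3 := hy i q h
    have h4 : b (κ q) i = - psum (gst κ p ψ) (W i) q := by
      simp only [b, dif_pos h1]
      rw [gst_psum_det hV hA p ψ h1.choose_spec.2 (W i) h1.choose_spec.1 h]
    have h5 : psum (coch κ p ψ y) (W i) q = psum (gst κ p ψ) (W i) q + psum (xst κ y) (W i) q := h2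
    rw [h5, h3, h4]; ring
  refine ⟨fun l => psum (coch κ p ψ y) l [], refine_adm hV hA p ψ y H hψ1 hψ hH hy', ?_, ?_⟩
  · refine refine_solv hfin hV hA.det ?_ hS
    intro a l l' h1 h2 h
    have := coch_det hA p ψ y a l l' h1 h2 h
    simp [psum, this]
  · by_contra hlt
    push Not at hlt
    set f : List (Ltr G n) → ℚ := fun l => psum (coch κ p ψ y) l [] with hf
    have himg : κ '' V = Prod.fst '' ((fun l => (κ l, f l)) '' V) := by
      rw [← Set.image_comp]; rfl
    have hfin' : ((fun l => (κ l, f l)) '' V).Finite := hfin.image _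
    have hinj : Set.InjOn Prod.fst ((fun l => (κ l, f l)) '' V) := by
      apply Set.injOn_of_ncard_image_eq _ hfin'
      rw [← himg]
      refine le_antisymm ?_ hlt
      rw [himg]
      exact Set.ncard_image_le hfin'
    have hconst : ∀ l ∈ V, ∀ l' ∈ V, κ l = κ l' → f l = f l' := by
      intro l hl l' hl' h
      have := hinj ⟨l, hl, rfl⟩ ⟨l', hl', rfl⟩ h
      exact congrArg Prod.snd this
    let F : K → ℚ := fun k => if h : ∃ l, l ∈ V ∧ κ l = k then f h.choose else 0
    have hF : ∀ l ∈ V, F (κ l) = f l := by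
      intro l hl
      have h : ∃ l', l' ∈ V ∧ κ l' = κ l := ⟨l, hl, rfl⟩
      simp only [F, dif_pos h]
      exact hconst _ h.choose_spec.1 _ hl h.choose_spec.2
    have hFs : ∀ g l, .inl g :: l ∈ V →
        ψ (p (κ (.inl g :: l)) * g * (p (κ l))⁻¹) = F (κ (.inl g :: l)) - F (κ l) := by
      intro g l h
      rw [hF _ h, hF _ (hV _ _ h)]
      simp [hf, psum, coch, gst, xst]
    have hall := hp F (by
      intro e he h1
      obtain ⟨x, hx, rfl⟩ := Finset.mem_image.1 he
      have hx' : .inl x.2 :: x.1 ∈ V := by simpa using hx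
      have := hFs x.2 x.1 hx'
      simp only at h1
      rw [h1, hψ1] at this
      simp only
      linarith)
    have hz : ∀ x : H, φ x = 1 := by
      intro x
      have hx : ψ x = 0 := by
        have hcl : ∀ x (hx : x ∈ H), ψ x = 0 := by
          intro x hx
          induction hx using Subgroup.closure_induction with
          | mem x hx =>
            obtain ⟨z, hz, rfl⟩ := hx
            have h1 := hall (κ z.1, z.2, κ (.inl z.2 :: z.1))
              (Finset.mem_image.2 ⟨z, by simpa using hz, rfl⟩)
            have h2 := hFs z.2 z.1 hz
            simp only at h1
            rw [← h1, sub_self] at h2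
            exact h2
          | one => exact hψ1
          | mul x y hx hy h1 h2 => rw [hψ x hx y hy, h1, h2, add_zero]
          | inv x hx h1 =>
            have := hψ x hx x⁻¹ (H.inv_mem hx)
            rw [mul_inv_cancel, hψ1, h1] at this
            linarith
        exact hcl x x.2
      rw [hψm] at hx
      exact Multiplicative.toAdd.injective (by exact_mod_cast hx)
    obtain ⟨x, hx⟩ := hφ (Multiplicative.ofAdd 1)
    rw [hz] at hx
    have := congrArg Multiplicative.toAdd hx
    simp at this

lemma main_ind {G : Type} [Group G] (hG : LocallyIndicable G) {n m : ℕ}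
    {V : Set (List (Ltr G n))} (hfin : V.Finite) (hV : SufClosed V)
    {W : Fin m → List (Ltr G n)} {g : G} (hg : [.inl g] ∈ V)
    (hend : ∀ (K : Type) (κ : List (Ltr G n) → K), Adm V W κ → κ [.inl g] = κ []) :
    ∀ (d : ℕ) (K : Type) (κ : List (Ltr G n) → K), Adm V W κ → Solv V W κ →
      V.ncard ≤ (κ '' V).ncard + d → g = 1 := by
  intro d
  induction d with
  | zero =>
    intro K κ hA hS hd
    rcases step hG hfin hV hA hS with h | ⟨f, _, _, h⟩
    · exact h g [] hg (hend K κ hA)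
    · have := Set.ncard_image_le (f := fun l => (κ l, f l)) hfin
      omega
  | succ d ih =>
    intro K κ hA hS hd
    rcases step hG hfin hV hA hS with h | ⟨f, hA', hS', h⟩
    · exact h g [] hg (hend K κ hA)
    · exact ih _ _ hA' hS' (by omega)

noncomputable def ev (G : Type) [Group G] (n : ℕ) :
    FreeMonoid (Ltr G n) →* Coprod G (FreeGroup (Fin n)) :=
  FreeMonoid.lift (Sum.elim (fun g => Coprod.inl g)
    (fun jb => Coprod.inr (if jb.2 then FreeGroup.of jb.1 else (FreeGroup.of jb.1)⁻¹)))

lemma ev_surj (G : Type) [Group G] (n : ℕ) : Function.Surjective (ev G n) := by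
  intro x
  change x ∈ MonoidHom.mrange (ev G n)
  induction x using Coprod.induction_on with
  | inl g => exact ⟨FreeMonoid.of (.inl g), by simp [ev]⟩
  | inr w =>
    induction w using FreeGroup.induction_on with
    | C1 => rw [map_one]; exact one_mem _
    | of j => exact ⟨FreeMonoid.of (.inr (j, true)), by simp [ev]⟩
    | inv_of j _ => exact ⟨FreeMonoid.of (.inr (j, false)), by simp [ev]⟩
    | mul x y hx hy => rw [map_mul]; exact mul_mem hx hy
  | mul x y hx hy => exact mul_mem hx hy

lemma exponentSum_mul {G : Type} [Group G] {n : ℕ} (j : Fin n)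
    (x y : Coprod G (FreeGroup (Fin n))) :
    exponentSum j (x * y) = exponentSum j x + exponentSum j y := by
  simp [exponentSum]

lemma psum_unit {G : Type} [Group G] {n : ℕ} (y : Unit → Fin n → ℚ) (q : List (Ltr G n)) :
    ∀ u : List (Ltr G n), psum (xst (fun _ => ()) y) u q =
      ∑ j, (exponentSum j (ev G n (FreeMonoid.ofList u)) : ℚ) * y () j
  | [] => by simp [psum, exponentSum]
  | a :: u => by
    have h : ∀ j, exponentSum j (ev G n (FreeMonoid.ofList (a :: u))) =
        exponentSum j (ev G n (FreeMonoid.of a)) + exponentSum j (ev G n (FreeMonoid.ofList u)) := by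
      intro j
      rw [FreeMonoid.ofList_cons, map_mul, exponentSum_mul]
    simp only [psum, psum_unit y q u, h, Int.cast_add, add_mul, Finset.sum_add_distrib]
    rw [add_comm]
    congr 1
    rcases a with g | ⟨j, _ | _⟩
    · simp [xst, ev, exponentSum]
    · simp [xst, ev, exponentSum]
    · simp [xst, ev, exponentSum]

lemma base_solv {G : Type} [Group G] {n m : ℕ} (V : Set (List (Ltr G n)))
    (W : Fin m → List (Ltr G n)) (w : Fin m → Coprod G (FreeGroup (Fin n)))
    (hW : ∀ i, ev G n (FreeMonoid.ofList (W i)) = w i)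
    (hrank : Matrix.rank (Matrix.of fun i j => exponentSum j (w i)) = m) :
    Solv V W (fun _ => ()) := by
  classical
  set A : Matrix (Fin m) (Fin n) ℤ := Matrix.of fun i j => exponentSum j (w i) with hAdef
  have htors : ∀ i : Fin m, ∃ (k : ℤ) (z : Fin n → ℤ), k ≠ 0 ∧ A.mulVec z = k • Pi.single i 1 := by
    intro i
    have h1 := Submodule.finrank_quotient_add_finrank (LinearMap.range A.mulVecLin)
    have h2 : Module.finrank ℤ (LinearMap.range A.mulVecLin) = m := hrank
    rw [h2, Module.finrank_fin_fun] at h1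
    have h3 : Module.finrank ℤ ((Fin m → ℤ) ⧸ LinearMap.range A.mulVecLin) = 0 := by omega
    rw [Module.finrank_eq_zero_iff] at h3
    obtain ⟨k, hk, hk'⟩ := h3 (Submodule.Quotient.mk (Pi.single i 1))
    rw [← Submodule.Quotient.mk_smul, Submodule.Quotient.mk_eq_zero] at hk'
    obtain ⟨z, hz⟩ := hk'
    exact ⟨k, z, hk, hz⟩
  choose k z hk hz using htors
  intro b
  refine ⟨fun _ j => ∑ i, b () i / k i * z i j, fun i q _ => ?_⟩
  rw [psum_unit, hW]
  simp only [Finset.mul_sum]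
  rw [Finset.sum_comm]
  have h4 : ∀ i', ∑ j, (exponentSum j (w i) : ℚ) * (b () i' / k i' * z i' j) =
      if i = i' then b () i' else 0 := by
    intro i'
    have h5 := congrFun (hz i') i
    have h6 : ∑ j, exponentSum j (w i) * z i' j = if i = i' then k i' else 0 := by
      simpa [Matrix.mulVec, dotProduct, hAdef, Pi.single_apply] using h5
    have h7 : ∑ j, (exponentSum j (w i) : ℚ) * (z i' j : ℚ) = if i = i' then (k i' : ℚ) else 0 := by
      exact_mod_cast congrArg (Int.cast : ℤ → ℚ) h6
    have h8 : ∀ j, (exponentSum j (w i) : ℚ) * (b () i' / k i' * z i' j) =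
        b () i' / k i' * ((exponentSum j (w i) : ℚ) * (z i' j : ℚ)) := fun j => by ring
    simp only [h8, ← Finset.mul_sum, h7]
    have : (k i' : ℚ) ≠ 0 := by exact_mod_cast hk i'
    split_ifs
    · field_simp
    · simp
  simp [h4]

/-- Words identified at every prefix by all admissible functions on large enough sets. -/
def Eqv {G : Type} [Group G] {n m : ℕ} (W : Fin m → List (Ltr G n)) (L L' : List (Ltr G n)) :
    Prop :=
  ∀ q, ∃ V0 : Set (List (Ltr G n)), V0.Finite ∧ ∀ V, V0 ⊆ V → SufClosed V →
    ∀ (K : Type) (κ : List (Ltr G n) → K), Adm V W κ → κ (L ++ q) = κ (L' ++ q)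

def eqvCon {G : Type} [Group G] {n m : ℕ} (W : Fin m → List (Ltr G n)) :
    Con (FreeMonoid (Ltr G n)) where
  r L L' := Eqv W L.toList L'.toList
  iseqv :=
    { refl := fun L q => ⟨∅, Set.finite_empty, fun _ _ _ _ _ _ => rfl⟩
      symm := fun h q => by
        obtain ⟨V0, hf, h⟩ := h q
        exact ⟨V0, hf, fun V h1 h2 K κ hA => (h V h1 h2 K κ hA).symm⟩
      trans := fun h h' q => by
        obtain ⟨V0, hf, h⟩ := h q
        obtain ⟨V1, hf1, h'⟩ := h' q
        exact ⟨V0 ∪ V1, hf.union hf1, fun V h1 h2 K κ hA =>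
          (h V (Set.subset_union_left.trans h1) h2 K κ hA).trans
            (h' V (Set.subset_union_right.trans h1) h2 K κ hA)⟩ }
  mul' := by
    intro L2 L2' L1 L1' h2 h1 q
    obtain ⟨V1, hf1, h1⟩ := h1 q
    obtain ⟨V2, hf2, h2⟩ := h2 (L1'.toList ++ q)
    refine ⟨V1 ∪ V2 ∪ {L2.toList ++ (L1.toList ++ q), L2.toList ++ (L1'.toList ++ q)},
      (hf1.union hf2).union (by simp), fun V hsub hV K κ hA => ?_⟩
    have e1 := h1 V (fun x hx => hsub (Or.inl (Or.inl hx))) hV K κ hA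
    have e2 := h2 V (fun x hx => hsub (Or.inl (Or.inr hx))) hV K κ hA
    have e3 := transport hV hA.det e1 L2.toList (hsub (Or.inr (by simp)))
      (hsub (Or.inr (by simp)))
    simp only [FreeMonoid.toList_mul, List.append_assoc]
    exact e3.trans e2

lemma eqv_of_mem {G : Type} [Group G] {n m : ℕ} (W : Fin m → List (Ltr G n))
    (w : Fin m → Coprod G (FreeGroup (Fin n)))
    (hW : ∀ i, ev G n (FreeMonoid.ofList (W i)) = w i) (g : G)
    (hg : Coprod.inl g ∈ Subgroup.normalClosure (Set.range w)) : Eqv W [.inl g] [] := by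
  let c := eqvCon W
  let π : FreeMonoid (Ltr G n) →* c.Quotient := c.mk'
  have hπ : ∀ L L' : FreeMonoid (Ltr G n), π L = π L' ↔ Eqv W L.toList L'.toList :=
    fun L L' => Con.eq c
  let iG : G →* c.Quotient :=
    { toFun := fun g => π (FreeMonoid.of (.inl g))
      map_one' := by
        rw [← map_one π, hπ]
        intro q
        refine ⟨{.inl (1 : G) :: q}, Set.finite_singleton _, fun V h hV K κ hA => ?_⟩
        exact hA.one q (h rfl)
      map_mul' := by
        intro a b
        rw [← map_mul π, hπ]
        intro q
        refine ⟨{.inl a :: .inl b :: q, .inl (a * b) :: q}, by simp, fun V h hV K κ hA => ?_⟩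
        exact (hA.mul a b q (h (by simp)) (h (by simp))).symm }
  have hinv : ∀ j b, π (FreeMonoid.of (.inr (j, !b))) * π (FreeMonoid.of (.inr (j, b))) = 1 := by
    intro j b
    rw [← map_mul π, ← map_one π, hπ]
    intro q
    refine ⟨{.inr (j, !b) :: .inr (j, b) :: q}, by simp, fun V h hV K κ hA => ?_⟩
    have h0 : .inr (j, !b) :: .inr (j, b) :: q ∈ V := h rfl
    exact hA.inv j b q (.inr (j, b) :: q) (hV _ _ h0) h0 rfl
  let ux : Fin n → c.Quotientˣ := fun j =>
    ⟨π (FreeMonoid.of (.inr (j, true))), π (FreeMonoid.of (.inr (j, false))),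
      hinv j false, hinv j true⟩
  let Φ : Coprod G (FreeGroup (Fin n)) →* c.Quotientˣ :=
    Coprod.lift iG.toHomUnits (FreeGroup.lift ux)
  have hΦ : (Units.coeHom _).comp (Φ.comp (ev G n)) = π := by
    apply FreeMonoid.hom_eq
    rintro (g | ⟨j, _ | _⟩)
    · simp [Φ, ev, iG]
    · simp [Φ, ev, ux]
    · simp [Φ, ev, ux]
  have hk : Subgroup.normalClosure (Set.range w) ≤ Φ.ker := by
    apply Subgroup.normalClosure_le_normal
    rintro _ ⟨i, rfl⟩
    rw [SetLike.mem_coe, MonoidHom.mem_ker, ← hW]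
    apply Units.ext
    have : ((Units.coeHom _).comp (Φ.comp (ev G n))) (FreeMonoid.ofList (W i)) = 1 := by
      rw [hΦ, ← map_one π, hπ]
      intro q
      exact ⟨{W i ++ q}, by simp, fun V h hV K κ hA => hA.cell i q (h rfl)⟩
    exact this
  have h1 : Φ (Coprod.inl g) = 1 := hk hg
  have h2 : π (FreeMonoid.of (.inl g)) = 1 := by
    have h3 := congrArg Units.val h1
    simpa [Φ, iG] using h3
  rw [← map_one π, hπ] at h2
  exact h2

/-- The suffix closure of a finite set of words is finite. -/
lemma exists_sufClosed {L : Type} (V0 : Set (List L)) (h : V0.Finite) :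
    ∃ V, V.Finite ∧ V0 ⊆ V ∧ SufClosed V := by
  refine ⟨⋃ l ∈ V0, {x | x <:+ l}, ?_, ?_, ?_⟩
  · refine h.biUnion fun l _ => ?_
    refine (List.finite_toSet l.tails).subset ?_
    intro x hx
    simpa using hx
  · intro l hl
    simp only [Set.mem_iUnion]
    exact ⟨l, hl, List.suffix_refl l⟩
  · intro a l hl
    simp only [Set.mem_iUnion] at hl ⊢
    obtain ⟨x, hx, hs⟩ := hl
    exact ⟨x, hx, (List.suffix_cons a l).trans hs⟩

lemma trivial_of_mem {G : Type} [Group G]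
    (hG : LocallyIndicable G) (n m : ℕ)
    (w : Fin m → Coprod G (FreeGroup (Fin n)))
    (hrank : Matrix.rank (Matrix.of fun i j => exponentSum j (w i)) = m) (g : G)
    (hg : Coprod.inl g ∈ Subgroup.normalClosure (Set.range w)) : g = 1 := by
  choose W hW using fun i => ev_surj G n (w i)
  obtain ⟨V0, hf, hV0⟩ := eqv_of_mem (fun i => (W i).toList) w hW g hg []
  obtain ⟨V, hfin, hsub, hV⟩ := exists_sufClosed (V0 ∪ {[.inl g]}) (hf.union (by simp))
  refine main_ind hG hfin hV (W := fun i => (W i).toList) (hsub (Or.inr rfl)) ?_ V.ncard Unit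
    (fun _ => ()) ?_ (base_solv V _ w hW hrank) (by omega)
  · intro K κ hA
    exact hV0 V (Set.subset_union_left.trans hsub) hV K κ hA
  · constructor <;> intros <;> rfl

end Howie

/-- **Howie's theorem on independent systems of equations**: an independent system of
equations over a locally indicable group `G` has a solution over `G`; equivalently `G`
embeds canonically into `(G ∗ F(x₁,…,xₙ))/⟨⟨w₁,…,w_m⟩⟩`. -/
theorem independent_system_has_solution {G : Type} [Group G]
    (hG : LocallyIndicable G) (n m : ℕ)
    (w : Fin m → Coprod G (FreeGroup (Fin n)))
    (hrank : Matrix.rank (Matrix.of fun i j => exponentSum j (w i)) = m) :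
    (∃ (K : Type) (_ : Group K) (ι : G →* K), Function.Injective ι ∧
      ∃ g : Fin n → K, ∀ i, (Coprod.lift ι (FreeGroup.lift g)) (w i) = 1) ∧
    Function.Injective
      ((QuotientGroup.mk' (Subgroup.normalClosure (Set.range w))).comp
        (Coprod.inl : G →* Coprod G (FreeGroup (Fin n)))) := by
  have hinj : Function.Injective
      ((QuotientGroup.mk' (Subgroup.normalClosure (Set.range w))).comp
        (Coprod.inl : G →* Coprod G (FreeGroup (Fin n)))) := by
    rw [injective_iff_map_eq_one]
    intro g hg
    refine Howie.trivial_of_mem hG n m w hrank g ?_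
    exact (QuotientGroup.eq_one_iff _).1 hg
  refine ⟨⟨_, inferInstance, _, hinj,
    fun j => QuotientGroup.mk' (Subgroup.normalClosure (Set.range w))
      (Coprod.inr (FreeGroup.of j)), fun i => ?_⟩, hinj⟩
  have h : Coprod.lift ((QuotientGroup.mk' (Subgroup.normalClosure (Set.range w))).comp
        (Coprod.inl : G →* Coprod G (FreeGroup (Fin n))))
      (FreeGroup.lift fun j => QuotientGroup.mk' (Subgroup.normalClosure (Set.range w))
        (Coprod.inr (FreeGroup.of j))) =
      QuotientGroup.mk' (Subgroup.normalClosure (Set.range w)) := by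
    apply Coprod.hom_ext
    · simp
    · ext j; simp
  rw [h]
  exact (QuotientGroup.eq_one_iff _).2 (Subgroup.subset_normalClosure ⟨i, rfl⟩)
end

section
/- Let U be a locally indicable group, (V_i)_{i∈I} a family of non-trivial locally indicable groups indexed by I ⊆ ℤ, W = ∗_{i∈I} V_i, and let (r_j)_{j∈J} (J ⊆ ℤ totally ordered) be cyclically reduced elements of U ∗ W such that each r_j uses at least one factor V_k, and such that j < k implies α_{r_j} < α_{r_k} and ω_{r_j} < ω_{r_k}, where α_r (resp. ω_r) is the smallest (resp. largest) index i such that r uses V_i. If w is a non-trivial element of U ∗ W lying in the normal closure ⟨⟨r_j : j ∈ J⟩⟩ and w uses only factors V_k with α ≤ k ≤ ω, then w already lies in the normal closure of the subfamily {r_ℓ : α ≤ α_{r_ℓ} and ω_{r_ℓ} ≤ ω}. -/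
open Monoid

variable {U : Type} [Group U] {I : Set ℤ} (V : I → Type) [∀ i, Group (V i)]

/-- The subgroup `U ∗ (∗_{k ∈ s} V_k)` of `U ∗ (∗_{i ∈ I} V_i)`. -/
def factorSubgroup (s : Set I) : Subgroup (Coprod U (CoprodI V)) :=
  Subgroup.closure
    (Set.range (Coprod.inl : U →* Coprod U (CoprodI V)) ∪
      ⋃ k ∈ s, Set.range fun v : V k => Coprod.inr (CoprodI.of v))

/-- `w` uses the factor `V i` if it does not lie in the subgroup generated by `U` and
the remaining factors. -/
def UsesFactor (w : Coprod U (CoprodI V)) (i : I) : Prop :=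
  w ∉ factorSubgroup V {k | k ≠ i}

/-- `x` is a non-trivial syllable from one of the factors of `U ∗ (∗ᵢ V_i)`. -/
def IsLetter (x : Coprod U (CoprodI V)) : Prop :=
  (∃ u : U, u ≠ 1 ∧ x = Coprod.inl u) ∨
  (∃ (i : I) (v : V i), v ≠ 1 ∧ x = Coprod.inr (CoprodI.of v))

/-- Two syllables come from the same factor. -/
def SameFactor (x y : Coprod U (CoprodI V)) : Prop :=
  (∃ u u' : U, x = Coprod.inl u ∧ y = Coprod.inl u') ∨
  (∃ (i : I) (v v' : V i), x = Coprod.inr (CoprodI.of v) ∧ y = Coprod.inr (CoprodI.of v'))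

/-- `w` is cyclically reduced: it is a product of an alternating sequence of non-trivial
syllables whose first and last syllables also come from different factors. -/
def CyclicallyReducedWord (w : Coprod U (CoprodI V)) : Prop :=
  ∃ L : List (Coprod U (CoprodI V)), w = L.prod ∧ (∀ x ∈ L, IsLetter V x) ∧
    List.Chain' (fun x y => ¬ SameFactor V x y) L ∧
    (2 ≤ L.length → ∀ x y, L.head? = some x → L.getLast? = some y → ¬ SameFactor V x y)


/-! ### Locally indicable groups -/

theorem fg_map {G K : Type} [Group G] [Group K] (f : G →* K) {H : Subgroup G} (h : H.FG) :
    (H.map f).FG := by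
  rw [← Group.fg_iff_subgroup_fg] at h ⊢
  exact Group.fg_of_surjective (f := f.subgroupMap H) (f.subgroupMap_surjective H)

theorem li_of_injective {G K : Type} [Group G] [Group K] (f : G →* K)
    (hf : Function.Injective f) (hK : LocallyIndicable K) : LocallyIndicable G := by
  intro H hH hfg
  obtain ⟨g, hg⟩ := hK (H.map f)
    (by rwa [Ne, Subgroup.map_eq_bot_iff_of_injective _ hf]) (fg_map f hfg)
  exact ⟨g.comp (H.equivMapOfInjective f hf).toMonoidHom,
    hg.comp (H.equivMapOfInjective f hf).surjective⟩

theorem li_ext {N G Q : Type} [Group N] [Group G] [Group Q] (i : N →* G)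
    (hi : Function.Injective i) (f : G →* Q) (hker : f.ker ≤ i.range)
    (hN : LocallyIndicable N) (hQ : LocallyIndicable Q) : LocallyIndicable G := by
  intro H hH hfg
  by_cases h : H.map f = ⊥
  · have hle : H ≤ i.range := by
      refine le_trans ?_ hker
      rwa [Subgroup.map_eq_bot_iff] at h
    have hmap : (H.comap i).map i = H := Subgroup.map_comap_eq_self hle
    have e : H.comap i ≃* H :=
      ((H.comap i).equivMapOfInjective i hi).trans (MulEquiv.subgroupCongr hmap)
    have hfg' : (H.comap i).FG := by
      rw [← Group.fg_iff_subgroup_fg] at hfg ⊢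
      exact Group.fg_of_surjective (f := e.symm.toMonoidHom) e.symm.surjective
    have hne : H.comap i ≠ ⊥ := by
      intro h0
      rw [h0, Subgroup.map_bot] at hmap
      exact hH hmap.symm
    obtain ⟨g, hg⟩ := hN _ hne hfg'
    exact ⟨g.comp e.symm.toMonoidHom, hg.comp e.symm.surjective⟩
  · obtain ⟨g, hg⟩ := hQ _ h (fg_map f hfg)
    exact ⟨g.comp (f.subgroupMap H), hg.comp (f.subgroupMap_surjective H)⟩

theorem li_freeGroup (X : Type) : LocallyIndicable (FreeGroup X) := by
  intro H hH _
  have hne : Nonempty (IsFreeGroup.Generators H) := by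
    by_contra hem
    rw [not_nonempty_iff] at hem
    apply hH
    rw [eq_bot_iff]
    intro x hx
    have : Subsingleton H := (IsFreeGroup.toFreeGroup H).toEquiv.subsingleton
    have := Subsingleton.elim (⟨x, hx⟩ : H) 1
    simpa using congrArg Subtype.val this
  obtain ⟨y⟩ := hne
  refine ⟨IsFreeGroup.lift fun _ => Multiplicative.ofAdd 1, fun z => ?_⟩
  refine ⟨(IsFreeGroup.of y) ^ (Multiplicative.toAdd z), ?_⟩
  rw [map_zpow, IsFreeGroup.lift_of, ← ofAdd_zsmul]
  simp

theorem li_prod {A B : Type} [Group A] [Group B] (hA : LocallyIndicable A)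
    (hB : LocallyIndicable B) : LocallyIndicable (A × B) := by
  refine li_ext (MonoidHom.inl A B) (fun x y h => by simpa using h) (MonoidHom.snd A B) ?_ hA hB
  rintro ⟨a, b⟩ h
  have h' : b = 1 := h
  exact ⟨a, by simp [h']⟩

theorem li_pi {ι : Type} {A : ι → Type} [∀ i, Group (A i)] (hA : ∀ i, LocallyIndicable (A i)) :
    LocallyIndicable (∀ i, A i) := by
  intro H hH hfg
  obtain ⟨x, hx, hx1⟩ := Subgroup.ne_bot_iff_exists_ne_one.1 hH |>.imp fun x h => And.intro x.2 h
  obtain ⟨i, hi⟩ : ∃ i, (x : ∀ i, A i) i ≠ 1 := by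
    by_contra hcon
    push Not at hcon
    exact hx1 (Subtype.ext (funext hcon))
  obtain ⟨g, hg⟩ := hA i (H.map (Pi.evalMonoidHom A i)) (by
    intro h0
    rw [Subgroup.map_eq_bot_iff] at h0
    exact hi (h0 hx)) (fg_map _ hfg)
  exact ⟨g.comp ((Pi.evalMonoidHom A i).subgroupMap H),
    hg.comp ((Pi.evalMonoidHom A i).subgroupMap_surjective H)⟩

/-! ### Words over a group `H` with variables in `N` -/

/-- A word is a list of letters `(h, n, ε)`, standing for `h * e_n ^ ε`. -/
abbrev EWord (H N : Type) := List (H × N × Bool)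

/-- Evaluation of a word. -/
def ev {H N L : Type} [Group H] [Group L] (f : H →* L) (e : N → L) (l : EWord H N) : L :=
  (l.map fun x => f x.1 * cond x.2.2 (e x.2.1) (e x.2.1)⁻¹).prod

/-- The adjacency relation expressing that a word is reduced. -/
def RedRel {H N : Type} [Group H] (x y : H × N × Bool) : Prop :=
  x.2.1 = y.2.1 → y.1 = 1 → x.2.2 = y.2.2

section ev
variable {H N L : Type} [Group H] [Group L] (f : H →* L) (e : N → L)

@[simp] theorem ev_nil : ev f e [] = 1 := rfl

@[simp] theorem ev_cons (x : H × N × Bool) (l : EWord H N) :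
    ev f e (x :: l) = f x.1 * cond x.2.2 (e x.2.1) (e x.2.1)⁻¹ * ev f e l := by
  simp [ev]

@[simp] theorem ev_append (l m : EWord H N) : ev f e (l ++ m) = ev f e l * ev f e m := by
  simp [ev]

theorem map_ev {K : Type} [Group K] (g : L →* K) (l : EWord H N) :
    g (ev f e l) = ev (g.comp f) (fun n => g (e n)) l := by
  induction l with
  | nil => simp
  | cons x l ih =>
    rw [ev_cons, ev_cons, map_mul, map_mul, ih]
    rcases x with ⟨h, n, _ | _⟩ <;> simp

theorem ev_congr (e' : N → L) (l : EWord H N) (h : ∀ x ∈ l, e x.2.1 = e' x.2.1) :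
    ev f e l = ev f e' l := by
  induction l with
  | nil => simp
  | cons x l ih =>
    rw [ev_cons, ev_cons, h x (by simp), ih fun y hy => h y (by simp [hy])]

end ev

/-- Left multiplication action of `H` on the free group over `N × H`. -/
def fact (H N : Type) [Group H] : H →* MulAut (FreeGroup (N × H)) where
  toFun h := FreeGroup.freeGroupCongr ((Equiv.refl N).prodCongr (Equiv.mulLeft h))
  map_one' := by
    apply MulEquiv.toMonoidHom_injective
    ext x
    obtain ⟨n, g⟩ := x
    simp
  map_mul' a b := by
    apply MulEquiv.toMonoidHom_injective
    ext x
    obtain ⟨n, g⟩ := x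
    simp [mul_assoc]

theorem fact_of {H N : Type} [Group H] (h : H) (n : N) (g : H) :
    fact H N h (FreeGroup.of (n, g)) = FreeGroup.of (n, h * g) := by
  simp [fact]

/-- The free product of `H` and a free group on `N`, as a semidirect product. -/
abbrev FP (H N : Type) [Group H] := FreeGroup (N × H) ⋊[fact H N] H

/-- The variables. -/
def fpe (H : Type) {N : Type} [Group H] (n : N) : FP H N :=
  SemidirectProduct.inl (FreeGroup.of (n, 1))

/-- The inclusion of the coefficients. -/
def fpi (H N : Type) [Group H] : H →* FP H N := SemidirectProduct.inr

theorem fpi_injective (H N : Type) [Group H] : Function.Injective (fpi H N) :=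
  SemidirectProduct.inr_injective

theorem li_FP {H N : Type} [Group H] (hH : LocallyIndicable H) : LocallyIndicable (FP H N) :=
  li_ext SemidirectProduct.inl SemidirectProduct.inl_injective SemidirectProduct.rightHom
    SemidirectProduct.range_inl_eq_ker_rightHom.ge (li_freeGroup _) hH

/-- The universal property of `FP`. -/
def fplift {H N L : Type} [Group H] [Group L] (f : H →* L) (e : N → L) : FP H N →* L :=
  SemidirectProduct.lift (FreeGroup.lift fun x => f x.2 * e x.1 * (f x.2)⁻¹) f (by
    intro h
    ext x
    obtain ⟨n, g⟩ := x
    simp [fact_of, mul_assoc])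

@[simp] theorem fplift_i {H N L : Type} [Group H] [Group L] (f : H →* L) (e : N → L) (h : H) :
    fplift f e (fpi H N h) = f h := by
  simp [fplift, fpi]

@[simp] theorem fplift_e {H N L : Type} [Group H] [Group L] (f : H →* L) (e : N → L) (n : N) :
    fplift f e (fpe H n) = e n := by
  simp [fplift, fpe]

/-- The free group word underlying a word. -/
def fword {H N : Type} [Group H] : H → EWord H N → List ((N × H) × Bool)
  | _, [] => []
  | c, x :: l => ((x.2.1, c * x.1), x.2.2) :: fword (c * x.1) l

theorem fword_ev {H N : Type} [Group H] (l : EWord H N) (c : H) :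
    (fpi H N c * ev (fpi H N) (fpe H) l).left = FreeGroup.mk (fword c l) := by
  induction l generalizing c with
  | nil => simp [fword, fpi, FreeGroup.one_eq_mk]
  | cons x l ih =>
    obtain ⟨h, n, b⟩ := x
    have key : fpi H N c * ev (fpi H N) (fpe H) ((h, n, b) :: l)
        = SemidirectProduct.inl (FreeGroup.mk [((n, c * h), b)]) *
          (fpi H N (c * h) * ev (fpi H N) (fpe H) l) := by
      rw [ev_cons]
      have : fpi H N (c * h) * cond b (fpe H n) (fpe H n)⁻¹
          = SemidirectProduct.inl (FreeGroup.mk [((n, c * h), b)]) * fpi H N (c * h) := by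
        have h1 : fpi H N (c * h) * fpe H n =
            SemidirectProduct.inl (FreeGroup.of (n, c * h)) * fpi H N (c * h) := by
          have := SemidirectProduct.inl_aut (φ := fact H N) (c * h) (FreeGroup.of (n, 1))
          rw [fact_of, mul_one] at this
          rw [this, map_inv]
          simp only [fpi, fpe]
          group
        cases b
        · have h2 : (FreeGroup.mk [((n, c * h), false)]) = (FreeGroup.of (n, c * h))⁻¹ := by
            simp [FreeGroup.of, FreeGroup.invRev]
          rw [h2]
          simp only [cond_false, map_inv]
          rw [mul_inv_eq_iff_eq_mul, mul_assoc, h1]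
          simp
        · exact h1
      simp only [map_mul] at this ⊢
      rw [← mul_assoc, ← mul_assoc, ← mul_assoc, this]
    rw [key, SemidirectProduct.mul_left, ih]
    simp [fword]

theorem fword_red {H N : Type} [Group H] (l : EWord H N) (c : H) (hl : l.IsChain RedRel) :
    FreeGroup.IsReduced (fword c l) := by
  induction l generalizing c with
  | nil => exact FreeGroup.IsReduced.nil
  | cons x l ih =>
    cases l with
    | nil => exact FreeGroup.IsReduced.singleton
    | cons y l =>
      rw [List.isChain_cons_cons] at hl
      have := ih (c * x.1) hl.2
      simp only [fword] at this ⊢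
      rw [FreeGroup.isReduced_cons_cons]
      refine ⟨?_, this⟩
      intro h
      simp only [Prod.mk.injEq] at h
      exact hl.1 h.1 (by simpa using h.2)

/-- A non-empty reduced word does not lie in the coefficient group. -/
theorem ev_ne {H N : Type} [Group H] (l : EWord H N) (hl : l.IsChain RedRel) (hne : l ≠ [])
    (h : H) : ev (fpi H N) (fpe H) l * fpi H N h ≠ 1 := by
  intro h1
  classical
  have h2 : (ev (fpi H N) (fpe H) l * fpi H N h).left = 1 := by rw [h1]; rfl
  rw [SemidirectProduct.mul_left] at h2
  have h3 : (fpi H N h).left = 1 := rfl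
  have h4 := fword_ev l 1
  rw [map_one, one_mul] at h4
  rw [h3, map_one, mul_one, h4] at h2
  have h5 := congrArg FreeGroup.toWord h2
  rw [FreeGroup.toWord_mk, (fword_red l 1 hl).reduce_eq, FreeGroup.toWord_one] at h5
  cases l with
  | nil => exact hne rfl
  | cons x l => simp [fword] at h5

/-! ### Amalgams and HNN extensions -/

theorem exists_amalgam {A G K : Type} [Group A] [Group G] [Group K] (f : A →* G) (g : A →* K)
    (hf : Function.Injective f) (hg : Function.Injective g) :
    ∃ (L : Type) (_ : Group L) (i : G →* L) (j : K →* L), Function.Injective i ∧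
      Function.Injective j ∧ ∀ a, i (f a) = j (g a) := by
  let T : Bool → Type := fun b => cond b G K
  let inst : ∀ b, Group (T b) := fun b => match b with
    | true => (inferInstance : Group G)
    | false => (inferInstance : Group K)
  let φ : ∀ b, A →* T b := fun b => match b with
    | true => f
    | false => g
  have hφ : ∀ b, Function.Injective (φ b) := fun b => match b with
    | true => hf
    | false => hg
  refine ⟨PushoutI φ, inferInstance, PushoutI.of (φ := φ) true, PushoutI.of (φ := φ) false,
    PushoutI.of_injective hφ true, PushoutI.of_injective hφ false, fun a => ?_⟩
  exact (PushoutI.of_apply_eq_base φ true a).trans (PushoutI.of_apply_eq_base φ false a).symm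

theorem exists_conj {B G : Type} [Group B] [Group G] (f g : B →* G)
    (hf : Function.Injective f) (hg : Function.Injective g) :
    ∃ (L : Type) (_ : Group L) (i : G →* L) (s : L), Function.Injective i ∧
      ∀ b, s * i (f b) * s⁻¹ = i (g b) := by
  let φ : f.range ≃* g.range :=
    (MonoidHom.ofInjective hf).symm.trans (MonoidHom.ofInjective hg)
  refine ⟨HNNExtension G f.range g.range φ, inferInstance, HNNExtension.of, HNNExtension.t,
    HNNExtension.of_injective _, fun b => ?_⟩
  have := HNNExtension.equiv_eq_conj (φ := φ) (MonoidHom.ofInjective hf b)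
  have h1 : φ (MonoidHom.ofInjective hf b) = MonoidHom.ofInjective hg b := by simp [φ]
  rw [h1] at this
  exact this.symm

/-! ### The staggering argument -/

theorem fs_mono {s t : Set I} (h : s ⊆ t) :
    factorSubgroup (U := U) V s ≤ factorSubgroup V t := by
  apply Subgroup.closure_mono
  exact Set.union_subset_union_right _ (Set.biUnion_subset_biUnion_left h)

theorem inl_mem_fs (s : Set I) (u : U) :
    (Coprod.inl u : Coprod U (CoprodI V)) ∈ factorSubgroup V s :=
  Subgroup.subset_closure (Or.inl ⟨u, rfl⟩)

theorem inr_mem_fs {s : Set I} {k : I} (hk : k ∈ s) (v : V k) :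
    (Coprod.inr (CoprodI.of v) : Coprod U (CoprodI V)) ∈ factorSubgroup V s :=
  Subgroup.subset_closure (Or.inr (Set.mem_biUnion hk ⟨v, rfl⟩))

theorem fs_hom_eq {L : Type} [Group L] {s : Set I} (f g : Coprod U (CoprodI V) →* L)
    (h1 : ∀ u, f (Coprod.inl u) = g (Coprod.inl u))
    (h2 : ∀ k ∈ s, ∀ v : V k, f (Coprod.inr (CoprodI.of v)) = g (Coprod.inr (CoprodI.of v)))
    {x : Coprod U (CoprodI V)} (hx : x ∈ factorSubgroup V s) : f x = g x := by
  refine MonoidHom.eqOn_closure (f := f) (g := g) ?_ hx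
  rintro _ (⟨u, rfl⟩ | hv)
  · exact h1 u
  · obtain ⟨k, hk, v, rfl⟩ := Set.mem_iUnion₂.1 hv
    exact h2 k hk v

theorem stag_key (S1 S2 : Set I) (hcov : ∀ k, k ∈ S1 ∨ k ∈ S2)
    (R1 R2 : Set (Coprod U (CoprodI V)))
    (h1 : ∀ x ∈ R1, x ∈ factorSubgroup V S1) (h2 : ∀ x ∈ R2, x ∈ factorSubgroup V S2)
    (c1 : ∀ x ∈ factorSubgroup V (S1 ∩ S2), x ∈ Subgroup.normalClosure R1 → x = 1)
    (c2 : ∀ x ∈ factorSubgroup V (S1 ∩ S2), x ∈ Subgroup.normalClosure R2 → x = 1) :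
    ∀ x ∈ factorSubgroup V S1, x ∈ Subgroup.normalClosure (R1 ∪ R2) →
      x ∈ Subgroup.normalClosure R1 := by
  classical
  let G := Coprod U (CoprodI V)
  let A := factorSubgroup (U := U) V (S1 ∩ S2)
  let q1 : G →* G ⧸ Subgroup.normalClosure R1 := QuotientGroup.mk' _
  let q2 : G →* G ⧸ Subgroup.normalClosure R2 := QuotientGroup.mk' _
  have hq1 : ∀ x : G, q1 x = 1 ↔ x ∈ Subgroup.normalClosure R1 := fun x =>
    QuotientGroup.eq_one_iff x
  have hq2 : ∀ x : G, q2 x = 1 ↔ x ∈ Subgroup.normalClosure R2 := fun x =>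
    QuotientGroup.eq_one_iff x
  obtain ⟨L, _, i, j, hi, hj, hij⟩ := exists_amalgam (q1.comp A.subtype) (q2.comp A.subtype)
    (by
      rw [injective_iff_map_eq_one]
      rintro ⟨x, hx⟩ h
      exact Subtype.ext (c1 x hx ((hq1 x).1 h)))
    (by
      rw [injective_iff_map_eq_one]
      rintro ⟨x, hx⟩ h
      exact Subtype.ext (c2 x hx ((hq2 x).1 h)))
  have hij' : ∀ x ∈ A, i (q1 x) = j (q2 x) := fun x hx => hij ⟨x, hx⟩
  let θ : G →* L := Coprod.lift ((i.comp q1).comp Coprod.inl)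
    (CoprodI.lift fun k => if k ∈ S1 then ((i.comp q1).comp Coprod.inr).comp CoprodI.of
      else ((j.comp q2).comp Coprod.inr).comp CoprodI.of)
  have t1 : ∀ x ∈ factorSubgroup V S1, θ x = i (q1 x) := by
    intro x hx
    refine fs_hom_eq V θ (i.comp q1) ?_ ?_ hx
    · intro u; simp [θ]
    · intro k hk v; simp [θ, hk]
  have t2 : ∀ x ∈ factorSubgroup V S2, θ x = j (q2 x) := by
    intro x hx
    refine fs_hom_eq V θ (j.comp q2) ?_ ?_ hx
    · intro u
      have := hij' (Coprod.inl u) (inl_mem_fs V _ u)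
      simpa [θ] using this
    · intro k hk v
      by_cases hk1 : k ∈ S1
      · have := hij' (Coprod.inr (CoprodI.of v)) (inr_mem_fs V (s := S1 ∩ S2) ⟨hk1, hk⟩ v)
        simpa [θ, hk1] using this
      · simp [θ, hk1]
  have hker : Subgroup.normalClosure (R1 ∪ R2) ≤ θ.ker := by
    apply Subgroup.normalClosure_le_normal
    rintro x (hx | hx)
    · show θ x = 1
      rw [t1 x (h1 x hx), (hq1 x).2 (Subgroup.subset_normalClosure hx), map_one]
    · show θ x = 1
      rw [t2 x (h2 x hx), (hq2 x).2 (Subgroup.subset_normalClosure hx), map_one]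
  intro x hx hxN
  have h3 : θ x = 1 := hker hxN
  rw [t1 x hx] at h3
  exact (hq1 x).1 (hi (by rw [h3, map_one]))

theorem stag_fin {J : Set ℤ} (r : J → Coprod U (CoprodI V)) (a o : J → ℤ)
    (hmem : ∀ j, r j ∈ factorSubgroup V {k : I | a j ≤ (k : ℤ) ∧ (k : ℤ) ≤ o j})
    (hao : ∀ j, a j ≤ o j)
    (hstag : ∀ j k : J, (j : ℤ) < (k : ℤ) → a j < a k ∧ o j < o k)
    (hfa : ∀ j, ∀ x ∈ factorSubgroup V {k : I | (k : ℤ) ≠ a j},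
      x ∈ Subgroup.normalClosure {r j} → x = 1)
    (hfo : ∀ j, ∀ x ∈ factorSubgroup V {k : I | (k : ℤ) ≠ o j},
      x ∈ Subgroup.normalClosure {r j} → x = 1) (T : Finset J) :
    ∀ (α ω : ℤ), ∀ w ∈ factorSubgroup V {k : I | α ≤ (k : ℤ) ∧ (k : ℤ) ≤ ω},
      w ∈ Subgroup.normalClosure (r '' (T : Set J)) →
      w ∈ Subgroup.normalClosure (r '' {l : J | l ∈ T ∧ α ≤ a l ∧ o l ≤ ω}) := by
  classical
  induction T using Finset.strongInduction with
  | H T IH =>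
  intro α ω w hw hwN
  by_cases hall : ∀ l ∈ T, α ≤ a l ∧ o l ≤ ω
  · refine Subgroup.normalClosure_mono (Set.image_mono ?_) hwN
    intro l hl
    exact ⟨hl, hall l hl⟩
  push Not at hall
  obtain ⟨l, hl, hlω⟩ := hall
  have key : ∀ n ∈ T, ∀ S1 S2 : Set I, (∀ k, k ∈ S1 ∨ k ∈ S2) →
      (∀ j ∈ T.erase n, {k : I | a j ≤ (k : ℤ) ∧ (k : ℤ) ≤ o j} ⊆ S1) →
      {k : I | a n ≤ (k : ℤ) ∧ (k : ℤ) ≤ o n} ⊆ S2 →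
      (∀ x ∈ factorSubgroup V (S1 ∩ S2), x ∈ Subgroup.normalClosure {r n} → x = 1) →
      (∃ α' ω', S1 ∩ S2 ⊆ {k : I | α' ≤ (k : ℤ) ∧ (k : ℤ) ≤ ω'} ∧
        ∀ j ∈ T.erase n, ¬ (α' ≤ a j ∧ o j ≤ ω')) →
      {k : I | α ≤ (k : ℤ) ∧ (k : ℤ) ≤ ω} ⊆ S1 →
      w ∈ Subgroup.normalClosure (r '' {l : J | l ∈ T ∧ α ≤ a l ∧ o l ≤ ω}) := by
    intro n hn S1 S2 hcov h1 h2 c2 ⟨α', ω', hS, hno⟩ hwS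
    have hsplit : r '' (T : Set J) = r '' ((T.erase n : Finset J) : Set J) ∪ {r n} := by
      rw [← Set.image_singleton, ← Set.image_union]
      congr 1
      ext x
      by_cases hx : x = n
      · simp [hx, hn]
      · simp [hx]
    have hw' : w ∈ Subgroup.normalClosure (r '' ((T.erase n : Finset J) : Set J)) := by
      refine stag_key V S1 S2 hcov _ {r n} ?_ ?_ ?_ c2 w (fs_mono V hwS hw) (hsplit ▸ hwN)
      · rintro _ ⟨j, hj, rfl⟩
        exact fs_mono V (h1 j hj) (hmem j)
      · rintro _ rfl
        exact fs_mono V h2 (hmem n)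
      · intro x hx hxN
        have := IH _ (Finset.erase_ssubset hn) α' ω' x (fs_mono V hS hx) hxN
        have hem : {l : J | l ∈ T.erase n ∧ α' ≤ a l ∧ o l ≤ ω'} = ∅ := by
          ext l
          simp only [Set.mem_ofPred_eq, Set.mem_empty_iff_false, iff_false]
          exact fun h => hno l h.1 h.2
        rw [hem, Set.image_empty, Subgroup.normalClosure_empty] at this
        exact this
    refine Subgroup.normalClosure_mono (Set.image_mono ?_)
      (IH _ (Finset.erase_ssubset hn) α ω w hw hw')
    rintro l ⟨hl1, hl2⟩
    exact ⟨Finset.mem_of_mem_erase hl1, hl2⟩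
  by_cases hc : α ≤ a l
  · have hlω := hlω hc
    obtain ⟨n, hn, hmax⟩ := T.exists_max_image (fun x : J => (x : ℤ)) ⟨l, hl⟩
    have hlt : ∀ j ∈ T.erase n, (j : ℤ) < n := by
      intro j hj
      rw [Finset.mem_erase] at hj
      exact lt_of_le_of_ne (hmax j hj.2) fun h => hj.1 (Subtype.ext h)
    have hln : o l ≤ o n := by
      by_cases hln : l = n
      · rw [hln]
      · exact (hstag l n (hlt l (Finset.mem_erase.2 ⟨hln, hl⟩))).2.le
    have hn1 := hao n
    refine key n hn {k : I | (k : ℤ) < o n} {k : I | a n ≤ (k : ℤ)} ?_ ?_ ?_ ?_ ?_ ?_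
    · intro k
      simp only [Set.mem_ofPred_eq]
      omega
    · intro j hj k hk
      have := (hstag j n (hlt j hj)).2
      simp only [Set.mem_ofPred_eq] at hk ⊢
      omega
    · intro k hk
      exact hk.1
    · intro x hx hxN
      refine hfo n x (fs_mono V ?_ hx) hxN
      rintro k ⟨hk1, hk2⟩
      simp only [Set.mem_ofPred_eq] at hk1 ⊢
      omega
    · refine ⟨a n, o n, ?_, ?_⟩
      · rintro k ⟨hk1, hk2⟩
        exact ⟨hk2, le_of_lt hk1⟩
      · intro j hj h
        have := (hstag j n (hlt j hj)).1
        omega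
    · rintro k ⟨hk1, hk2⟩
      simp only [Set.mem_ofPred_eq]
      omega
  · obtain ⟨n, hn, hmin⟩ := T.exists_min_image (fun x : J => (x : ℤ)) ⟨l, hl⟩
    have hlt : ∀ j ∈ T.erase n, (n : ℤ) < j := by
      intro j hj
      rw [Finset.mem_erase] at hj
      exact lt_of_le_of_ne (hmin j hj.2) fun h => hj.1 (Subtype.ext h.symm)
    have hln : a n ≤ a l := by
      by_cases hln : l = n
      · rw [hln]
      · exact (hstag n l (hlt l (Finset.mem_erase.2 ⟨hln, hl⟩))).1.le
    have hn1 := hao n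
    refine key n hn {k : I | a n < (k : ℤ)} {k : I | (k : ℤ) ≤ o n} ?_ ?_ ?_ ?_ ?_ ?_
    · intro k
      simp only [Set.mem_ofPred_eq]
      omega
    · intro j hj k hk
      have := (hstag n j (hlt j hj)).1
      simp only [Set.mem_ofPred_eq] at hk ⊢
      omega
    · intro k hk
      exact hk.2
    · intro x hx hxN
      refine hfa n x (fs_mono V ?_ hx) hxN
      rintro k ⟨hk1, hk2⟩
      simp only [Set.mem_ofPred_eq] at hk1 ⊢
      omega
    · refine ⟨a n, o n, ?_, ?_⟩
      · rintro k ⟨hk1, hk2⟩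
        exact ⟨le_of_lt hk1, hk2⟩
      · intro j hj h
        have := (hstag n j (hlt j hj)).2
        omega
    · rintro k ⟨hk1, hk2⟩
      simp only [Set.mem_ofPred_eq]
      omega

theorem nc_finite {ι G : Type} [Group G] (r : ι → G) (w : G)
    (hw : w ∈ Subgroup.normalClosure (Set.range r)) :
    ∃ T : Finset ι, w ∈ Subgroup.normalClosure (r '' (T : Set ι)) := by
  classical
  rw [Subgroup.normalClosure] at hw
  induction hw using Subgroup.closure_induction with
  | mem x hx =>
    obtain ⟨y, ⟨i, rfl⟩, hy⟩ := Group.mem_conjugatesOfSet_iff.1 hx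
    refine ⟨{i}, Subgroup.conjugatesOfSet_subset_normalClosure
      (Group.mem_conjugatesOfSet_iff.2 ⟨r i, by simp, hy⟩)⟩
  | one => exact ⟨∅, one_mem _⟩
  | mul x y _ _ hx hy =>
    obtain ⟨S, hS⟩ := hx
    obtain ⟨T, hT⟩ := hy
    refine ⟨S ∪ T, mul_mem (Subgroup.normalClosure_mono (Set.image_mono ?_) hS)
      (Subgroup.normalClosure_mono (Set.image_mono ?_) hT)⟩ <;> simp
  | inv x _ hx =>
    obtain ⟨S, hS⟩ := hx
    exact ⟨S, inv_mem hS⟩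

theorem stag {J : Set ℤ} (r : J → Coprod U (CoprodI V)) (a o : J → ℤ)
    (hmem : ∀ j, r j ∈ factorSubgroup V {k : I | a j ≤ (k : ℤ) ∧ (k : ℤ) ≤ o j})
    (hao : ∀ j, a j ≤ o j)
    (hstag : ∀ j k : J, (j : ℤ) < (k : ℤ) → a j < a k ∧ o j < o k)
    (hfa : ∀ j, ∀ x ∈ factorSubgroup V {k : I | (k : ℤ) ≠ a j},
      x ∈ Subgroup.normalClosure {r j} → x = 1)
    (hfo : ∀ j, ∀ x ∈ factorSubgroup V {k : I | (k : ℤ) ≠ o j},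
      x ∈ Subgroup.normalClosure {r j} → x = 1)
    (α ω : ℤ) (w : Coprod U (CoprodI V))
    (hw : w ∈ factorSubgroup V {k : I | α ≤ (k : ℤ) ∧ (k : ℤ) ≤ ω})
    (hwN : w ∈ Subgroup.normalClosure (Set.range r)) :
    w ∈ Subgroup.normalClosure (r '' {l : J | α ≤ a l ∧ o l ≤ ω}) := by
  obtain ⟨T, hT⟩ := nc_finite r w hwN
  refine Subgroup.normalClosure_mono (Set.image_mono ?_)
    (stag_fin V r a o hmem hao hstag hfa hfo T α ω w hw hT)
  rintro l ⟨_, hl⟩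
  exact hl

/-! ### Equations over locally indicable groups -/

/-- Every cyclically reduced one-variable equation of length `k` over a locally indicable group
has a solution in an overgroup. -/
def Solves (k : ℕ) : Prop :=
  ∀ (H : Type) [Group H], LocallyIndicable H → ∀ l : EWord H Unit, l.length = k → l ≠ [] →
    (l ++ l).IsChain RedRel →
    ∃ (L : Type) (_ : Group L) (f : H →* L) (e : L), Function.Injective f ∧
      ev f (fun _ => e) l = 1

section merge
variable {H N : Type} [Group H] [DecidableEq N]

/-- Rewrite a word in several variables as a word in the single variable `n0`. -/
def merge (n0 : N) : FP H N → EWord H N → EWord (FP H N) Unit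
  | _, [] => []
  | c, x :: l =>
    if x.2.1 = n0 then (c * fpi H N x.1, (), x.2.2) :: merge n0 1 l
    else merge n0 (c * fpi H N x.1 * cond x.2.2 (fpe H x.2.1) (fpe H x.2.1)⁻¹) l

theorem merge_append (n0 : N) (x : H × N × Bool) (hx : x.2.1 = n0) (l m : EWord H N)
    (c : FP H N) : merge n0 c (l ++ x :: m) = merge n0 c (l ++ [x]) ++ merge n0 1 m := by
  induction l generalizing c with
  | nil => simp [merge, hx]
  | cons y l ih =>
    simp only [List.cons_append, merge]
    split_ifs
    · rw [ih]; rfl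
    · rw [ih]

theorem merge_length (n0 : N) (l : EWord H N) (c : FP H N) :
    (merge n0 c l).length = l.countP fun x => x.2.1 = n0 := by
  induction l generalizing c with
  | nil => simp [merge]
  | cons y l ih =>
    by_cases h : y.2.1 = n0 <;> simp [merge, h, ih]

theorem merge_ev {L : Type} [Group L] (n0 : N) (g : FP H N →* L) (e : L)
    (x : H × N × Bool) (hx : x.2.1 = n0) (l : EWord H N) (c : FP H N) :
    ev g (fun _ => e) (merge n0 c (l ++ [x])) =
      g c * ev (g.comp (fpi H N)) (fun n => if n = n0 then e else g (fpe H n)) (l ++ [x]) := by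
  induction l generalizing c with
  | nil =>
    obtain ⟨h, n, b⟩ := x
    simp only at hx
    cases b <;> simp [merge, hx, mul_assoc]
  | cons y l ih =>
    obtain ⟨h, n, b⟩ := y
    simp only [List.cons_append, merge]
    split_ifs with hn
    · cases b <;> simp [ih, hn, mul_assoc]
    · cases b <;> simp [ih, hn, mul_assoc]

theorem merge_chain (n0 : N) (l : EWord H N) (x : H × N × Bool) (hx : x.2.1 = n0)
    (seg : EWord H N) (hc : (x :: (seg ++ l)).IsChain RedRel) (z : FP H N × Unit × Bool)
    (hz : z.2.2 = x.2.2) :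
    (z :: merge n0 (ev (fpi H N) (fpe H) seg) l).IsChain RedRel := by
  induction l generalizing x seg z with
  | nil => simp [merge]
  | cons y l ih =>
    simp only [merge]
    split_ifs with hn
    · rw [List.isChain_cons_cons]
      constructor
      · intro _ h1
        cases seg with
        | nil =>
          simp only [ev_nil, one_mul] at h1
          have h2 : y.1 = 1 := fpi_injective H N (by rw [h1, map_one])
          simp only [List.nil_append, List.isChain_cons_cons] at hc
          have := hc.1 (hx.trans hn.symm) h2
          simpa [hz] using this
        | cons s seg =>
          exact absurd h1 (ev_ne _ (hc.tail.left_of_append) (by simp) _)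
      · have := ih y hn [] (by
          have h3 : (x :: (seg ++ y :: l)) = (x :: seg) ++ (y :: l) := by simp
          rw [h3] at hc
          simpa using hc.right_of_append) (ev (fpi H N) (fpe H) seg * fpi H N y.1, (), y.2.2) rfl
        simpa using this
    · have := ih x hx (seg ++ [y]) (by simpa using hc) z hz
      simpa [mul_assoc] using this

end merge

theorem isChain_rotate {α : Type} {R : α → α → Prop} (l1 l2 : List α)
    (h : ((l1 ++ l2) ++ (l1 ++ l2)).IsChain R) : ((l2 ++ l1) ++ (l2 ++ l1)).IsChain R := by
  by_cases hne : l1 ++ l2 = []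
  · simp only [List.append_eq_nil_iff] at hne
    simp [hne]
  have h3 : ((l1 ++ l2) ++ (l1 ++ l2) ++ (l1 ++ l2)).IsChain R := h.append_overlap h hne
  exact h3.infix ⟨l1, l2, by simp⟩

theorem solve_var {H N : Type} [Group H] [DecidableEq N] (hH : LocallyIndicable H)
    (l : EWord H N) (hl : (l ++ l).IsChain RedRel) (n0 : N) (hn0 : ∃ x ∈ l, x.2.1 = n0)
    (hS : Solves (l.countP fun x => x.2.1 = n0)) :
    ∃ (L : Type) (_ : Group L) (g : FP H N →* L) (e : L), Function.Injective g ∧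
      ev (g.comp (fpi H N)) (fun n => if n = n0 then e else g (fpe H n)) l = 1 := by
  obtain ⟨x, hxl, hx⟩ := hn0
  obtain ⟨l1, l2, rfl⟩ := List.append_of_mem hxl
  have e1 : l1 ++ x :: l2 = (l1 ++ [x]) ++ l2 := by simp
  rw [e1] at hl hS ⊢
  have hr := isChain_rotate _ _ hl
  have hm : merge (H := H) n0 1 ((l2 ++ (l1 ++ [x])) ++ (l2 ++ (l1 ++ [x]))) =
      merge n0 1 (l2 ++ (l1 ++ [x])) ++ merge n0 1 (l2 ++ (l1 ++ [x])) := by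
    have := merge_append (H := H) n0 x hx (l2 ++ l1) (l2 ++ (l1 ++ [x])) 1
    simpa using this
  have hlen : (merge (H := H) n0 1 (l2 ++ (l1 ++ [x]))).length
      = List.countP (fun x => x.2.1 = n0) (l1 ++ [x] ++ l2) := by
    rw [merge_length]
    simp only [List.countP_append]
    omega
  obtain ⟨L, _, g, e, hg, he⟩ := hS (FP H N) (li_FP hH) (merge n0 1 (l2 ++ (l1 ++ [x]))) hlen
    (by
      rw [← List.length_pos_iff_ne_nil, hlen]
      simp [List.countP_append, hx])
    (by
      rw [← hm]
      have h4 : (x :: ([] ++ ((l2 ++ (l1 ++ [x])) ++ (l2 ++ (l1 ++ [x]))))).IsChain RedRel := by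
        rw [List.nil_append]
        by_cases hd : l2 ++ (l1 ++ [x]) = []
        · simp at hd
        have := hr.append_overlap hr hd
        exact this.infix ⟨l2 ++ l1, [], by simp⟩
      have := merge_chain n0 _ x hx [] h4 (1, (), x.2.2) rfl
      simpa using this.tail)
  refine ⟨L, inferInstance, g, e, hg, ?_⟩
  have h5 := merge_ev n0 g e x hx (l2 ++ l1) 1
  rw [List.append_assoc, he, map_one, one_mul, ev_append] at h5
  rw [ev_append]
  exact mul_eq_one_comm.1 h5.symm

/-! ### Heights -/

section shift
variable {H : Type} [Group H] (φ : H →* Multiplicative ℤ) (y : ℤ)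

/-- The word with variables indexed by their heights. -/
def shiftw : ℤ → EWord H Unit → EWord H ℤ
  | _, [] => []
  | c, x :: l => (x.1, c + (φ x.1).toAdd + cond x.2.2 0 (-y), x.2.2) ::
      shiftw (c + (φ x.1).toAdd + cond x.2.2 y (-y)) l

/-- The total height of a word. -/
def tot (l : EWord H Unit) : ℤ := (l.map fun x => (φ x.1).toAdd + cond x.2.2 y (-y)).sum

@[simp] theorem tot_nil : tot φ y [] = 0 := rfl

@[simp] theorem tot_cons (x : H × Unit × Bool) (l : EWord H Unit) :
    tot φ y (x :: l) = (φ x.1).toAdd + cond x.2.2 y (-y) + tot φ y l := by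
  simp [tot]

theorem shiftw_append (l m : EWord H Unit) (c : ℤ) :
    shiftw φ y c (l ++ m) = shiftw φ y c l ++ shiftw φ y (c + tot φ y l) m := by
  induction l generalizing c with
  | nil => simp [shiftw]
  | cons x l ih =>
    simp only [List.cons_append, shiftw, ih, tot_cons]
    congr 3
    ring

theorem shiftw_add (l : EWord H Unit) (c d : ℤ) :
    shiftw φ y (c + d) l = (shiftw φ y c l).map fun x => (x.1, x.2.1 + d, x.2.2) := by
  induction l generalizing c with
  | nil => simp [shiftw]
  | cons x l ih =>
    simp only [shiftw, List.map_cons, ← ih]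
    congr 1
    · congr 2; ring
    · congr 1; ring

theorem shiftw_length (l : EWord H Unit) (c : ℤ) : (shiftw φ y c l).length = l.length := by
  induction l generalizing c with
  | nil => simp [shiftw]
  | cons x l ih => simp [shiftw, ih]

theorem shiftw_chain (l : EWord H Unit) (c : ℤ) (hl : l.IsChain RedRel) :
    (shiftw φ y c l).IsChain RedRel := by
  induction l generalizing c with
  | nil => simp [shiftw]
  | cons x l ih =>
    cases l with
    | nil => simp [shiftw]
    | cons z l =>
      rw [List.isChain_cons_cons] at hl
      have := ih (c + (φ x.1).toAdd + cond x.2.2 y (-y)) hl.2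
      simp only [shiftw] at this ⊢
      rw [List.isChain_cons_cons]
      exact ⟨fun _ h => hl.1 rfl h, this⟩

theorem shiftw_same (l : EWord H Unit) (c n0 : ℤ) (h : ∀ x ∈ shiftw φ y c l, x.2.1 = n0) :
    l.IsChain fun x z => (φ z.1).toAdd = cond z.2.2 0 y - cond x.2.2 y 0 := by
  induction l generalizing c with
  | nil => simp
  | cons x l ih =>
    cases l with
    | nil => simp
    | cons z l =>
      rw [List.isChain_cons_cons]
      refine ⟨?_, ih _ fun w hw => h w (by rw [shiftw]; exact List.mem_cons_of_mem _ hw)⟩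
      have h1 := h _ (by rw [shiftw]; exact List.mem_cons_self)
      have h2 := h _ (by
        rw [shiftw, shiftw]; exact List.mem_cons_of_mem _ List.mem_cons_self)
      simp only at h1 h2
      rcases x with ⟨_, _, _ | _⟩ <;> rcases z with ⟨_, _, _ | _⟩ <;>
        simp only [cond_true, cond_false] at h1 h2 ⊢ <;> omega

/-- From a solution of the system of shifted equations to a solution of the original equation. -/
theorem wreath_solution {M : Type} [Group M] (f : H →* M) (hf : Function.Injective f) (e : ℤ → M)
    (l : EWord H Unit) (htot : tot φ y l = 0) (h : ∀ c, ev f e (shiftw φ y c l) = 1) :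
    ∃ (L : Type) (_ : Group L) (f : H →* L) (e : L), Function.Injective f ∧
      ev f (fun _ => e) l = 1 := by
  let F : H →* Equiv.Perm (ℤ × M) :=
    { toFun := fun h =>
        { toFun := fun p => (p.1 - (φ h).toAdd, f h * p.2)
          invFun := fun p => (p.1 + (φ h).toAdd, (f h)⁻¹ * p.2)
          left_inv := fun p => by simp
          right_inv := fun p => by simp }
      map_one' := by ext p <;> simp
      map_mul' := fun a b => by
        ext p
        · simp; ring
        · simp [mul_assoc] }
  let E : Equiv.Perm (ℤ × M) :=
    { toFun := fun p => (p.1 - y, e (p.1 - y) * p.2)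
      invFun := fun p => (p.1 + y, (e p.1)⁻¹ * p.2)
      left_inv := fun p => by simp
      right_inv := fun p => by simp }
  have hF : ∀ h p, F h p = (p.1 - (φ h).toAdd, f h * p.2) := fun _ _ => rfl
  have hE : ∀ p, E p = (p.1 - y, e (p.1 - y) * p.2) := fun _ => rfl
  have hE' : ∀ p, E⁻¹ p = (p.1 + y, (e p.1)⁻¹ * p.2) := fun _ => rfl
  have key : ∀ (l : EWord H Unit) (n : ℤ) (m : M), ev F (fun _ => E) l (n, m) =
      (n - tot φ y l, ev f e (shiftw φ y (n - tot φ y l) l) * m) := by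
    intro l
    induction l with
    | nil => intro n m; simp [shiftw]
    | cons x l ih =>
      intro n m
      obtain ⟨h, u, _ | _⟩ := x
      · rw [ev_cons, Equiv.Perm.mul_apply, ih, Equiv.Perm.mul_apply]
        simp only [cond_false, hE', hF, tot_cons, shiftw, ev_cons]
        have e1 : n - ((φ h).toAdd + -y + tot φ y l) + (φ h).toAdd + -y = n - tot φ y l := by ring
        rw [e1]
        ext
        · simp; ring
        · simp [mul_assoc]
      · rw [ev_cons, Equiv.Perm.mul_apply, ih, Equiv.Perm.mul_apply]
        simp only [cond_true, hE, hF, tot_cons, shiftw, ev_cons]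
        have e1 : n - ((φ h).toAdd + y + tot φ y l) + (φ h).toAdd + y = n - tot φ y l := by ring
        have e2 : n - ((φ h).toAdd + y + tot φ y l) + (φ h).toAdd + 0 = n - tot φ y l - y := by
          ring
        rw [e1, e2]
        ext
        · simp; ring
        · simp [mul_assoc]
  refine ⟨Equiv.Perm (ℤ × M), inferInstance, F, E, ?_, ?_⟩
  · rw [injective_iff_map_eq_one]
    intro a ha
    have h1 := hF a (0, 1)
    rw [ha] at h1
    have h2 : (1 : M) = f a * 1 := congrArg Prod.snd h1
    exact hf (by rw [map_one, h2, mul_one])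
  · ext p : 1
    obtain ⟨n, m⟩ := p
    rw [key, htot, h]
    simp

end shift

/-! ### The inductive step: systems of shifted equations -/

theorem single_relator {G K L : Type} [Group G] [Group K] [Group L] (S : Subgroup G)
    (κ : G →* K) (hκ : Function.Injective κ) (g : K →* L) (hg : Function.Injective g)
    (θ : G →* L) (r : G) (hr : θ r = 1) (hS : ∀ x ∈ S, θ x = g (κ x)) :
    ∀ x ∈ S, x ∈ Subgroup.normalClosure {r} → x = 1 := by
  intro x hx hn
  have h1 : Subgroup.normalClosure {r} ≤ θ.ker := by
    apply Subgroup.normalClosure_le_normal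
    rintro _ rfl
    exact hr
  have h2 : θ x = 1 := h1 hn
  rw [hS x hx] at h2
  exact hκ (hg (by rw [h2, map_one, map_one]))

/-- Infinite cyclic factors. -/
abbrev ZV : ↥(Set.univ : Set ℤ) → Type := fun _ => Multiplicative ℤ

/-- The generators of the infinite cyclic factors. -/
def gz (H : Type) [Group H] (n : ℤ) : Coprod H (CoprodI ZV) :=
  Coprod.inr (CoprodI.of (M := ZV) (i := ⟨n, trivial⟩) (Multiplicative.ofAdd 1))

/-- The universal property. -/
def gzlift {H L : Type} [Group H] [Group L] (f : H →* L) (E : ℤ → L) :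
    Coprod H (CoprodI ZV) →* L :=
  Coprod.lift f (CoprodI.lift fun i => zpowersHom L (E i))

@[simp] theorem gzlift_inl {H L : Type} [Group H] [Group L] (f : H →* L) (E : ℤ → L) (h : H) :
    gzlift f E (Coprod.inl h) = f h := by
  simp [gzlift]

theorem gzlift_inr {H L : Type} [Group H] [Group L] (f : H →* L) (E : ℤ → L)
    (i : (Set.univ : Set ℤ)) (v : ZV i) :
    gzlift f E (Coprod.inr (CoprodI.of (M := ZV) v)) = zpowersHom L (E i) v := by
  simp [gzlift]

@[simp] theorem gzlift_gz {H L : Type} [Group H] [Group L] (f : H →* L) (E : ℤ → L) (n : ℤ) :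
    gzlift f E (gz H n) = E n := by
  rw [gz, gzlift_inr]
  simp

theorem gz_hom_ext {H L : Type} [Group H] [Group L] (f g : Coprod H (CoprodI ZV) →* L)
    (h1 : ∀ h, f (Coprod.inl h) = g (Coprod.inl h)) (h2 : ∀ n, f (gz H n) = g (gz H n)) :
    f = g := by
  apply Coprod.hom_ext
  · ext h; exact h1 h
  · apply CoprodI.ext_hom
    rintro ⟨n, hn⟩
    apply MonoidHom.ext_mint
    exact h2 n

theorem gz_mem_fs {H : Type} [Group H] (m : EWord H ℤ) (s : Set (Set.univ : Set ℤ))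
    (h : ∀ x ∈ m, (⟨x.2.1, trivial⟩ : (Set.univ : Set ℤ)) ∈ s) :
    ev Coprod.inl (gz H) m ∈ factorSubgroup (U := H) ZV s := by
  induction m with
  | nil => simp [one_mem]
  | cons x m ih =>
    rw [ev_cons]
    refine mul_mem (mul_mem (inl_mem_fs _ _ _) ?_) (ih fun y hy => h y (by simp [hy]))
    have : gz H x.2.1 ∈ factorSubgroup (U := H) ZV s := inr_mem_fs _ (h x (by simp)) _
    cases x.2.2
    · exact inv_mem this
    · exact this

theorem gz_single {H : Type} [Group H] (hH : LocallyIndicable H) (m : EWord H ℤ)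
    (hm : (m ++ m).IsChain RedRel) (n0 : ℤ) (hn0 : ∃ x ∈ m, x.2.1 = n0)
    (hS : Solves (m.countP fun x => x.2.1 = n0)) :
    ∀ x ∈ factorSubgroup (U := H) ZV {k | (k : ℤ) ≠ n0},
      x ∈ Subgroup.normalClosure {ev Coprod.inl (gz H) m} → x = 1 := by
  obtain ⟨L, _, g, e, hg, he⟩ := solve_var hH m hm n0 hn0 hS
  let E : ℤ → L := fun n => if n = n0 then e else g (fpe H n)
  refine single_relator _ (gzlift (fpi H ℤ) (fpe H)) ?_ g hg (gzlift (g.comp (fpi H ℤ)) E) _ ?_ ?_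
  · apply Function.LeftInverse.injective (g := fplift Coprod.inl (gz H))
    intro x
    have : (fplift Coprod.inl (gz H)).comp (gzlift (fpi H ℤ) (fpe H)) = MonoidHom.id _ := by
      apply gz_hom_ext <;> simp
    exact DFunLike.congr_fun this x
  · rw [map_ev, ← he]
    congr 1
    funext n
    simp [E]
  · intro x hx
    refine fs_hom_eq ZV (gzlift (g.comp (fpi H ℤ)) E) (g.comp (gzlift (fpi H ℤ) (fpe H))) ?_ ?_ hx
    · intro u; simp
    · intro k hk v
      have hk' : (k : ℤ) ≠ n0 := hk
      rw [MonoidHom.comp_apply, gzlift_inr, gzlift_inr]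
      simp [E, hk']

theorem solve_shift {H : Type} [Group H] (hH : LocallyIndicable H) (l : EWord H Unit)
    (IH : ∀ k < l.length, Solves k) (hne : l ≠ []) (hl : (l ++ l).IsChain RedRel)
    (φ : H →* Multiplicative ℤ) (y : ℤ) (htot : tot φ y l = 0)
    (hns : ¬ (l ++ l).IsChain fun x z => (φ z.1).toAdd = cond z.2.2 0 y - cond x.2.2 y 0) :
    ∃ (L : Type) (_ : Group L) (f : H →* L) (e : L), Function.Injective f ∧
      ev f (fun _ => e) l = 1 := by
  have hnsame : ∀ c n0, ∃ x ∈ shiftw φ y c l, x.2.1 ≠ n0 := by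
    intro c n0
    by_contra hcon
    push Not at hcon
    apply hns
    apply shiftw_same φ y _ c n0
    rw [shiftw_append, htot, add_zero]
    intro x hx
    rw [List.mem_append, or_self] at hx
    exact hcon x hx
  have hch : ∀ c, (shiftw φ y c l ++ shiftw φ y c l).IsChain RedRel := by
    intro c
    have := shiftw_chain φ y (l ++ l) c hl
    rwa [shiftw_append, htot, add_zero] at this
  have hsing : ∀ c n0, (∃ x ∈ shiftw φ y c l, x.2.1 = n0) →
      ∀ x ∈ factorSubgroup (U := H) ZV {k | (k : ℤ) ≠ n0},
      x ∈ Subgroup.normalClosure {ev Coprod.inl (gz H) (shiftw φ y c l)} → x = 1 := by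
    intro c n0 hn0
    apply gz_single hH _ (hch c) n0 hn0
    apply IH
    rw [← shiftw_length φ y l c]
    obtain ⟨x, hx, hxn⟩ := hnsame c n0
    refine lt_of_le_of_ne List.countP_le_length ?_
    intro h
    rw [List.countP_eq_length] at h
    exact hxn (by simpa using h x hx)
  -- extremal heights
  have hne0 : shiftw φ y 0 l ≠ [] := by
    rw [← List.length_pos_iff_ne_nil, shiftw_length, List.length_pos_iff_ne_nil]
    exact hne
  obtain ⟨x0, hx0⟩ := List.exists_mem_of_ne_nil _ hne0
  let S : Finset ℤ := ((shiftw φ y 0 l).map fun x => x.2.1).toFinset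
  have hS : ∀ n, n ∈ S ↔ ∃ x ∈ shiftw φ y 0 l, x.2.1 = n := by
    intro n
    simp only [S, List.mem_toFinset, List.mem_map]
  have hSne : S.Nonempty := ⟨_, (hS _).2 ⟨x0, hx0, rfl⟩⟩
  obtain ⟨xA, hxA, hA⟩ := (hS _).1 (S.min'_mem hSne)
  obtain ⟨xO, hxO, hO⟩ := (hS _).1 (S.max'_mem hSne)
  have hsh : ∀ c, shiftw φ y c l = (shiftw φ y 0 l).map fun x => (x.1, x.2.1 + c, x.2.2) := by
    intro c
    rw [← shiftw_add, zero_add]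
  let r : ↥(Set.univ : Set ℤ) → Coprod H (CoprodI ZV) := fun c =>
    ev Coprod.inl (gz H) (shiftw φ y c l)
  have key := stag (U := H) ZV r (fun c => S.min' hSne + c) (fun c => S.max' hSne + c) ?_ ?_ ?_ ?_ ?_
    1 0
  rotate_left
  · intro c
    apply gz_mem_fs
    intro x hx
    rw [hsh] at hx
    obtain ⟨z, hz, rfl⟩ := List.mem_map.1 hx
    have h1 := S.min'_le _ ((hS _).2 ⟨z, hz, rfl⟩)
    have h2 := S.le_max' _ ((hS _).2 ⟨z, hz, rfl⟩)
    exact ⟨by simpa using h1, by simpa using h2⟩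
  · intro c
    have := S.min'_le _ (S.max'_mem hSne)
    simpa using this
  · intro j k hjk
    constructor <;> simpa using hjk
  · intro c
    apply hsing
    rw [hsh]
    exact ⟨_, List.mem_map.2 ⟨xA, hxA, rfl⟩, by simp [hA]⟩
  · intro c
    apply hsing
    rw [hsh]
    exact ⟨_, List.mem_map.2 ⟨xO, hxO, rfl⟩, by simp [hO]⟩
  let q := QuotientGroup.mk' (Subgroup.normalClosure (Set.range r))
  refine wreath_solution φ y (q.comp Coprod.inl) ?_ (fun n => q (gz H n)) l htot ?_
  · rw [injective_iff_map_eq_one]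
    intro h hh
    have h1 : (Coprod.inl h : Coprod H (CoprodI ZV)) ∈ Subgroup.normalClosure (Set.range r) :=
      (QuotientGroup.eq_one_iff _).1 hh
    have h2 := key _ (inl_mem_fs _ _ h) h1
    have h3 : {l : (Set.univ : Set ℤ) | 1 ≤ S.min' hSne + (l : ℤ) ∧ S.max' hSne + (l : ℤ) ≤ 0} = ∅ := by
      ext c
      have := S.min'_le _ (S.max'_mem hSne)
      simp only [Set.mem_ofPred_eq, Set.mem_empty_iff_false, iff_false]
      omega
    rw [h3, Set.image_empty, Subgroup.normalClosure_empty, Subgroup.mem_bot] at h2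
    exact Coprod.inl_injective (by rw [h2, map_one])
  · intro c
    rw [← map_ev]
    exact (QuotientGroup.eq_one_iff _).2 (Subgroup.subset_normalClosure ⟨⟨c, trivial⟩, rfl⟩)

/-! ### Solving a single equation -/

/-- The equation `l` has a solution over `H`. -/
def Sol {H : Type} [Group H] (l : EWord H Unit) : Prop :=
  ∃ (L : Type) (_ : Group L) (f : H →* L) (e : L), Function.Injective f ∧ ev f (fun _ => e) l = 1

theorem ev_map {K H N L : Type} [Group K] [Group H] [Group L] (i : K →* H) (f : H →* L)
    (e : N → L) (l : EWord K N) :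
    ev f e (l.map fun x => (i x.1, x.2)) = ev (f.comp i) e l := by
  induction l with
  | nil => simp
  | cons x l ih => simp [ih]

theorem sol_map {K H : Type} [Group K] [Group H] (i : K →* H) (hi : Function.Injective i)
    (l : EWord K Unit) (hl : Sol l) : Sol (l.map fun x => (i x.1, x.2)) := by
  obtain ⟨L, _, f, e, hf, he⟩ := hl
  obtain ⟨M, _, p, q, hp, hq, h⟩ := exists_amalgam f i hf hi
  refine ⟨M, inferInstance, q, p e, hq, ?_⟩
  have h2 : q.comp i = p.comp f := by ext a; exact (h a).symm
  rw [ev_map, h2]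
  have := map_ev f (fun _ => e) p l
  rw [he, map_one] at this
  exact this.symm

theorem exists_lift_list {α β : Type} (F : α → β) (P : α → Prop) (l : List β)
    (h : ∀ z ∈ l, ∃ x, F x = z ∧ P x) : ∃ m : List α, m.map F = l ∧ ∀ x ∈ m, P x := by
  induction l with
  | nil => exact ⟨[], rfl, by simp⟩
  | cons z l ih =>
    obtain ⟨m, hm, hP⟩ := ih fun w hw => h w (by simp [hw])
    obtain ⟨x, hx, hPx⟩ := h z (by simp)
    exact ⟨x :: m, by simp [hm, hx], by simpa using ⟨hPx, hP⟩⟩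

theorem isChain_double {α : Type} {R : α → α → Prop} (l : List α) (h : (l ++ l).IsChain R)
    (z : α) (hz : z ∈ l) : ∃ x ∈ l, R x z := by
  obtain ⟨l1, l2, rfl⟩ := List.append_of_mem hz
  rcases List.eq_nil_or_concat (l1 ++ z :: l2 ++ l1) with h0 | ⟨m, x, hm⟩
  · simp at h0
  · refine ⟨x, ?_, ?_⟩
    · have : x ∈ l1 ++ z :: l2 ++ l1 := by rw [hm]; simp
      simp only [List.mem_append, List.mem_cons] at this ⊢
      tauto
    · have e1 : (l1 ++ z :: l2) ++ (l1 ++ z :: l2) = m ++ x :: z :: l2 := by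
        rw [← List.append_assoc, hm]; simp
      rw [e1] at h
      exact (List.isChain_cons_cons.1 h.right_of_append).1

theorem not_isChain_split {α : Type} {R : α → α → Prop} (l : List α) (h : ¬ l.IsChain R) :
    ∃ l1 x z l2, l = l1 ++ x :: z :: l2 ∧ ¬ R x z := by
  induction l with
  | nil => simp at h
  | cons x l ih =>
    cases l with
    | nil => simp at h
    | cons z l =>
      by_cases hxz : R x z
      · obtain ⟨l1, a, b, l2, e1, h1⟩ := ih (fun hc => h (List.isChain_cons_cons.2 ⟨hxz, hc⟩))
        exact ⟨x :: l1, a, b, l2, by rw [e1]; rfl, h1⟩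
      · exact ⟨[], x, z, l, rfl, hxz⟩

theorem exists_lin (P Q : ℤ) : ∃ x y : ℤ, (x ≠ 0 ∨ y ≠ 0) ∧ x * P + y * Q = 0 := by
  by_cases h : P = 0
  · exact ⟨1, 0, by simp, by simp [h]⟩
  · exact ⟨Q, -P, Or.inr (by simpa using h), by ring⟩

theorem li_subgroup {H : Type} [Group H] (hH : LocallyIndicable H) (C : Subgroup H) :
    LocallyIndicable C := li_of_injective C.subtype C.subtype_injective hH

theorem exists_height {H : Type} [Group H] (hH : LocallyIndicable H) (S : Set H) (hS : S.Finite)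
    (hne : ∃ s ∈ S, s ≠ 1) : ∃ ψ : Subgroup.closure S →* Multiplicative ℤ,
      ∃ s, ∃ hs : s ∈ S, (ψ ⟨s, Subgroup.subset_closure hs⟩).toAdd ≠ 0 := by
  obtain ⟨s, hs, hs1⟩ := hne
  obtain ⟨ψ, hψ⟩ := hH (Subgroup.closure S)
    (fun h => hs1 (by
      have := Subgroup.subset_closure (k := S) hs
      rw [h] at this
      exact Subgroup.mem_bot.1 this))
    ((Subgroup.fg_iff _).2 ⟨S, rfl, hS⟩)
  refine ⟨ψ, ?_⟩
  by_contra hcon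
  push Not at hcon
  have h1 : ∀ c (hc : c ∈ Subgroup.closure S), ψ ⟨c, hc⟩ = 1 := by
    intro c hc
    induction hc using Subgroup.closure_induction with
    | mem x hx => exact hcon x hx
    | one => exact map_one ψ
    | mul x y hx hy h1 h2 =>
      have := map_mul ψ ⟨x, hx⟩ ⟨y, hy⟩
      rw [h1, h2] at this
      simpa using this
    | inv x hx h1 =>
      have := map_inv ψ ⟨x, hx⟩
      rw [h1, inv_one] at this
      exact this
  obtain ⟨c, hc⟩ := hψ (Multiplicative.ofAdd 1)
  rw [h1 c.1 c.2] at hc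
  simpa using congrArg Multiplicative.toAdd hc

theorem list_coeffs_finite {H : Type} (l : EWord H Unit) (p : H × Unit × Bool → Prop) :
    {h : H | ∃ x ∈ l, p x ∧ x.1 = h}.Finite := by
  apply (l.map fun x => x.1).finite_toSet.subset
  rintro _ ⟨x, hx, _, rfl⟩
  exact List.mem_map.2 ⟨x, hx, rfl⟩

theorem tot_lin {H : Type} [Group H] (φ ψ χ : H →* Multiplicative ℤ) (p q x y s : ℤ)
    (l : EWord H Unit)
    (h : ∀ z ∈ l, (φ z.1).toAdd = x * (ψ z.1).toAdd + y * (χ z.1).toAdd)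
    (hs : s = x * p + y * q) :
    tot φ s l = x * tot ψ p l + y * tot χ q l := by
  induction l with
  | nil => simp
  | cons z l ih =>
    rw [tot_cons, tot_cons, tot_cons, ih fun w hw => h w (by simp [hw]), h z (by simp), hs]
    cases z.2.2 <;> simp <;> ring

theorem sol_one {H : Type} [Group H] (l : EWord H Unit) (h : ∀ x ∈ l, x.1 = 1) : Sol l := by
  refine ⟨H, inferInstance, MonoidHom.id H, 1, Function.injective_id, ?_⟩
  induction l with
  | nil => simp
  | cons x l ih =>
    rw [ev_cons, ih fun y hy => h y (by simp [hy]), h x (by simp)]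
    cases x.2.2 <;> simp

/-- The case where some coefficient between equal signs is trivial. -/
theorem solve_norm {H : Type} [Group H] (hH : LocallyIndicable H) (l : EWord H Unit)
    (IH : ∀ k < l.length, Solves k) (hne : l ≠ []) (hl : (l ++ l).IsChain RedRel)
    (l1 l2 : EWord H Unit) (u v : H × Unit × Bool) (hs : l ++ l = l1 ++ u :: v :: l2)
    (huv : u.2.2 = v.2.2) (hv : v.1 = 1) : Sol l := by
  by_cases h1 : ∀ x ∈ l, x.1 = 1
  · exact sol_one l h1
  push Not at h1
  obtain ⟨x, hx, hx1⟩ := h1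
  let S : Set H := {h : H | ∃ x ∈ l, True ∧ x.1 = h}
  obtain ⟨ψ, s, hsS, hψ⟩ := exists_height hH S (list_coeffs_finite l fun _ => True)
    ⟨x.1, ⟨x, hx, trivial, rfl⟩, hx1⟩
  let C := Subgroup.closure S
  let F : C × Unit × Bool → H × Unit × Bool := fun x => (C.subtype x.1, x.2)
  obtain ⟨m, hm, -⟩ := exists_lift_list F (fun _ => True) l (fun z hz =>
    ⟨(⟨z.1, Subgroup.subset_closure ⟨z, hz, trivial, rfl⟩⟩, z.2), rfl, trivial⟩)
  obtain ⟨a, b, hab, h0⟩ := exists_lin (tot ψ 0 m) (tot 1 1 m)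
  have hlen : l.length = m.length := by rw [← hm, List.length_map]
  have hsolm : Sol m → Sol l := by
    intro h
    rw [← hm]
    exact sol_map C.subtype C.subtype_injective m h
  apply hsolm
  have hF1 : ∀ z, (F z).1 = 1 ↔ z.1 = 1 := fun z => by simp [F]
  rw [← hm, ← List.map_append] at hl hs
  refine solve_shift (li_subgroup hH C) m (by rwa [← hlen]) (by rintro rfl; exact hne hm.symm) ?_
    ((zpowGroupHom a).comp ψ) b ?_ ?_
  · rw [List.isChain_map] at hl
    exact hl.imp fun x z h _ hz => h rfl ((hF1 z).2 hz)
  · rw [tot_lin _ ψ 1 0 1 a b b m (by simp) (by simp), h0]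
  · intro hch
    have hb : b = 0 := by
      obtain ⟨m1, m2, e1, e2, e3⟩ := List.map_eq_append_iff.1 hs
      obtain ⟨u', m3, e4, e5, e6⟩ := List.map_eq_cons_iff.1 e3
      obtain ⟨v', m4, e7, e8, e9⟩ := List.map_eq_cons_iff.1 e6
      rw [e1, e4, e7] at hch
      have := (List.isChain_cons_cons.1 hch.right_of_append).1
      rw [← e8] at hv huv
      rw [← e5] at huv
      rw [(hF1 v').1 hv] at this
      have h3 : u'.2.2 = v'.2.2 := huv
      rw [h3] at this
      rw [map_one] at this
      revert this
      cases v'.2.2 <;> simp <;> omega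
    subst hb
    have ha : a ≠ 0 := by simpa using hab
    obtain ⟨w, hw, -, hws⟩ := id hsS
    rw [← hm] at hw
    obtain ⟨z, hz, rfl⟩ := List.mem_map.1 hw
    obtain ⟨y, -, hy⟩ := isChain_double m hch z hz
    have h4 : z.1 = ⟨s, Subgroup.subset_closure hsS⟩ := Subtype.ext hws
    rw [h4] at hy
    have h5 : a * (ψ ⟨s, Subgroup.subset_closure hsS⟩).toAdd = 0 := by
      have : a * (ψ ⟨s, Subgroup.subset_closure hsS⟩).toAdd = cond z.2.2 0 0 - cond y.2.2 0 0 := by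
        simpa using hy
      rw [this]
      cases z.2.2 <;> cases y.2.2 <;> simp
    exact (mul_ne_zero ha hψ) h5

/-! Substitutions -/

section nrm
variable {H : Type} [Group H]

/-- The substitution of a product with a constant for the variable. -/
def nrm (p q : Bool → H) : Bool → EWord H Unit → EWord H Unit
  | _, [] => []
  | b, x :: l => (p b * x.1 * q x.2.2, x.2) :: nrm p q x.2.2 l

/-- The last sign of a word. -/
def lastb : Bool → EWord H Unit → Bool
  | b, [] => b
  | _, x :: l => lastb x.2.2 l

theorem lastb_concat (b : Bool) (l : EWord H Unit) (x : H × Unit × Bool) :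
    lastb b (l ++ [x]) = x.2.2 := by
  induction l generalizing b with
  | nil => rfl
  | cons y l ih => exact ih _

theorem nrm_append (p q : Bool → H) (b : Bool) (l m : EWord H Unit) :
    nrm p q b (l ++ m) = nrm p q b l ++ nrm p q (lastb b l) m := by
  induction l generalizing b with
  | nil => rfl
  | cons y l ih => simp [nrm, lastb, ih]

theorem nrm_length (p q : Bool → H) (b : Bool) (l : EWord H Unit) :
    (nrm p q b l).length = l.length := by
  induction l generalizing b with
  | nil => rfl
  | cons y l ih => simp [nrm, ih]

theorem nrm_ev {L : Type} [Group L] (p q : Bool → H) (f : H →* L) (e e' : L)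
    (h : ∀ b, f (q b) * cond b e' e'⁻¹ * f (p b) = cond b e e⁻¹) (b : Bool) (l : EWord H Unit) :
    ev f (fun _ => e') (nrm p q b l) * f (p (lastb b l)) = f (p b) * ev f (fun _ => e) l := by
  induction l generalizing b with
  | nil => simp [nrm, lastb]
  | cons x l ih =>
    rw [nrm, ev_cons, ev_cons, lastb, mul_assoc, ih, ← h]
    simp [mul_assoc]

theorem nrm_chain (p q : Bool → H) (hpq : ∀ b h, p b * h * q (!b) = 1 → h = 1) (b : Bool)
    (l : EWord H Unit) (hl : l.IsChain RedRel) : (nrm p q b l).IsChain RedRel := by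
  induction l generalizing b with
  | nil => simp [nrm]
  | cons x l ih =>
    cases l with
    | nil => simp [nrm]
    | cons z l =>
      rw [List.isChain_cons_cons] at hl
      have := ih x.2.2 hl.2
      simp only [nrm] at this ⊢
      rw [List.isChain_cons_cons]
      refine ⟨fun _ h => ?_, this⟩
      by_contra hne
      simp only at h hne
      have h2 : z.2.2 = !x.2.2 := by
        revert hne
        cases z.2.2 <;> cases x.2.2 <;> simp
      rw [h2] at h
      exact hne (hl.1 rfl (hpq _ _ h))

end nrm

/-- The case where two cyclically adjacent signs agree. -/
theorem solve_caseA {H : Type} [Group H] (hH : LocallyIndicable H) (l : EWord H Unit)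
    (IH : ∀ k < l.length, Solves k) (hne : l ≠ []) (hl : (l ++ l).IsChain RedRel)
    (hs : ¬ (l ++ l).IsChain fun x z => x.2.2 ≠ z.2.2) : Sol l := by
  obtain ⟨l1, u, v, l2, hs, huv⟩ := not_isChain_split _ hs
  simp only [ne_eq, not_not] at huv
  let d : H := cond v.2.2 v.1⁻¹ v.1
  let p : Bool → H := fun b => cond b d 1
  let q : Bool → H := fun b => cond b 1 d⁻¹
  obtain ⟨b, hb⟩ : ∃ b, lastb b l = b := by
    rcases List.eq_nil_or_concat l with h0 | ⟨m, x, hm⟩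
    · exact absurd h0 hne
    · refine ⟨x.2.2, ?_⟩
      rw [hm, List.concat_eq_append, lastb_concat]
  have hdbl : nrm p q b (l ++ l) = nrm p q b l ++ nrm p q b l := by
    rw [nrm_append, hb]
  have hsol : Sol (nrm p q b l) := by
    refine solve_norm hH _ (by simpa [nrm_length] using IH) ?_ ?_ (nrm p q b l1) (nrm p q v.2.2 l2)
      (p (lastb b l1) * u.1 * q u.2.2, u.2) (p u.2.2 * v.1 * q v.2.2, v.2) ?_ ?_ ?_
    · rw [← List.length_pos_iff_ne_nil, nrm_length, List.length_pos_iff_ne_nil]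
      exact hne
    · rw [← hdbl]
      apply nrm_chain _ _ _ _ _ hl
      intro b h hh
      cases b
      · simpa [p, q] using hh
      · simpa [p, q] using hh
    · rw [← hdbl, hs, nrm_append]
      rfl
    · exact huv
    · rw [huv]
      simp only [p, q, d]
      cases v.2.2 <;> simp
  obtain ⟨L, _, f, e, hf, he⟩ := hsol
  refine ⟨L, inferInstance, f, e * f d, hf, ?_⟩
  have := nrm_ev p q f (e * f d) e (by intro b; cases b <;> simp [p, q]) b l
  rw [he, hb, one_mul] at this
  simpa using this

theorem alt_ev {K H L : Type} [Group K] [Group H] [Group L] (g : K →* L) (f : H →* L) (s e : L)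
    (i : K × Unit × Bool → H) (l : EWord K Unit)
    (ht : ∀ x ∈ l, g x.1 = cond x.2.2 (f (i x)) (s * f (i x) * s⁻¹))
    (y : K × Unit × Bool) (hc : (y :: l).IsChain fun x z => x.2.2 ≠ z.2.2) :
    ev g (fun _ => e) l * cond (lastb y.2.2 l) s 1 =
      cond y.2.2 s 1 * ev f (fun _ => e * s) (l.map fun x => (i x, x.2)) := by
  induction l generalizing y with
  | nil => simp [lastb]
  | cons x l ih =>
    rw [List.isChain_cons_cons] at hc
    have h1 := ih (fun z hz => ht z (by simp [hz])) x hc.2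
    have h2 : y.2.2 = !x.2.2 := by
      have := hc.1
      revert this
      cases y.2.2 <;> cases x.2.2 <;> simp
    rw [ev_cons, lastb, mul_assoc, h1, ht x (by simp), h2, List.map_cons, ev_cons]
    cases h3 : x.2.2 <;> simp [h3, mul_assoc]

/-- The alternating case. -/
theorem solve_caseB {H : Type} [Group H] (hH : LocallyIndicable H) (l : EWord H Unit)
    (IH : ∀ k < l.length, Solves k) (hne : l ≠ []) (hl : (l ++ l).IsChain RedRel)
    (hs : (l ++ l).IsChain fun x z => x.2.2 ≠ z.2.2) : Sol l := by
  have hnt : ∀ x ∈ l, x.1 ≠ 1 := by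
    intro z hz h1
    have h2 : (l ++ l).IsChain fun x z => RedRel x z ∧ x.2.2 ≠ z.2.2 := by
      rw [List.isChain_iff_getElem] at hl hs ⊢
      exact fun i hi => ⟨hl i hi, hs i hi⟩
    obtain ⟨x, hx, h3, h4⟩ := isChain_double l h2 z hz
    exact h4 (h3 rfl h1)
  let S : Bool → Set H := fun b => {h : H | ∃ x ∈ l, x.2.2 = b ∧ x.1 = h}
  have hSf : ∀ b, (S b).Finite := fun b => list_coeffs_finite l fun x => x.2.2 = b
  obtain ⟨x0, hx0⟩ := List.exists_mem_of_ne_nil _ hne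
  obtain ⟨x1, hx1, hx01⟩ := isChain_double l hs x0 hx0
  have hSn : ∀ b, ∃ s ∈ S b, s ≠ 1 := by
    intro b
    by_cases h : x0.2.2 = b
    · exact ⟨x0.1, ⟨x0, hx0, h, rfl⟩, hnt _ hx0⟩
    · refine ⟨x1.1, ⟨x1, hx1, ?_, rfl⟩, hnt _ hx1⟩
      revert h hx01
      cases x0.2.2 <;> cases x1.2.2 <;> cases b <;> simp
  obtain ⟨ψ, a, haS, ha⟩ := exists_height hH (S true) (hSf _) (hSn _)
  obtain ⟨χ, b, hbS, hb⟩ := exists_height hH (S false) (hSf _) (hSn _)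
  let A := Subgroup.closure (S true)
  let B := Subgroup.closure (S false)
  let i : (A × B) × Unit × Bool → H := fun x => cond x.2.2 (x.1.1 : H) (x.1.2 : H)
  obtain ⟨m, hm, hP⟩ := exists_lift_list (fun x => (i x, x.2))
    (fun x => cond x.2.2 (x.1.2 = 1) (x.1.1 = 1)) l (by
      rintro ⟨h, _, _ | _⟩ hz
      · exact ⟨((1, ⟨h, Subgroup.subset_closure ⟨_, hz, rfl, rfl⟩⟩), (), false), rfl, rfl⟩
      · exact ⟨((⟨h, Subgroup.subset_closure ⟨_, hz, rfl, rfl⟩⟩, 1), (), true), rfl, rfl⟩)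
  have hlen : l.length = m.length := by rw [← hm, List.length_map]
  rw [← hm, ← List.map_append, List.isChain_map] at hl hs
  have hsol : Sol m := by
    obtain ⟨x, y, hxy, h0⟩ := exists_lin (tot (ψ.comp (MonoidHom.fst A B)) 0 m)
      (tot (χ.comp (MonoidHom.snd A B)) 0 m)
    let φ : A × B →* Multiplicative ℤ := ((zpowGroupHom x).comp (ψ.comp (MonoidHom.fst A B))) *
      ((zpowGroupHom y).comp (χ.comp (MonoidHom.snd A B)))
    have hφ : ∀ z, (φ z).toAdd = x * (ψ z.1).toAdd + y * (χ z.2).toAdd := by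
      intro z
      simp [φ]
    refine solve_shift (li_prod (li_subgroup hH A) (li_subgroup hH B)) m (by rwa [← hlen])
      (by rintro rfl; exact hne hm.symm) ?_ φ 0 ?_ ?_
    · refine hl.imp fun u v h _ hv => h rfl ?_
      simp only [i, hv]
      cases v.2.2 <;> simp
    · rw [tot_lin φ (ψ.comp (MonoidHom.fst A B)) (χ.comp (MonoidHom.snd A B)) 0 0 x y 0 m (fun z _ => hφ z.1) (by simp), h0]
    · intro hch
      have hz0 : ∀ z ∈ m, x * (ψ z.1.1).toAdd + y * (χ z.1.2).toAdd = 0 := by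
        intro z hz
        obtain ⟨w, -, hw⟩ := isChain_double m hch z hz
        rw [← hφ, hw]
        cases z.2.2 <;> cases w.2.2 <;> simp
      have hx : x = 0 := by
        obtain ⟨w, hw, hwb, hws⟩ := id haS
        rw [← hm] at hw
        obtain ⟨z, hz, rfl⟩ := List.mem_map.1 hw
        have h1 := hz0 z hz
        have h2 := hP z hz
        simp only at hwb
        simp only [hwb, i, cond_true] at hws h2
        have h4 : z.1.1 = ⟨a, Subgroup.subset_closure haS⟩ := Subtype.ext hws
        rw [h2, h4, map_one] at h1
        simpa [ha] using h1
      have hy : y = 0 := by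
        obtain ⟨w, hw, hwb, hws⟩ := id hbS
        rw [← hm] at hw
        obtain ⟨z, hz, rfl⟩ := List.mem_map.1 hw
        have h1 := hz0 z hz
        have h2 := hP z hz
        simp only at hwb
        simp only [hwb, i, cond_false] at hws h2
        have h4 : z.1.2 = ⟨b, Subgroup.subset_closure hbS⟩ := Subtype.ext hws
        rw [h2, h4, map_one] at h1
        simpa [hb] using h1
      simp [hx, hy] at hxy
  obtain ⟨L0, _, f0, e0, hf0, he0⟩ := hsol
  obtain ⟨L1, _, i1, j1, hi1, hj1, h1⟩ := exists_amalgam A.subtype (f0.comp (MonoidHom.inl A B))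
    A.subtype_injective (hf0.comp fun x y h => by simpa using h)
  obtain ⟨L, _, k, s, hk, hks⟩ := exists_conj (i1.comp B.subtype)
    ((j1.comp f0).comp (MonoidHom.inr A B)) (hi1.comp B.subtype_injective)
    ((hj1.comp hf0).comp fun x y h => by simpa using h)
  refine ⟨L, inferInstance, k.comp i1, k (j1 e0) * s, hk.comp hi1, ?_⟩
  rcases List.eq_nil_or_concat m with h0 | ⟨m', x, hmx⟩
  · rw [h0] at hm
    exact absurd hm.symm hne
  rw [List.concat_eq_append] at hmx
  have key := alt_ev ((k.comp j1).comp f0) (k.comp i1) s (k (j1 e0)) i m ?_ x ?_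
  · have h2 := map_ev f0 (fun _ => e0) (k.comp j1) m
    rw [he0, map_one] at h2
    have h3 : lastb x.2.2 m = x.2.2 := by rw [hmx, lastb_concat]
    have h4 : ev ((k.comp j1).comp f0) (fun _ => k (j1 e0)) m = 1 := h2.symm
    rw [h3, h4, one_mul] at key
    rw [← hm]
    simpa using key
  · intro z hz
    have h2 := hP z hz
    obtain ⟨⟨za, zb⟩, _, _ | _⟩ := z
    · simp only [cond_false] at h2
      have := hks zb
      simp only [i, cond_false, h2]
      simpa using this.symm
    · simp only [cond_true] at h2
      have := h1 za
      simp only [i, cond_true, h2]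
      simpa using congrArg k this.symm
  · have h5 : m ++ m = m' ++ x :: m := by
      conv_lhs => rw [hmx]
      simp [hmx]
    rw [h5] at hs
    exact hs.right_of_append

theorem solves (k : ℕ) : Solves k := by
  induction k using Nat.strong_induction_on with
  | _ k IH =>
    intro H _ hH l hk hne hl
    subst hk
    by_cases hs : (l ++ l).IsChain fun x z => x.2.2 ≠ z.2.2
    · exact solve_caseB hH l IH hne hl hs
    · exact solve_caseA hH l IH hne hl hs

/-! ### Words in the free product -/

open Classical in
/-- The retraction killing the factors outside `T`. -/
noncomputable def retr (T : Set I) : Coprod U (CoprodI V) →* Coprod U (CoprodI V) :=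
  Coprod.lift Coprod.inl
    (CoprodI.lift fun i => if i ∈ T then Coprod.inr.comp CoprodI.of else 1)

theorem retr_inl (T : Set I) (u : U) :
    retr V T (Coprod.inl u) = Coprod.inl u := by
  simp [retr]

theorem retr_mem (T : Set I) (i : I) (hi : i ∈ T) (v : V i) :
    retr (U := U) V T (Coprod.inr (CoprodI.of v)) = Coprod.inr (CoprodI.of v) := by
  simp [retr, hi]

theorem retr_not_mem (T : Set I) (i : I) (hi : i ∉ T) (v : V i) :
    retr (U := U) V T (Coprod.inr (CoprodI.of v)) = 1 := by
  simp [retr, hi]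

theorem retr_fs (T : Set I) (x : Coprod U (CoprodI V)) (hx : x ∈ factorSubgroup V T) :
    retr V T x = x :=
  fs_hom_eq V (retr V T) (MonoidHom.id _) (retr_inl V T) (fun k hk v => retr_mem V T k hk v) hx

theorem fs_inter (S T : Set I) (x : Coprod U (CoprodI V)) (hS : x ∈ factorSubgroup V S)
    (hT : x ∈ factorSubgroup V T) : x ∈ factorSubgroup V (S ∩ T) := by
  have h : factorSubgroup V S ≤ (factorSubgroup (U := U) V (S ∩ T)).comap (retr V T) := by
    rw [factorSubgroup, Subgroup.closure_le]
    rintro _ (⟨u, rfl⟩ | hv)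
    · rw [SetLike.mem_coe, Subgroup.mem_comap, retr_inl]
      exact inl_mem_fs V _ u
    · obtain ⟨k, hk, v, rfl⟩ := Set.mem_iUnion₂.1 hv
      rw [SetLike.mem_coe, Subgroup.mem_comap]
      by_cases hkT : k ∈ T
      · simp only [retr_mem V T k hkT]
        exact inr_mem_fs V (Set.mem_inter hk hkT) v
      · simp only [retr_not_mem V T k hkT]
        exact one_mem _
  have := h hS
  rwa [Subgroup.mem_comap, retr_fs V T x hT] at this

theorem fs_univ (x : Coprod U (CoprodI V)) : x ∈ factorSubgroup V Set.univ := by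
  induction x using Coprod.induction_on with
  | inl u => exact inl_mem_fs V _ u
  | inr w =>
    induction w using CoprodI.induction_on with
    | one => rw [map_one]; exact one_mem _
    | of i v => exact inr_mem_fs V (Set.mem_univ i) v
    | mul a b ha hb => rw [map_mul]; exact mul_mem ha hb
  | mul a b ha hb => exact mul_mem ha hb

theorem fs_avoid (F : Finset I) (x : Coprod U (CoprodI V))
    (h : ∀ k ∈ F, x ∈ factorSubgroup V {i | i ≠ k}) : x ∈ factorSubgroup V {i | i ∉ F} := by
  classical
  induction F using Finset.induction_on with
  | empty => exact fs_mono V (fun i _ => by simp) (fs_univ V x)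
  | insert k F hk ih =>
    have h1 := ih fun i hi => h i (Finset.mem_insert_of_mem hi)
    have h2 := fs_inter V _ _ x h1 (h k (Finset.mem_insert_self _ _))
    refine fs_mono V ?_ h2
    rintro i ⟨hi1, hi2⟩ hi3
    rcases Finset.mem_insert.1 hi3 with h4 | h4
    · exact hi2 h4
    · exact hi1 h4

section letters

/-- Letters of the free product. -/
abbrev Ltr (U : Type) {I : Set ℤ} (V : I → Type) := U ⊕ (Σ i, V i)

/-- The coefficient group. -/
abbrev HH (U : Type) {I : Set ℤ} (V : I → Type) := U × (∀ i, V i)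

/-- The factor of a letter. -/
def lidx : Ltr U V → Option I
  | Sum.inl _ => none
  | Sum.inr d => some d.1

/-- A letter as an element of the free product. -/
def lG : Ltr U V → Coprod U (CoprodI V)
  | Sum.inl u => Coprod.inl u
  | Sum.inr d => Coprod.inr (CoprodI.of d.2)

/-- A letter as an element of the coefficient group. -/
def lH : Ltr U V → HH U V
  | Sum.inl u => (u, 1)
  | Sum.inr d => (1, Pi.mulSingle d.1 d.2)

/-- Conjugate each factor by its own element. -/
def ghom {L : Type} [Group L] (f : HH U V →* L) (E : Option I → L) : Coprod U (CoprodI V) →* L :=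
  Coprod.lift ((MulAut.conj (E none)).toMonoidHom.comp (f.comp (MonoidHom.inl U (∀ i, V i))))
    (CoprodI.lift fun i => (MulAut.conj (E (some i))).toMonoidHom.comp
      (f.comp ((MonoidHom.inr U (∀ i, V i)).comp (MonoidHom.mulSingle V i))))

theorem ghom_lG {L : Type} [Group L] (f : HH U V →* L) (E : Option I → L) (d : Ltr U V) :
    ghom V f E (lG V d) = E (lidx V d) * f (lH V d) * (E (lidx V d))⁻¹ := by
  rcases d with u | ⟨i, v⟩ <;> simp [ghom, lG, lH, lidx]

/-- The word associated with a list of letters. -/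
def lword : List (Ltr U V) → EWord (HH U V) (Option I)
  | [] => []
  | d :: l => (1, lidx V d, true) :: (lH V d, lidx V d, false) :: lword l

theorem lword_append (l m : List (Ltr U V)) : lword V (l ++ m) = lword V l ++ lword V m := by
  induction l with
  | nil => rfl
  | cons d l ih => simp [lword, ih]

theorem ghom_prod {L : Type} [Group L] (f : HH U V →* L) (E : Option I → L)
    (l : List (Ltr U V)) : ghom V f E (l.map (lG V)).prod = ev f E (lword V l) := by
  induction l with
  | nil => simp [lword]
  | cons d l ih => simp [lword, ih, ghom_lG, mul_assoc]

theorem lword_chain (l : List (Ltr U V)) (hl : l.IsChain fun d d' => lidx V d ≠ lidx V d')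
    (hn : ∀ d ∈ l, lH V d ≠ 1) : (lword V l).IsChain RedRel := by
  induction l with
  | nil => simp [lword]
  | cons d l ih =>
    have h1 := ih hl.tail fun d' hd' => hn d' (by simp [hd'])
    have h2 : RedRel ((1, lidx V d, true) : HH U V × Option I × Bool)
        (lH V d, lidx V d, false) := fun _ h => absurd h (hn d (by simp))
    cases l with
    | nil => simp [lword, h2]
    | cons d' l =>
      rw [List.isChain_cons_cons] at hl
      simp only [lword] at h1 ⊢
      rw [List.isChain_cons_cons, List.isChain_cons_cons]
      exact ⟨h2, fun h => absurd h hl.1, h1⟩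

/-- Reduced lists of letters. -/
def LRed (l : List (Ltr U V)) : Prop :=
  (l.IsChain fun d d' => lidx V d ≠ lidx V d') ∧ ∀ d ∈ l, lH V d ≠ 1

theorem lG_one (d : Ltr U V) (h : lH V d = 1) : lG V d = 1 := by
  rcases d with u | ⟨i, v⟩
  · have : u = 1 := congrArg Prod.fst h
    simp [lG, this]
  · have h2 : Pi.mulSingle i v = (1 : ∀ i, V i) := congrArg Prod.snd h
    have : v = 1 := by simpa using h2
    simp [lG, this]

theorem lG_mul (d d' : Ltr U V) (h : lidx V d = lidx V d') :
    ∃ d'', lidx V d'' = lidx V d' ∧ lG V d'' = lG V d * lG V d' := by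
  rcases d with u | ⟨i, v⟩ <;> rcases d' with u' | ⟨i', v'⟩ <;> simp only [lidx] at h
  · exact ⟨Sum.inl (u * u'), rfl, by simp [lG]⟩
  · cases h
  · cases h
  · obtain rfl : i = i' := by simpa using h
    exact ⟨Sum.inr ⟨i, v * v'⟩, rfl, by simp [lG]⟩

theorem lred_cons (d : Ltr U V) (l : List (Ltr U V)) (hl : LRed V l) :
    ∃ l', LRed V l' ∧ (l'.map (lG V)).prod = lG V d * (l.map (lG V)).prod := by
  by_cases hd : lH V d = 1
  · exact ⟨l, hl, by simp [lG_one V d hd]⟩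
  cases l with
  | nil => exact ⟨[d], ⟨by simp, by simpa using hd⟩, by simp⟩
  | cons d' l =>
    by_cases h : lidx V d = lidx V d'
    · obtain ⟨d'', h1, h2⟩ := lG_mul V d d' h
      have hl2 : LRed V l := ⟨hl.1.tail, fun x hx => hl.2 x (by simp [hx])⟩
      by_cases hd' : lH V d'' = 1
      · refine ⟨l, hl2, ?_⟩
        rw [List.map_cons, List.prod_cons, ← mul_assoc, ← h2, lG_one V d'' hd', one_mul]
      · refine ⟨d'' :: l, ⟨?_, ?_⟩, ?_⟩
        · have h3 := hl.1
          cases l with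
          | nil => simp
          | cons z l =>
            rw [List.isChain_cons_cons] at h3 ⊢
            rw [h1]
            exact h3
        · intro x hx
          rcases List.mem_cons.1 hx with rfl | hx
          · exact hd'
          · exact hl2.2 x hx
        · simp [h2, mul_assoc]
    · refine ⟨d :: d' :: l, ⟨List.isChain_cons_cons.2 ⟨h, hl.1⟩, ?_⟩, by simp⟩
      intro x hx
      rcases List.mem_cons.1 hx with rfl | hx
      · exact hd
      · exact hl.2 x hx

theorem exists_lred (x : Coprod U (CoprodI V)) :
    ∃ l, LRed V l ∧ (l.map (lG V)).prod = x := by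
  suffices h : ∀ l, LRed V l → ∃ l', LRed V l' ∧ (l'.map (lG V)).prod = x * (l.map (lG V)).prod by
    obtain ⟨l, h1, h2⟩ := h [] ⟨by simp, by simp⟩
    exact ⟨l, h1, by simpa using h2⟩
  have hmul : ∀ a b : Coprod U (CoprodI V),
      (∀ l, LRed V l → ∃ l', LRed V l' ∧ (l'.map (lG V)).prod = a * (l.map (lG V)).prod) →
      (∀ l, LRed V l → ∃ l', LRed V l' ∧ (l'.map (lG V)).prod = b * (l.map (lG V)).prod) →
      ∀ l, LRed V l → ∃ l', LRed V l' ∧ (l'.map (lG V)).prod = a * b * (l.map (lG V)).prod := by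
    intro a b ha hb l hl
    obtain ⟨l1, h1, e1⟩ := hb l hl
    obtain ⟨l2, h2, e2⟩ := ha l1 h1
    exact ⟨l2, h2, by rw [e2, e1, mul_assoc]⟩
  induction x using Coprod.induction_on with
  | inl u => exact fun l hl => lred_cons V (Sum.inl u) l hl
  | inr w =>
    induction w using CoprodI.induction_on with
    | one => exact fun l hl => ⟨l, hl, by simp⟩
    | of i v => exact fun l hl => lred_cons V (Sum.inr ⟨i, v⟩) l hl
    | mul a b ha hb => rw [map_mul]; exact hmul _ _ ha hb
  | mul a b ha hb => exact hmul _ _ ha hb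

theorem ghom_injective : Function.Injective (ghom V (fpi (HH U V) (Option I)) (fpe (HH U V))) := by
  rw [injective_iff_map_eq_one]
  intro x hx
  obtain ⟨l, hl, rfl⟩ := exists_lred V x
  rw [ghom_prod] at hx
  by_contra hne
  refine ev_ne _ (lword_chain V l hl.1 hl.2) ?_ 1 (by rw [hx, map_one, one_mul])
  cases l with
  | nil => simp at hne
  | cons d l => simp [lword]

theorem lG_mem (d : Ltr U V) (s : Set I) (h : ∀ i, lidx V d = some i → i ∈ s) :
    lG V d ∈ factorSubgroup V s := by
  rcases d with u | ⟨i, v⟩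
  · exact inl_mem_fs V s u
  · exact inr_mem_fs V (h i rfl) v

theorem lprod_mem (l : List (Ltr U V)) (s : Set I)
    (h : ∀ d ∈ l, ∀ i, lidx V d = some i → i ∈ s) :
    (l.map (lG V)).prod ∈ factorSubgroup V s := by
  apply list_prod_mem
  intro x hx
  obtain ⟨d, hd, rfl⟩ := List.mem_map.1 hx
  exact lG_mem V d s (h d hd)

theorem lidx_mem_lword (l : List (Ltr U V)) (d : Ltr U V) (hd : d ∈ l) :
    ∃ x ∈ lword V l, x.2.1 = lidx V d := by
  induction l with
  | nil => simp at hd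
  | cons z l ih =>
    rcases List.mem_cons.1 hd with rfl | hd
    · exact ⟨_, by rw [lword]; exact List.mem_cons_self, rfl⟩
    · obtain ⟨x, hx, h⟩ := ih hd
      exact ⟨x, by simp [lword, hx], h⟩

/-- The data extracted from a cyclically reduced word. -/
theorem cyc_letters (r : Coprod U (CoprodI V)) (hr : CyclicallyReducedWord V r) :
    ∃ l : List (Ltr U V), (l.map (lG V)).prod = r ∧
      (2 ≤ l.length → LRed V (l ++ l)) := by
  obtain ⟨L, hL, hlet, hch, hcyc⟩ := hr
  obtain ⟨m, hm, hmn⟩ := exists_lift_list (lG V) (fun d => lH V d ≠ 1) L (by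
    intro z hz
    rcases hlet z hz with ⟨u, hu, rfl⟩ | ⟨i, v, hv, rfl⟩
    · exact ⟨Sum.inl u, rfl, fun h => hu (congrArg Prod.fst h)⟩
    · refine ⟨Sum.inr ⟨i, v⟩, rfl, fun h => hv ?_⟩
      have h2 : Pi.mulSingle i v = (1 : ∀ i, V i) := congrArg Prod.snd h
      simpa using h2)
  subst hm
  have hsame : ∀ d d' : Ltr U V, ¬ SameFactor V (lG V d) (lG V d') → lidx V d ≠ lidx V d' := by
    intro d d' hs h
    apply hs
    rcases d with u | ⟨i, v⟩ <;> rcases d' with u' | ⟨i', v'⟩ <;> simp only [lidx] at h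
    · exact Or.inl ⟨u, u', rfl, rfl⟩
    · cases h
    · cases h
    · obtain rfl : i = i' := by simpa using h
      exact Or.inr ⟨i, v, v', rfl, rfl⟩
  refine ⟨m, hL.symm, fun h2 => ⟨?_, ?_⟩⟩
  · have hc : m.IsChain fun d d' => lidx V d ≠ lidx V d' := by
      have : (m.map (lG V)).IsChain fun x y => ¬ SameFactor V x y := hch
      rw [List.isChain_map] at this
      exact this.imp hsame
    rw [List.isChain_append]
    refine ⟨hc, hc, ?_⟩
    intro x hx y hy
    refine (hsame y x (hcyc (by simpa using h2) _ _ ?_ ?_)).symm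
    · rw [List.head?_map, hy]; rfl
    · rw [List.getLast?_map, hx]; rfl
  · intro d hd
    rw [List.mem_append, or_self] at hd
    exact hmn d hd

/-- The Freiheitssatz for a single relator. -/
theorem freiheit (hU : LocallyIndicable U) (hV : ∀ i, LocallyIndicable (V i))
    (r : Coprod U (CoprodI V)) (hr : CyclicallyReducedWord V r) (i : I)
    (hi : UsesFactor V r i) :
    ∀ x ∈ factorSubgroup V {k | k ≠ i}, x ∈ Subgroup.normalClosure {r} → x = 1 := by
  classical
  obtain ⟨l, rfl, hl⟩ := cyc_letters V r hr
  have hocc : ∃ d ∈ l, lidx V d = some i := by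
    by_contra hcon
    push Not at hcon
    apply hi
    apply lprod_mem
    rintro d hd k hk rfl
    exact hcon d hd hk
  obtain ⟨d, hd, hdi⟩ := hocc
  by_cases h2 : 2 ≤ l.length
  · have hred := hl h2
    have hch := lword_chain V _ hred.1 hred.2
    rw [lword_append] at hch
    obtain ⟨x, hx, hxd⟩ := lidx_mem_lword V l d hd
    obtain ⟨L, _, g, e, hg, he⟩ := solve_var (li_prod hU (li_pi hV)) (lword V l) hch (some i)
      ⟨x, hx, hxd.trans hdi⟩ (solves _)
    refine single_relator _ (ghom V (fpi (HH U V) (Option I)) (fpe (HH U V))) (ghom_injective V)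
      g hg (ghom V (g.comp (fpi (HH U V) (Option I)))
        (fun n => if n = some i then e else g (fpe (HH U V) n))) _ ?_ ?_
    · rw [ghom_prod]
      exact he
    · intro x hx
      refine fs_hom_eq V _ (g.comp (ghom V (fpi (HH U V) (Option I)) (fpe (HH U V)))) ?_ ?_ hx
      · intro u
        have h1 := ghom_lG V (g.comp (fpi (HH U V) (Option I)))
          (fun n => if n = some i then e else g (fpe (HH U V) n)) (Sum.inl u)
        have h2 := ghom_lG V (fpi (HH U V) (Option I)) (fpe (HH U V)) (Sum.inl u)
        simp only [lG] at h1 h2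
        rw [MonoidHom.comp_apply, h1, h2]
        simp [lidx]
      · intro k hk v
        have hk' : k ≠ i := hk
        have h1 := ghom_lG V (g.comp (fpi (HH U V) (Option I)))
          (fun n => if n = some i then e else g (fpe (HH U V) n)) (Sum.inr ⟨k, v⟩)
        have h2 := ghom_lG V (fpi (HH U V) (Option I)) (fpe (HH U V)) (Sum.inr ⟨k, v⟩)
        simp only [lG] at h1 h2
        rw [MonoidHom.comp_apply, h1, h2]
        simp [lidx, hk']
  · have h3 : l = [d] := by
      cases l with
      | nil => simp at hd
      | cons z l =>
        have : l = [] := by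
          rw [← List.length_eq_zero_iff]
          simp only [List.length_cons] at h2
          omega
        subst this
        rw [List.mem_singleton.1 hd]
    subst h3
    refine single_relator _ (MonoidHom.id _) Function.injective_id (MonoidHom.id _)
      Function.injective_id (retr V {k | k ≠ i}) _ ?_ ?_
    · rcases d with u | ⟨k, v⟩
      · cases hdi
      · obtain rfl : k = i := by simpa [lidx] using hdi
        simp only [List.map_cons, List.map_nil, List.prod_cons, List.prod_nil, mul_one, lG]
        exact retr_not_mem V _ k (by simp) v
    · intro x hx
      exact retr_fs V _ x hx

theorem mem_used (r : Coprod U (CoprodI V)) :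
    r ∈ factorSubgroup V {k | UsesFactor V r k} := by
  classical
  obtain ⟨l, -, hl⟩ := exists_lred V r
  let T : Finset I := (l.filterMap (lidx V)).toFinset
  have h1 : r ∈ factorSubgroup V {k | k ∈ T} := by
    rw [← hl]
    apply lprod_mem
    intro d hd i hi
    exact List.mem_toFinset.2 (List.mem_filterMap.2 ⟨d, hd, hi⟩)
  have h2 := fs_avoid V (T.filter fun k => ¬ UsesFactor V r k) r (by
    intro k hk
    have := (Finset.mem_filter.1 hk).2
    rw [UsesFactor, not_not] at this
    exact this)
  refine fs_mono V ?_ (fs_inter V _ _ r h1 h2)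
  rintro k ⟨hk1, hk2⟩
  by_contra hk3
  exact hk2 (Finset.mem_filter.2 ⟨hk1, hk3⟩)

end letters

/-- **Staggered Freiheitssatz over locally indicable groups.** If `w` lies in the
normal closure of the staggered family `r_j` and only uses the factors `V_k` with
`α ≤ k ≤ ω`, then `w` lies in the normal closure of those `r_ℓ` with
`α ≤ α_{r_ℓ}` and `ω_{r_ℓ} ≤ ω`. -/
theorem staggered_freiheitssatz
    (hU : LocallyIndicable U)
    (hVnt : ∀ i, Nontrivial (V i)) (hVli : ∀ i, LocallyIndicable (V i))
    {J : Set ℤ} (r : J → Coprod U (CoprodI V)) (a o : J → ℤ)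
    (hcr : ∀ j, CyclicallyReducedWord V (r j))
    (ha : ∀ j, IsLeast {i : ℤ | ∃ h : i ∈ I, UsesFactor V (r j) ⟨i, h⟩} (a j))
    (ho : ∀ j, IsGreatest {i : ℤ | ∃ h : i ∈ I, UsesFactor V (r j) ⟨i, h⟩} (o j))
    (hstag : ∀ j k : J, (j : ℤ) < (k : ℤ) → a j < a k ∧ o j < o k)
    (w : Coprod U (CoprodI V)) (hw1 : w ≠ 1)
    (hwN : w ∈ Subgroup.normalClosure (Set.range r))
    (α ω : ℤ)
    (hwuse : w ∈ factorSubgroup V {k : I | α ≤ (k : ℤ) ∧ (k : ℤ) ≤ ω}) :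
    w ∈ Subgroup.normalClosure (r '' {ℓ : J | α ≤ a ℓ ∧ o ℓ ≤ ω}) := by
  have hset : ∀ (n : ℤ) (h : n ∈ I), {k : I | (k : ℤ) ≠ n} ⊆ {k : I | k ≠ ⟨n, h⟩} := by
    rintro n h k hk rfl
    exact hk rfl
  refine stag V r a o ?_ ?_ hstag ?_ ?_ α ω w hwuse hwN
  · intro j
    refine fs_mono V ?_ (mem_used V (r j))
    intro k hk
    exact ⟨(ha j).2 ⟨k.2, hk⟩, (ho j).2 ⟨k.2, hk⟩⟩
  · intro j
    exact (ho j).2 (ha j).1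
  · intro j x hx hn
    obtain ⟨h, hu⟩ := (ha j).1
    exact freiheit V hU hVli (r j) (hcr j) _ hu x (fs_mono V (hset _ h) hx) hn
  · intro j x hx hn
    obtain ⟨h, hu⟩ := (ho j).1
    exact freiheit V hU hVli (r j) (hcr j) _ hu x (fs_mono V (hset _ h) hx) hn
end
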